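/- arXiv:math/0611901 — 2 statements merged into one kernel-verified Lean document; each statement's English description precedes it below -/
import Mathlib

section
/- Let n ≥ 1, n/(n+1) ≤ p ≤ 1, and set p* = pn/(n−p). Fix ψ as in the context. Let f be a tempered distribution on ℝⁿ such that for each j = 1,…,n the function x ↦ sup_{t>0} |⟨f, y ↦ t^{−n−1} (∂_j ψ)((x−y)/t)⟩| belongs to L^p(ℝⁿ). Then there exists a measurable function h : ℝⁿ → ℝ with ∫_B |h|^{p*} dm < ∞ for every ball B ⊆ ℝⁿ, such that ⟨f, φ⟩ = ∫_{ℝⁿ} h φ dm for every Schwartz function φ. In particular f is represented by a locally integrable function. -/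
open MeasureTheory Metric Set ENNReal NNReal

noncomputable section

/-- The smooth maximal function `sup_{t>0} |⟨f, y ↦ t^{-n-1}(∂_jψ)((x-y)/t)⟩|` of the
distributional derivative `D_j f` of a tempered distribution `f`. The pairing is
encoded by a supremum over the Schwartz functions whose underlying function is
`y ↦ t^{-n-1}(∂_jψ)((x-y)/t)` (there is exactly one such Schwartz function since this
function is smooth and compactly supported). -/
def distrSmoothMax (n : ℕ) (ψ : EuclideanSpace ℝ (Fin n) → ℝ)
    (f : SchwartzMap (EuclideanSpace ℝ (Fin n)) ℝ →L[ℝ] ℝ) (j : Fin n)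
    (x : EuclideanSpace ℝ (Fin n)) : ℝ≥0∞ :=
  ⨆ (t : {s : ℝ // 0 < s}),
    ⨆ (φ : {φ : SchwartzMap (EuclideanSpace ℝ (Fin n)) ℝ //
        ∀ y, φ y = (t.1⁻¹) ^ (n + 1) *
          fderiv ℝ ψ (t.1⁻¹ • (x - y)) (EuclideanSpace.single j 1)}),
      ENNReal.ofReal |f φ.1|

/-!
Mollify `f` twice at every dyadic scale, `u_j = f * Ψ_j * Ψ_j`. Between consecutive scales `u_j`
moves by at most `2^{-j}` times the nontangential maximal function of `∇f` at scale `2^{-j}`.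
Peetre's maximal function and the Hardy–Littlewood theorem control the latter in `L^p` by the
vertical maximal function along `Ψ`, which the hypothesis places in `L^p`. Since the nontangential
bound at scale `2^{-j}` is inherited by a whole ball of radius `2^{-j}`, it is also at most a
multiple of `2^{jn/p}`; interpolating this against the `L^p` bound makes the sum of the increments
belong to `L^s` for every `s ≥ p` with `s (n - p) ≤ p n`. So `u_j` converges almost everywhere, its
limit is locally in `L^{p*}`, and dominated convergence shows that the limit represents `f`. The
threshold `n / (n + 1) ≤ p` is where the exponent `s = 1` becomes admissible.
-/

open Filter Topology
open scoped ContDiff SchwartzMap BoundedContinuousFunction LineDeriv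

set_option maxSynthPendingDepth 3

/-! ### Integrals with values in Schwartz space -/

section FactorThroughNormed

variable {V : Type*} [AddCommGroup V] [Module ℝ V]

lemma exists_clm_comp_eq_of_norm_le {F : Type*} [NormedAddCommGroup F] [NormedSpace ℝ F]
    (T : V →ₗ[ℝ] F) (g : V →ₗ[ℝ] ℝ) {C : ℝ} (hg : ∀ v, ‖g v‖ ≤ C * ‖T v‖) :
    ∃ G : F →L[ℝ] ℝ, ∀ v, g v = G (T v) := by
  obtain ⟨σ, hσ⟩ := T.rangeRestrict.exists_rightInverse_of_surjective T.range_rangeRestrict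
  have hTσ (x : LinearMap.range T) : T (σ x) = x := congrArg Subtype.val (DFunLike.congr_fun hσ x)
  let g₁ : LinearMap.range T →L[ℝ] ℝ := (g ∘ₗ σ).mkContinuous C fun x => by
    simpa [hTσ x] using hg (σ x)
  obtain ⟨G, hG, -⟩ := exists_extension_norm_eq (LinearMap.range T) g₁
  refine ⟨G, fun v => ?_⟩
  have hker : ‖g (v - σ (T.rangeRestrict v))‖ ≤ 0 := by
    simpa [map_sub, hTσ] using hg (v - σ (T.rangeRestrict v))
  have hgσ : g v = g (σ (T.rangeRestrict v)) := by
    rwa [norm_le_zero_iff, map_sub, sub_eq_zero] at hker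
  exact hgσ.trans (hG (T.rangeRestrict v)).symm

lemma clm_apply_eq_integral_of_withSeminorms [TopologicalSpace V] {ι : Type*}
    {F : ι → Type*} [∀ i, NormedAddCommGroup (F i)] [∀ i, NormedSpace ℝ (F i)]
    [∀ i, CompleteSpace (F i)] {T : ∀ i, V →ₗ[ℝ] F i}
    (hT : WithSeminorms fun i => (normSeminorm ℝ (F i)).comp (T i))
    {Ω : Type*} [MeasurableSpace Ω] {μ : Measure Ω} {Φ : Ω → V} {θ : V}
    (hint : ∀ i, Integrable (fun y => T i (Φ y)) μ)
    (hθ : ∀ i, T i θ = ∫ y, T i (Φ y) ∂μ) (g : V →L[ℝ] ℝ) :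
    g θ = ∫ y, g (Φ y) ∂μ := by
  obtain ⟨s, C, -, hC⟩ := Seminorm.bound_of_continuous hT
    ((normSeminorm ℝ ℝ).comp g.toLinearMap) (continuous_norm.comp g.continuous)
  let S : V →ₗ[ℝ] ∀ i : s, F i := LinearMap.pi fun i => T i
  have hbound (v : V) : ‖g v‖ ≤ C * ‖S v‖ := by
    refine (hC v).trans (mul_le_mul_of_nonneg_left ?_ C.2)
    exact Seminorm.finset_sup_apply_le (norm_nonneg _) fun i hi =>
      norm_le_pi_norm (S v) ⟨i, hi⟩
  obtain ⟨G, hG⟩ := exists_clm_comp_eq_of_norm_le S g.toLinearMap hbound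
  have hSint : Integrable (fun y => S (Φ y)) μ := Integrable.of_eval fun i => hint i
  have hSθ : S θ = ∫ y, S (Φ y) ∂μ := by
    ext1 i
    exact (hθ i).trans (eval_integral (f := fun y => S (Φ y)) (fun i : s => hint i) i).symm
  calc g θ = G (S θ) := hG θ
    _ = ∫ y, G (S (Φ y)) ∂μ := by rw [hSθ, G.integral_comp_comm hSint]
    _ = ∫ y, g (Φ y) ∂μ := by simp only [← hG]; rfl

end FactorThroughNormed

section SchwartzIntegral

variable {E F Ω : Type*} [NormedAddCommGroup E] [NormedSpace ℝ E] [NormedAddCommGroup F]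
  [NormedSpace ℝ F] [MeasurableSpace Ω] {μ : Measure Ω}

lemma hasFTaylorSeriesUpTo_integral {Φ : Ω → E → F} (hΦ : ∀ y, ContDiff ℝ ∞ (Φ y))
    (hmeas : ∀ (m : ℕ) z, AEStronglyMeasurable (fun y => iteratedFDeriv ℝ m (Φ y) z) μ)
    {b : ℕ → Ω → ℝ} (hb : ∀ m, Integrable (b m) μ)
    (hbound : ∀ (m : ℕ) y z, ‖iteratedFDeriv ℝ m (Φ y) z‖ ≤ b m y) :
    HasFTaylorSeriesUpTo ∞ (fun z => ∫ y, Φ y z ∂μ)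
      fun z m => ∫ y, iteratedFDeriv ℝ m (Φ y) z ∂μ := by
  have hint (m : ℕ) (z : E) : Integrable (fun y => iteratedFDeriv ℝ m (Φ y) z) μ :=
    (hb m).mono' (hmeas m z) (.of_forall fun y => hbound m y z)
  refine hasFTaylorSeriesUpToOn_univ_iff.1
    ⟨fun z _ => ?_, fun m _ z _ => HasFDerivAt.hasFDerivWithinAt ?_, fun m _ => ?_⟩
  · exact ((continuousMultilinearCurryFin0 ℝ E F).toContinuousLinearEquiv.integral_comp_comm
      fun y => iteratedFDeriv ℝ 0 (Φ y) z).symm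
  · let curry := (continuousMultilinearCurryLeftEquiv ℝ (fun _ : Fin (m + 1) => E) F)
    have hcurry : (∫ y, iteratedFDeriv ℝ (m + 1) (Φ y) z ∂μ).curryLeft =
        ∫ y, curry (iteratedFDeriv ℝ (m + 1) (Φ y) z) ∂μ :=
      (curry.toContinuousLinearEquiv.integral_comp_comm _).symm
    refine hcurry ▸ hasFDerivAt_integral_of_dominated_of_fderiv_le
      (F' := fun z y => curry (iteratedFDeriv ℝ (m + 1) (Φ y) z)) univ_mem
      (.of_forall (hmeas m)) (hint m z)
      (curry.continuous.comp_aestronglyMeasurable (hmeas (m + 1) z))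
      (.of_forall fun y z _ => ?_) (hb (m + 1)) (.of_forall fun y z _ => ?_)
    · rw [curry.norm_map]
      exact hbound (m + 1) y z
    · have hdiff := (hΦ y).differentiable_iteratedFDeriv (m := m)
        (by exact_mod_cast ENat.natCast_lt_top m)
      exact (hdiff z).hasFDerivAt
  · refine (continuous_of_dominated (hmeas m) (fun z => .of_forall fun y => hbound m y z) (hb m)
      (.of_forall fun y => ?_)).continuousOn
    exact (hΦ y).continuous_iteratedFDeriv (by exact_mod_cast le_top)

/-- The map `φ ↦ (z ↦ ‖z‖ ^ k • D^m φ z)` into bounded continuous functions, whose sup norm is the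
Schwartz seminorm of index `(k, m)`. -/
def weightedDerivCLM (k m : ℕ) : 𝓢(E, F) →L[ℝ] E →ᵇ (E [×m]→L[ℝ] F) :=
  SchwartzMap.mkCLMtoNormedSpace (σ := RingHom.id ℝ)
    (fun φ : 𝓢(E, F) => BoundedContinuousFunction.ofNormedAddCommGroup
      (fun z => ‖z‖ ^ k • iteratedFDeriv ℝ m φ z)
      ((continuous_norm.pow k).smul
        ((φ.smooth ⊤).continuous_iteratedFDeriv (by exact_mod_cast le_top)))
      (SchwartzMap.seminorm ℝ k m φ)
      (fun z => by simpa [norm_smul] using SchwartzMap.le_seminorm ℝ k m φ z))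
    (fun φ η => by
      ext1 z
      have hφ := (φ.smooth m).contDiffAt (x := z)
      have hη := (η.smooth m).contDiffAt (x := z)
      simpa using congrArg (‖z‖ ^ k • ·) (iteratedFDeriv_add_apply hφ hη))
    (fun c φ => by
      ext1 z
      have hφ := (φ.smooth m).contDiffAt (x := z)
      simpa [smul_comm c] using
        congrArg (‖z‖ ^ k • ·) (iteratedFDeriv_const_smul_apply (a := c) hφ))
    ⟨{(k, m)}, 1, zero_le_one, fun φ => by
      simpa using BoundedContinuousFunction.norm_ofNormedAddCommGroup_le _ (apply_nonneg _ _) _⟩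

lemma weightedDerivCLM_apply (k m : ℕ) (φ : 𝓢(E, F)) (z : E) :
    weightedDerivCLM k m φ z = ‖z‖ ^ k • iteratedFDeriv ℝ m φ z := rfl

lemma norm_weightedDerivCLM (k m : ℕ) (φ : 𝓢(E, F)) :
    ‖weightedDerivCLM k m φ‖ = SchwartzMap.seminorm ℝ k m φ := by
  refine le_antisymm
    ((BoundedContinuousFunction.norm_le (apply_nonneg _ _)).2 fun z => ?_)
    (SchwartzMap.seminorm_le_bound ℝ k m φ (norm_nonneg _) fun z => ?_)
  · simpa [weightedDerivCLM_apply, norm_smul] using SchwartzMap.le_seminorm ℝ k m φ z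
  · simpa [weightedDerivCLM_apply, norm_smul] using
      (weightedDerivCLM k m φ).norm_coe_le_norm z

variable [TopologicalSpace Ω] [SecondCountableTopology Ω] [OpensMeasurableSpace Ω]
  {Φ : Ω → 𝓢(E, F)}

lemma integrable_weightedDerivCLM (hΦ : Continuous Φ)
    (hint : ∀ k m, Integrable (fun y => SchwartzMap.seminorm ℝ k m (Φ y)) μ) (k m : ℕ) :
    Integrable (fun y => weightedDerivCLM k m (Φ y)) μ :=
  (hint k m).mono' ((weightedDerivCLM k m).continuous.comp hΦ).aestronglyMeasurable
    (.of_forall fun y => (norm_weightedDerivCLM k m (Φ y)).le)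

lemma integrable_clm_comp {G : Type*} [NormedAddCommGroup G] [NormedSpace ℝ G]
    (hΦ : Continuous Φ) (hint : ∀ k m, Integrable (fun y => SchwartzMap.seminorm ℝ k m (Φ y)) μ)
    (g : 𝓢(E, F) →L[ℝ] G) : Integrable (fun y => g (Φ y)) μ := by
  obtain ⟨s, C, -, hC⟩ := Seminorm.bound_of_continuous (schwartz_withSeminorms ℝ E F)
    ((normSeminorm ℝ G).comp g.toLinearMap) (continuous_norm.comp g.continuous)
  refine ((integrable_finsetSum s fun i _ => hint i.1 i.2).const_mul (C : ℝ)).mono'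
    (g.continuous.comp hΦ).aestronglyMeasurable (.of_forall fun y => (hC (Φ y)).trans ?_)
  refine mul_le_mul_of_nonneg_left ?_ C.2
  refine (Seminorm.finset_sup_le_sum (schwartzSeminormFamily ℝ E F) s (Φ y)).trans ?_
  simp [schwartzSeminormFamily]

lemma hasFTaylorSeriesUpTo_integral_schwartz (hΦ : Continuous Φ)
    (hint : ∀ k m, Integrable (fun y => SchwartzMap.seminorm ℝ k m (Φ y)) μ) :
    HasFTaylorSeriesUpTo ∞ (fun z => ∫ y, Φ y z ∂μ)
      fun z m => ∫ y, iteratedFDeriv ℝ m (Φ y) z ∂μ := by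
  refine hasFTaylorSeriesUpTo_integral (fun y => (Φ y).smooth ⊤) (fun m z => ?_) (hint 0)
    fun m y z => SchwartzMap.norm_iteratedFDeriv_le_seminorm ℝ (Φ y) m z
  have hcont := ((BoundedContinuousFunction.evalCLM ℝ z).comp
    (weightedDerivCLM (F := F) 0 m)).continuous.comp hΦ
  simpa [weightedDerivCLM_apply, Function.comp_def] using hcont.aestronglyMeasurable (μ := μ)

lemma exists_schwartz_eq_integral (hΦ : Continuous Φ)
    (hint : ∀ k m, Integrable (fun y => SchwartzMap.seminorm ℝ k m (Φ y)) μ) :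
    ∃ θ : 𝓢(E, F), ∀ z, θ z = ∫ y, Φ y z ∂μ := by
  have hTaylor := hasFTaylorSeriesUpTo_integral_schwartz hΦ hint
  refine ⟨⟨fun z => ∫ y, Φ y z ∂μ, hTaylor.contDiff, fun k m =>
    ⟨∫ y, SchwartzMap.seminorm ℝ k m (Φ y) ∂μ, fun z => ?_⟩⟩, fun z => rfl⟩
  rw [← hTaylor.eq_iteratedFDeriv (by exact_mod_cast le_top) z]
  calc ‖z‖ ^ k * ‖∫ y, iteratedFDeriv ℝ m (Φ y) z ∂μ‖
      ≤ ∫ y, ‖z‖ ^ k * ‖iteratedFDeriv ℝ m (Φ y) z‖ ∂μ := by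
        rw [integral_const_mul]
        gcongr
        exact norm_integral_le_integral_norm _
    _ ≤ ∫ y, SchwartzMap.seminorm ℝ k m (Φ y) ∂μ :=
        integral_mono_of_nonneg (.of_forall fun y => by positivity) (hint k m)
          (.of_forall fun y => SchwartzMap.le_seminorm ℝ k m (Φ y) z)

variable [CompleteSpace F]

lemma dual_apply_eq_integral (hΦ : Continuous Φ)
    (hint : ∀ k m, Integrable (fun y => SchwartzMap.seminorm ℝ k m (Φ y)) μ)
    {θ : 𝓢(E, F)} (hθ : ∀ z, θ z = ∫ y, Φ y z ∂μ) (g : 𝓢(E, F) →L[ℝ] ℝ) :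
    g θ = ∫ y, g (Φ y) ∂μ := by
  have hseminorm : (fun i : ℕ × ℕ => (normSeminorm ℝ (E →ᵇ (E [×i.2]→L[ℝ] F))).comp
      (weightedDerivCLM i.1 i.2).toLinearMap) = schwartzSeminormFamily ℝ E F := by
    ext i φ
    exact norm_weightedDerivCLM i.1 i.2 φ
  refine clm_apply_eq_integral_of_withSeminorms (hseminorm ▸ schwartz_withSeminorms ℝ E F)
    (fun i => integrable_weightedDerivCLM hΦ hint i.1 i.2) (fun i => ?_) g
  ext1 z
  have hTaylor := hasFTaylorSeriesUpTo_integral_schwartz hΦ hint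
  have heval := (BoundedContinuousFunction.evalCLM ℝ z).integral_comp_comm
    (integrable_weightedDerivCLM hΦ hint i.1 i.2)
  calc weightedDerivCLM i.1 i.2 θ z
      = ‖z‖ ^ i.1 • ∫ y, iteratedFDeriv ℝ i.2 (Φ y) z ∂μ := by
        rw [weightedDerivCLM_apply, hTaylor.eq_iteratedFDeriv (by exact_mod_cast le_top) z,
          ← funext hθ]
    _ = ∫ y, weightedDerivCLM i.1 i.2 (Φ y) z ∂μ := (integral_smul _ _).symm
    _ = (∫ y, weightedDerivCLM i.1 i.2 (Φ y) ∂μ) z := heval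

lemma clm_apply_eq_integral {G : Type*} [NormedAddCommGroup G] [NormedSpace ℝ G]
    [CompleteSpace G] (hΦ : Continuous Φ)
    (hint : ∀ k m, Integrable (fun y => SchwartzMap.seminorm ℝ k m (Φ y)) μ)
    {θ : 𝓢(E, F)} (hθ : ∀ z, θ z = ∫ y, Φ y z ∂μ) (g : 𝓢(E, F) →L[ℝ] G) :
    g θ = ∫ y, g (Φ y) ∂μ := by
  refine (SeparatingDual.eq_iff_forall_dual_eq (R := ℝ)).2 fun ℓ => ?_
  rw [← ℓ.integral_comp_comm (integrable_clm_comp hΦ hint g)]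
  exact dual_apply_eq_integral hΦ hint hθ (ℓ ∘L g)

end SchwartzIntegral

/-! ### Translates and convolutions of Schwartz functions -/

section Schwartz

variable {E : Type*} [NormedAddCommGroup E]

lemma one_add_norm_pow_le_mul (k : ℕ) (x y : E) :
    (1 + ‖x‖) ^ k ≤ (1 + ‖y‖) ^ k * (1 + ‖x - y‖) ^ k := by
  rw [← mul_pow]
  gcongr
  have htri : ‖x‖ ≤ ‖y‖ + ‖x - y‖ := by simpa using norm_add_le y (x - y)
  nlinarith [norm_nonneg y, norm_nonneg (x - y)]

variable [NormedSpace ℝ E]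

/-- `φ` satisfies `(1 + ‖z‖) ^ k * ‖D^m φ z‖ ≤ c` for all `z`: the Schwartz seminorms, with the
weight `‖z‖` replaced by the submultiplicative weight `1 + ‖z‖`. -/
def HasDecay (k m : ℕ) (φ : 𝓢(E, ℝ)) (c : ℝ) : Prop :=
  ∀ z, (1 + ‖z‖) ^ k * ‖iteratedFDeriv ℝ m φ z‖ ≤ c

lemma exists_hasDecay (k m : ℕ) (φ : 𝓢(E, ℝ)) : ∃ c, HasDecay k m φ c :=
  ⟨_, fun z => SchwartzMap.one_add_le_sup_seminorm_apply (𝕜 := ℝ) (m := (k, m)) le_rfl le_rfl φ z⟩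

namespace HasDecay

variable {k m : ℕ} {φ η : 𝓢(E, ℝ)} {c d : ℝ}

lemma nonneg (h : HasDecay k m φ c) : 0 ≤ c :=
  le_trans (by positivity) (h 0)

lemma mono (h : HasDecay k m φ c) (hcd : c ≤ d) : HasDecay k m φ d :=
  fun z => (h z).trans hcd

lemma sub (hφ : HasDecay k m φ c) (hη : HasDecay k m η d) : HasDecay k m (φ - η) (c + d) := by
  intro z
  have hsub : iteratedFDeriv ℝ m (φ - η : 𝓢(E, ℝ)) z =
      iteratedFDeriv ℝ m φ z - iteratedFDeriv ℝ m η z :=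
    iteratedFDeriv_sub_apply (φ.smooth m).contDiffAt (η.smooth m).contDiffAt
  calc (1 + ‖z‖) ^ k * ‖iteratedFDeriv ℝ m (φ - η : 𝓢(E, ℝ)) z‖
      ≤ (1 + ‖z‖) ^ k * (‖iteratedFDeriv ℝ m φ z‖ + ‖iteratedFDeriv ℝ m η z‖) := by
        rw [hsub]
        gcongr
        exact norm_sub_le _ _
    _ ≤ c + d := by linarith [hφ z, hη z]

lemma seminorm_le (h : HasDecay k m φ c) : SchwartzMap.seminorm ℝ k m φ ≤ c := by
  refine SchwartzMap.seminorm_le_bound ℝ k m φ h.nonneg fun z => le_trans ?_ (h z)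
  gcongr
  linarith

lemma seminorm_translate_le (h : HasDecay k m φ c) (x : E) :
    SchwartzMap.seminorm ℝ k m (SchwartzMap.compSubConstCLM ℝ x φ) ≤ (1 + ‖x‖) ^ k * c := by
  refine SchwartzMap.seminorm_le_bound ℝ k m _ (mul_nonneg (by positivity) h.nonneg) fun z => ?_
  have hderiv : iteratedFDeriv ℝ m (SchwartzMap.compSubConstCLM ℝ x φ) z =
      iteratedFDeriv ℝ m φ (z - x) := iteratedFDeriv_comp_sub m x z
  calc ‖z‖ ^ k * ‖iteratedFDeriv ℝ m (SchwartzMap.compSubConstCLM ℝ x φ) z‖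
      ≤ ((1 + ‖x‖) ^ k * (1 + ‖z - x‖) ^ k) * ‖iteratedFDeriv ℝ m φ (z - x)‖ := by
        rw [hderiv]
        gcongr
        refine le_trans ?_ (one_add_norm_pow_le_mul k z x)
        gcongr
        linarith
    _ ≤ (1 + ‖x‖) ^ k * c := by
        rw [mul_assoc]
        gcongr
        exact h _

lemma norm_iteratedFDeriv_sub_le (h : HasDecay k (m + 1) φ c) {a b : E} (hab : ‖a - b‖ ≤ 1) :
    (1 + ‖a‖) ^ k * ‖iteratedFDeriv ℝ m φ a - iteratedFDeriv ℝ m φ b‖ ≤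
      2 ^ k * c * ‖a - b‖ := by
  have hdiff : Differentiable ℝ (iteratedFDeriv ℝ m φ) :=
    (φ.smooth ⊤).differentiable_iteratedFDeriv (by exact_mod_cast ENat.natCast_lt_top m)
  have hderiv (z : E) (hz : z ∈ closedBall a 1) :
      ‖fderiv ℝ (iteratedFDeriv ℝ m φ) z‖ ≤ 2 ^ k * c / (1 + ‖a‖) ^ k := by
    have haz : ‖a - z‖ ≤ 1 := by simpa [dist_eq_norm, norm_sub_rev] using hz
    rw [norm_fderiv_iteratedFDeriv, le_div_iff₀ (by positivity)]
    calc ‖iteratedFDeriv ℝ (m + 1) φ z‖ * (1 + ‖a‖) ^ k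
        ≤ ‖iteratedFDeriv ℝ (m + 1) φ z‖ * ((1 + ‖z‖) ^ k * (1 + 1) ^ k) := by
          gcongr
          exact (one_add_norm_pow_le_mul k a z).trans (by gcongr)
      _ = 2 ^ k * ((1 + ‖z‖) ^ k * ‖iteratedFDeriv ℝ (m + 1) φ z‖) := by norm_num; ring
      _ ≤ 2 ^ k * c := by gcongr; exact h z
  have hmvt := (convex_closedBall a 1).norm_image_sub_le_of_norm_fderiv_le (𝕜 := ℝ)
    (fun z _ => hdiff z) hderiv (x := b) (y := a)
    (by simpa [dist_eq_norm, norm_sub_rev] using hab) (by simp)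
  rw [div_mul_eq_mul_div, le_div_iff₀ (by positivity)] at hmvt
  linarith

lemma seminorm_translate_sub_le (h : HasDecay k (m + 1) φ c) {x x₀ : E} (hx : ‖x - x₀‖ ≤ 1) :
    SchwartzMap.seminorm ℝ k m (SchwartzMap.compSubConstCLM ℝ x φ -
      SchwartzMap.compSubConstCLM ℝ x₀ φ) ≤ (1 + ‖x₀‖) ^ k * (2 ^ k * c) * ‖x - x₀‖ := by
  have hc := h.nonneg
  refine SchwartzMap.seminorm_le_bound ℝ k m _ (by positivity) fun z => ?_
  have hdist : z - x₀ - (z - x) = x - x₀ := by abel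
  have hderiv : iteratedFDeriv ℝ m (SchwartzMap.compSubConstCLM ℝ x φ -
      SchwartzMap.compSubConstCLM ℝ x₀ φ : 𝓢(E, ℝ)) z =
      iteratedFDeriv ℝ m φ (z - x) - iteratedFDeriv ℝ m φ (z - x₀) := by
    rw [← iteratedFDeriv_comp_sub m x z, ← iteratedFDeriv_comp_sub m x₀ z]
    exact iteratedFDeriv_sub_apply ((SchwartzMap.compSubConstCLM ℝ x φ).smooth m).contDiffAt
      ((SchwartzMap.compSubConstCLM ℝ x₀ φ).smooth m).contDiffAt
  have hmvt := h.norm_iteratedFDeriv_sub_le (a := z - x₀) (b := z - x) (by rwa [hdist])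
  rw [hdist, norm_sub_rev (iteratedFDeriv ℝ m φ _)] at hmvt
  calc ‖z‖ ^ k * _
      ≤ ((1 + ‖x₀‖) ^ k * (1 + ‖z - x₀‖) ^ k) *
          ‖iteratedFDeriv ℝ m φ (z - x) - iteratedFDeriv ℝ m φ (z - x₀)‖ := by
        rw [hderiv]
        gcongr
        refine le_trans ?_ (one_add_norm_pow_le_mul k z x₀)
        gcongr
        linarith
    _ ≤ (1 + ‖x₀‖) ^ k * (2 ^ k * c) * ‖x - x₀‖ := by
        rw [mul_assoc, mul_assoc]
        exact mul_le_mul_of_nonneg_left hmvt (by positivity)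

end HasDecay

lemma continuous_translate (φ : 𝓢(E, ℝ)) :
    Continuous fun x : E => SchwartzMap.compSubConstCLM ℝ x φ := by
  refine continuous_iff_continuousAt.2 fun x₀ =>
    ((schwartz_withSeminorms ℝ E ℝ).tendsto_nhds _ _).2 fun ⟨k, m⟩ ε hε => ?_
  obtain ⟨c, hc⟩ := exists_hasDecay k (m + 1) φ
  have hlim : Tendsto (fun x => (1 + ‖x₀‖) ^ k * (2 ^ k * c) * ‖x - x₀‖) (𝓝 x₀) (𝓝 0) := by
    refine Continuous.tendsto' (by fun_prop) _ _ (by simp)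
  filter_upwards [hlim.eventually_lt_const hε, closedBall_mem_nhds x₀ one_pos] with x hx hx₀
  exact (hc.seminorm_translate_sub_le (by simpa [dist_eq_norm] using hx₀)).trans_lt hx

lemma continuous_smul_translate (χ φ : 𝓢(E, ℝ)) :
    Continuous fun y => χ y • SchwartzMap.compSubConstCLM ℝ y φ :=
  χ.continuous.smul (continuous_translate φ)

/-- The Schwartz function `y ↦ φ (x - y)`, so that `f (reflTranslate x φ) = (f * φ) x` for a
tempered distribution `f`. -/
def reflTranslate (x : E) : 𝓢(E, ℝ) →L[ℝ] 𝓢(E, ℝ) :=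
  SchwartzMap.compSubConstCLM ℝ x ∘L
    SchwartzMap.compCLMOfContinuousLinearEquiv ℝ (ContinuousLinearEquiv.neg ℝ)

lemma reflTranslate_apply (x : E) (φ : 𝓢(E, ℝ)) (y : E) :
    reflTranslate x φ y = φ (x - y) := by
  simp [reflTranslate]

lemma reflTranslate_translate (x y : E) (φ : 𝓢(E, ℝ)) :
    reflTranslate x (SchwartzMap.compSubConstCLM ℝ y φ) = reflTranslate (x - y) φ := by
  ext z
  simp [reflTranslate_apply, sub_right_comm]

lemma translate_reflTranslate_zero (x : E) (φ : 𝓢(E, ℝ)) :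
    SchwartzMap.compSubConstCLM ℝ x (reflTranslate 0 φ) = reflTranslate x φ := by
  ext z
  simp [reflTranslate_apply]

lemma continuous_reflTranslate (φ : 𝓢(E, ℝ)) : Continuous fun x : E => reflTranslate x φ :=
  continuous_translate _

variable {G : Type*} [NormedAddCommGroup G] [NormedSpace ℝ G]

lemma continuous_clm_reflTranslate (g : 𝓢(E, ℝ) →L[ℝ] G) (φ : 𝓢(E, ℝ)) :
    Continuous fun x => g (reflTranslate x φ) :=
  g.continuous.comp (continuous_reflTranslate φ)

lemma HasDecay.reflTranslate_zero {k m : ℕ} {φ : 𝓢(E, ℝ)} {c : ℝ} (h : HasDecay k m φ c) :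
    HasDecay k m (reflTranslate 0 φ) c := by
  intro z
  have hneg : (reflTranslate 0 φ : E → ℝ) = fun y => φ (-y) := by
    ext y
    simp [reflTranslate_apply]
  have hderiv := congrFun (iteratedFDeriv_comp_const_smul (-1 : ℝ) (φ.smooth m)) z
  simp only [neg_one_smul] at hderiv
  rw [hneg, hderiv, norm_smul, norm_pow, norm_neg, norm_one, one_pow, one_mul, ← norm_neg z]
  exact h (-z)

lemma HasDecay.seminorm_reflTranslate_le {k m : ℕ} {φ : 𝓢(E, ℝ)} {c : ℝ}
    (h : HasDecay k m φ c) (x : E) :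
    SchwartzMap.seminorm ℝ k m (reflTranslate x φ) ≤ (1 + ‖x‖) ^ k * c := by
  rw [← translate_reflTranslate_zero]
  exact h.reflTranslate_zero.seminorm_translate_le x

lemma exists_norm_clm_le_of_seminorm_le (g : 𝓢(E, ℝ) →L[ℝ] G) :
    ∃ C, 0 ≤ C ∧ ∃ N : ℕ, ∀ φ c,
      (∀ k m, k ≤ N → m ≤ N → SchwartzMap.seminorm ℝ k m φ ≤ c) → ‖g φ‖ ≤ C * c := by
  obtain ⟨s, C, -, hC⟩ := Seminorm.bound_of_continuous (schwartz_withSeminorms ℝ E ℝ)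
    ((normSeminorm ℝ G).comp g.toLinearMap) (continuous_norm.comp g.continuous)
  refine ⟨C, C.2, s.sup fun i => max i.1 i.2, fun φ c h => ?_⟩
  have hc : 0 ≤ c := (apply_nonneg _ _).trans (h 0 0 zero_le zero_le)
  refine (hC φ).trans (mul_le_mul_of_nonneg_left ?_ C.2)
  refine Seminorm.finset_sup_apply_le hc fun i hi => ?_
  have hmax := Finset.le_sup (f := fun i : ℕ × ℕ => max i.1 i.2) hi
  exact h i.1 i.2 ((le_max_left _ _).trans hmax) ((le_max_right _ _).trans hmax)

lemma exists_norm_clm_reflTranslate_le (g : 𝓢(E, ℝ) →L[ℝ] G) :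
    ∃ C, 0 ≤ C ∧ ∃ N : ℕ, ∀ φ c, (∀ k m, k ≤ N → m ≤ N → HasDecay k m φ c) →
      ∀ x, ‖g (reflTranslate x φ)‖ ≤ C * ((1 + ‖x‖) ^ N * c) := by
  obtain ⟨C, hC, N, hN⟩ := exists_norm_clm_le_of_seminorm_le g
  refine ⟨C, hC, N, fun φ c h x => hN _ _ fun k m hk hm => ?_⟩
  refine ((h k m hk hm).seminorm_reflTranslate_le x).trans ?_
  have hc := (h k m hk hm).nonneg
  gcongr
  linarith [norm_nonneg x]

lemma exists_norm_clm_reflTranslate_le_of_family (g : 𝓢(E, ℝ) →L[ℝ] G) {ι : Type*}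
    {φ : ι → 𝓢(E, ℝ)} {w : ℕ → ι → ℝ} (hw : Monotone w) (hw0 : ∀ m i, 0 ≤ w m i)
    (hφ : ∀ k m, ∃ D, ∀ i, HasDecay k m (φ i) (D * w m i)) :
    ∃ C, 0 ≤ C ∧ ∃ N : ℕ, ∀ i x, ‖g (reflTranslate x (φ i))‖ ≤ C * (1 + ‖x‖) ^ N * w N i := by
  obtain ⟨C, hC, N, hN⟩ := exists_norm_clm_reflTranslate_le g
  choose D hD using hφ
  obtain ⟨D', hD'⟩ : BddAbove ((fun a : ℕ × ℕ => D a.1 a.2) '' Iic N ×ˢ Iic N) :=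
    (((finite_Iic N).prod (finite_Iic N)).image _).bddAbove
  refine ⟨C * max D' 0, by positivity, N, fun i x => ?_⟩
  refine (hN (φ i) (max D' 0 * w N i) (fun k m hk hm => (hD k m i).mono ?_) x).trans_eq (by ring)
  have hkm : D k m ≤ D' := hD' ⟨(k, m), ⟨hk, hm⟩, rfl⟩
  exact mul_le_mul (hkm.trans (le_max_left _ _)) (hw hm i) (hw0 m i) (le_max_right _ _)

variable [FiniteDimensional ℝ E] [MeasureSpace E] [BorelSpace E]
  [(volume : Measure E).IsAddHaarMeasure]

lemma integrable_one_add_norm_pow_mul (k : ℕ) (χ : 𝓢(E, ℝ)) :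
    Integrable (fun y => (1 + ‖y‖) ^ k * ‖χ y‖) := by
  have hdom : Integrable (fun y => 2 ^ (k - 1) * (‖χ y‖ + ‖y‖ ^ k * ‖χ y‖)) :=
    (χ.integrable.norm.add (χ.integrable_pow_mul volume k)).const_mul _
  refine hdom.mono' (by have := χ.continuous; fun_prop) (.of_forall fun y => ?_)
  rw [Real.norm_of_nonneg (by positivity)]
  calc (1 + ‖y‖) ^ k * ‖χ y‖ ≤ 2 ^ (k - 1) * (1 ^ k + ‖y‖ ^ k) * ‖χ y‖ := by
        gcongr
        exact add_pow_le zero_le_one (norm_nonneg y) k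
    _ = 2 ^ (k - 1) * (‖χ y‖ + ‖y‖ ^ k * ‖χ y‖) := by ring

lemma integrable_seminorm_smul_translate (χ φ : 𝓢(E, ℝ)) (k m : ℕ) :
    Integrable fun y => SchwartzMap.seminorm ℝ k m (χ y • SchwartzMap.compSubConstCLM ℝ y φ) := by
  obtain ⟨c, hc⟩ := exists_hasDecay k m φ
  have hcont := ((schwartz_withSeminorms ℝ E ℝ).continuous_seminorm (k, m)).comp
    (continuous_smul_translate χ φ)
  refine ((integrable_one_add_norm_pow_mul k χ).mul_const c).mono' hcont.aestronglyMeasurable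
    (.of_forall fun y => ?_)
  rw [Real.norm_of_nonneg (apply_nonneg _ _), map_smul_eq_mul]
  calc ‖χ y‖ * SchwartzMap.seminorm ℝ k m (SchwartzMap.compSubConstCLM ℝ y φ)
      ≤ ‖χ y‖ * ((1 + ‖y‖) ^ k * c) := by gcongr; exact hc.seminorm_translate_le y
    _ = (1 + ‖y‖) ^ k * ‖χ y‖ * c := by ring

/-- The convolution `χ * φ` as a Schwartz function. -/
def schwartzConv (χ φ : 𝓢(E, ℝ)) : 𝓢(E, ℝ) :=
  (exists_schwartz_eq_integral (continuous_smul_translate χ φ)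
    (integrable_seminorm_smul_translate χ φ)).choose

lemma schwartzConv_eq_integral (χ φ : 𝓢(E, ℝ)) (z : E) :
    schwartzConv χ φ z = ∫ y, (χ y • SchwartzMap.compSubConstCLM ℝ y φ) z :=
  (exists_schwartz_eq_integral (continuous_smul_translate χ φ)
    (integrable_seminorm_smul_translate χ φ)).choose_spec z

lemma schwartzConv_apply (χ φ : 𝓢(E, ℝ)) (z : E) :
    schwartzConv χ φ z = ∫ y, χ y * φ (z - y) :=
  schwartzConv_eq_integral χ φ z

lemma integrable_smul_clm_reflTranslate (g : 𝓢(E, ℝ) →L[ℝ] G) (χ φ : 𝓢(E, ℝ)) (x : E) :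
    Integrable fun y => χ y • g (reflTranslate (x - y) φ) := by
  simpa [reflTranslate_translate] using integrable_clm_comp (continuous_smul_translate χ φ)
    (integrable_seminorm_smul_translate χ φ) (g ∘L reflTranslate x)

lemma clm_schwartzConv [CompleteSpace G] (g : 𝓢(E, ℝ) →L[ℝ] G) (χ φ : 𝓢(E, ℝ)) :
    g (schwartzConv χ φ) = ∫ y, χ y • g (SchwartzMap.compSubConstCLM ℝ y φ) := by
  simpa only [map_smul] using clm_apply_eq_integral (continuous_smul_translate χ φ)
    (integrable_seminorm_smul_translate χ φ) (schwartzConv_eq_integral χ φ) g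

lemma clm_reflTranslate_schwartzConv [CompleteSpace G] (g : 𝓢(E, ℝ) →L[ℝ] G) (χ φ : 𝓢(E, ℝ))
    (x : E) :
    g (reflTranslate x (schwartzConv χ φ)) = ∫ y, χ y • g (reflTranslate (x - y) φ) := by
  simpa only [ContinuousLinearMap.comp_apply, reflTranslate_translate] using
    clm_schwartzConv (g ∘L reflTranslate x) χ φ

lemma clm_schwartzConv_reflTranslate_zero [CompleteSpace G] (g : 𝓢(E, ℝ) →L[ℝ] G) (χ φ : 𝓢(E, ℝ)) :
    g (schwartzConv χ (reflTranslate 0 φ)) = ∫ x, χ x • g (reflTranslate x φ) := by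
  simpa only [translate_reflTranslate_zero] using clm_schwartzConv g χ (reflTranslate 0 φ)

lemma schwartzConv_comm (χ φ : 𝓢(E, ℝ)) : schwartzConv χ φ = schwartzConv φ χ := by
  ext z
  rw [schwartzConv_apply, schwartzConv_apply,
    ← integral_sub_left_eq_self (fun y => χ y * φ (z - y)) volume z]
  simp only [_root_.sub_sub_cancel, mul_comm]

lemma schwartzConv_eq_zero_of_le_norm {χ φ : 𝓢(E, ℝ)} {δ ε : ℝ}
    (hχ : ∀ y, δ ≤ ‖y‖ → χ y = 0) (hφ : ∀ y, ε ≤ ‖y‖ → φ y = 0) {z : E}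
    (hz : ε + δ ≤ ‖z‖) : schwartzConv χ φ z = 0 := by
  rw [schwartzConv_apply]
  refine integral_eq_zero_of_ae (.of_forall fun y => ?_)
  rcases le_or_gt δ ‖y‖ with hy | hy
  · simp [hχ y hy]
  · simp [hφ (z - y) (by linarith [norm_sub_norm_le z y])]

lemma iteratedFDeriv_schwartzConv (χ φ : 𝓢(E, ℝ)) (m : ℕ) (z : E) :
    iteratedFDeriv ℝ m (schwartzConv χ φ) z = ∫ y, χ y • iteratedFDeriv ℝ m φ (z - y) := by
  have hTaylor := hasFTaylorSeriesUpTo_integral_schwartz (continuous_smul_translate χ φ)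
    (integrable_seminorm_smul_translate χ φ)
  have hderiv (y : E) : iteratedFDeriv ℝ m (χ y • SchwartzMap.compSubConstCLM ℝ y φ : 𝓢(E, ℝ)) z =
      χ y • iteratedFDeriv ℝ m φ (z - y) := by
    rw [← iteratedFDeriv_comp_sub m y z]
    exact iteratedFDeriv_const_smul_apply
      ((SchwartzMap.compSubConstCLM ℝ y φ).smooth m).contDiffAt
  simp_rw [← hderiv, hTaylor.eq_iteratedFDeriv (m := m) (by exact_mod_cast le_top) z,
    ← schwartzConv_eq_integral]

namespace HasDecay

variable {k m : ℕ} {φ : 𝓢(E, ℝ)} {c : ℝ}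

lemma schwartzConv (h : HasDecay k m φ c) (χ : 𝓢(E, ℝ)) :
    HasDecay k m (schwartzConv χ φ) ((∫ y, (1 + ‖y‖) ^ k * ‖χ y‖) * c) := by
  intro z
  have hbound : ‖∫ y, χ y • iteratedFDeriv ℝ m φ (z - y)‖ ≤
      ∫ y, (1 + ‖y‖) ^ k * ‖χ y‖ * (c / (1 + ‖z‖) ^ k) := by
    refine norm_integral_le_of_norm_le ((integrable_one_add_norm_pow_mul k χ).mul_const _)
      (.of_forall fun y => ?_)
    rw [norm_smul, ← mul_div_assoc, le_div_iff₀ (by positivity)]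
    calc ‖χ y‖ * ‖iteratedFDeriv ℝ m φ (z - y)‖ * (1 + ‖z‖) ^ k
        ≤ ‖χ y‖ * ‖iteratedFDeriv ℝ m φ (z - y)‖ *
            ((1 + ‖y‖) ^ k * (1 + ‖z - y‖) ^ k) := by
          gcongr
          exact one_add_norm_pow_le_mul k z y
      _ = (1 + ‖y‖) ^ k * ‖χ y‖ * ((1 + ‖z - y‖) ^ k * ‖iteratedFDeriv ℝ m φ (z - y)‖) := by
          ring
      _ ≤ (1 + ‖y‖) ^ k * ‖χ y‖ * c := by gcongr; exact h _
  rw [integral_mul_const, ← mul_div_assoc, le_div_iff₀ (by positivity)] at hbound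
  rw [iteratedFDeriv_schwartzConv]
  linarith

end HasDecay

lemma iteratedFDeriv_sub_schwartzConv {χ : 𝓢(E, ℝ)} (hχ : ∫ y, χ y = 1) (φ : 𝓢(E, ℝ)) (m : ℕ)
    (z : E) : iteratedFDeriv ℝ m (φ - schwartzConv χ φ : 𝓢(E, ℝ)) z =
      ∫ y, χ y • (iteratedFDeriv ℝ m φ z - iteratedFDeriv ℝ m φ (z - y)) := by
  have hcont := (φ.smooth ⊤).continuous_iteratedFDeriv (m := m) (by exact_mod_cast le_top)
  have hint : Integrable fun y => χ y • iteratedFDeriv ℝ m φ (z - y) := by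
    refine (χ.integrable.norm.mul_const (SchwartzMap.seminorm ℝ 0 m φ)).mono'
      (χ.continuous.smul (hcont.comp (by fun_prop))).aestronglyMeasurable (.of_forall fun y => ?_)
    rw [norm_smul]
    gcongr
    exact SchwartzMap.norm_iteratedFDeriv_le_seminorm ℝ φ m _
  simp_rw [smul_sub]
  rw [integral_sub (χ.integrable.smul_const _) hint, integral_smul_const, hχ, one_smul,
    ← iteratedFDeriv_schwartzConv]
  exact iteratedFDeriv_sub_apply (φ.smooth m).contDiffAt
    ((schwartzConv χ φ).smooth m).contDiffAt

lemma HasDecay.sub_schwartzConv {k m : ℕ} {φ : 𝓢(E, ℝ)} {c : ℝ} (h : HasDecay k (m + 1) φ c)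
    {χ : 𝓢(E, ℝ)} (hχ : ∫ y, χ y = 1) {δ : ℝ} (hδ : δ ≤ 1) (hsupp : ∀ y, δ ≤ ‖y‖ → χ y = 0) :
    HasDecay k m (φ - _root_.schwartzConv χ φ) (2 ^ k * δ * (∫ y, ‖χ y‖) * c) := by
  intro z
  have hc := h.nonneg
  have hbound : ‖∫ y, χ y • (iteratedFDeriv ℝ m φ z - iteratedFDeriv ℝ m φ (z - y))‖ ≤
      ∫ y, ‖χ y‖ * (2 ^ k * c * δ / (1 + ‖z‖) ^ k) := by
    refine norm_integral_le_of_norm_le (χ.integrable.norm.mul_const _) (.of_forall fun y => ?_)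
    rw [norm_smul]
    rcases le_or_gt δ ‖y‖ with hy | hy
    · simp [hsupp y hy]
    · gcongr
      rw [le_div_iff₀ (by positivity), mul_comm]
      calc (1 + ‖z‖) ^ k * ‖iteratedFDeriv ℝ m φ z - iteratedFDeriv ℝ m φ (z - y)‖
          ≤ 2 ^ k * c * ‖z - (z - y)‖ :=
            h.norm_iteratedFDeriv_sub_le (by simpa using hy.le.trans hδ)
        _ ≤ 2 ^ k * c * δ := by
            rw [_root_.sub_sub_cancel]
            gcongr
  rw [integral_mul_const, ← mul_div_assoc, le_div_iff₀ (by positivity)] at hbound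
  rw [iteratedFDeriv_sub_schwartzConv hχ]
  linarith

end Schwartz

/-! ### The gradient of a tempered distribution -/

section Gradient

variable {E : Type*} [NormedAddCommGroup E] [NormedSpace ℝ E]

lemma hasDerivAt_reflTranslate_sub_smul (φ : 𝓢(E, ℝ)) (x y z : E) (s : ℝ) :
    HasDerivAt (fun s : ℝ => -reflTranslate (x - s • y) φ z)
      (reflTranslate (x - s • y) (∂_{y} φ) z) s := by
  have hline : HasDerivAt (fun s : ℝ => x - s • y - z) (-y) s := by
    simpa using (((hasDerivAt_id s).smul_const y).const_sub x).sub_const z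
  have hcomp := ((φ.differentiableAt (x := x - s • y - z)).hasFDerivAt.comp_hasDerivAt s hline).neg
  simpa [reflTranslate_apply, SchwartzMap.lineDerivOp_apply_eq_fderiv, Function.comp_def,
    Pi.neg_def] using hcomp

variable [FiniteDimensional ℝ E]

/-- The distributional gradient of `f`, with values in the dual of `E`:
`distribGradient f φ v = -f (∂_{v} φ)`. -/
def distribGradient (f : 𝓢(E, ℝ) →L[ℝ] ℝ) : 𝓢(E, ℝ) →L[ℝ] StrongDual ℝ E where
  toFun φ := LinearMap.toContinuousLinearMap
    { toFun := fun v => -f (∂_{v} φ)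
      map_add' := fun v w => by rw [LineDeriv.lineDerivOp_left_add, map_add, neg_add]
      map_smul' := fun c v => by simp [LineDeriv.lineDerivOp_left_smul] }
  map_add' φ η := by
    ext v
    change -f (∂_{v} (φ + η)) = -f (∂_{v} φ) + -f (∂_{v} η)
    rw [LineDeriv.lineDerivOp_add, map_add, neg_add]
  map_smul' c φ := by
    ext v
    change -f (∂_{v} (c • φ)) = c • -f (∂_{v} φ)
    rw [LineDeriv.lineDerivOp_smul, map_smul, smul_neg]
  cont := continuous_clm_apply.2 fun v =>
    (f.continuous.comp (LineDeriv.lineDerivOpCLM ℝ 𝓢(E, ℝ) v).continuous).neg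

variable (f : 𝓢(E, ℝ) →L[ℝ] ℝ)

lemma distribGradient_apply (φ : 𝓢(E, ℝ)) (v : E) : distribGradient f φ v = -f (∂_{v} φ) := rfl

lemma distribGradient_reflTranslate (x : E) (φ : 𝓢(E, ℝ)) (v : E) :
    distribGradient f (reflTranslate x φ) v = f (reflTranslate x (∂_{v} φ)) := by
  rw [distribGradient_apply, ← map_neg]
  congr 1
  ext y
  have hderiv : HasFDerivAt (reflTranslate x φ) ((fderiv ℝ φ (x - y)).comp (-.id ℝ E)) y := by
    have hcomp := φ.differentiableAt.hasFDerivAt.comp y ((hasFDerivAt_id y).const_sub x)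
    exact hcomp.congr_of_eventuallyEq (.of_forall fun y => reflTranslate_apply x φ y)
  simp [reflTranslate_apply, SchwartzMap.lineDerivOp_apply_eq_fderiv, hderiv.fderiv]

lemma clm_reflTranslate_sub_eq_integral (φ : 𝓢(E, ℝ)) (x y : E) :
    f (reflTranslate x φ) - f (reflTranslate (x - y) φ) =
      ∫ s in Icc (0 : ℝ) 1, distribGradient f (reflTranslate (x - s • y) φ) y := by
  have hcont : Continuous fun s : ℝ => reflTranslate (x - s • y) (∂_{y} φ) :=
    (continuous_reflTranslate _).comp (by fun_prop)
  simp_rw [distribGradient_reflTranslate, ← map_sub]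
  refine clm_apply_eq_integral hcont (fun k m => ?_) (fun z => ?_) f
  · exact (((schwartz_withSeminorms ℝ E ℝ).continuous_seminorm (k, m)).comp
      hcont).continuousOn.integrableOn_compact isCompact_Icc
  · have hint : Continuous fun s : ℝ => reflTranslate (x - s • y) (∂_{y} φ) z := by
      simp_rw [reflTranslate_apply]
      exact (∂_{y} φ).continuous.comp (by fun_prop)
    rw [integral_Icc_eq_integral_Ioc, ← intervalIntegral.integral_of_le zero_le_one,
      intervalIntegral.integral_eq_sub_of_hasDerivAt
        (fun s _ => hasDerivAt_reflTranslate_sub_smul φ x y z s) (hint.intervalIntegrable _ _)]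
    simp only [one_smul, zero_smul, sub_zero, sub_apply]
    ring

variable {f}

lemma abs_clm_reflTranslate_sub_le {φ : 𝓢(E, ℝ)} {x y : E} {K : ℝ}
    (hK : ∀ s ∈ Icc (0 : ℝ) 1, ‖distribGradient f (reflTranslate (x - s • y) φ)‖ ≤ K) :
    |f (reflTranslate (x - y) φ) - f (reflTranslate x φ)| ≤ K * ‖y‖ := by
  rw [abs_sub_comm, clm_reflTranslate_sub_eq_integral, ← Real.norm_eq_abs]
  have hbound := norm_setIntegral_le_of_norm_le_const (μ := (volume : Measure ℝ))
    (s := Icc (0 : ℝ) 1) (by simp)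
    fun s hs => (distribGradient f (reflTranslate (x - s • y) φ)).le_of_opNorm_le (hK s hs) y
  simpa using hbound

variable [MeasureSpace E] [BorelSpace E] [(volume : Measure E).IsAddHaarMeasure]

lemma abs_clm_reflTranslate_schwartzConv_sub_le {χ φ : 𝓢(E, ℝ)} {x : E} {δ K : ℝ}
    (hχ : ∫ y, χ y = 1) (hsupp : ∀ y, δ ≤ ‖y‖ → χ y = 0)
    (hK : ∀ y, ‖x - y‖ ≤ δ → ‖distribGradient f (reflTranslate y φ)‖ ≤ K) :
    |f (reflTranslate x (schwartzConv χ φ)) - f (reflTranslate x φ)| ≤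
      (∫ y, ‖χ y‖) * (K * δ) := by
  have hdiff : f (reflTranslate x (schwartzConv χ φ)) - f (reflTranslate x φ) =
      ∫ y, χ y • (f (reflTranslate (x - y) φ) - f (reflTranslate x φ)) := by
    simp_rw [smul_sub]
    rw [integral_sub (integrable_smul_clm_reflTranslate f χ φ x) (χ.integrable.smul_const _),
      integral_smul_const, hχ, one_smul, clm_reflTranslate_schwartzConv]
  rw [hdiff, ← Real.norm_eq_abs, ← integral_mul_const]
  refine norm_integral_le_of_norm_le (χ.integrable.norm.mul_const _) (.of_forall fun y => ?_)
  rcases le_or_gt δ ‖y‖ with hy | hy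
  · simp [hsupp y hy]
  have hKs (s : ℝ) (hs : s ∈ Icc (0 : ℝ) 1) :
      ‖distribGradient f (reflTranslate (x - s • y) φ)‖ ≤ K := by
    refine hK _ ?_
    rw [_root_.sub_sub_cancel, norm_smul, Real.norm_of_nonneg hs.1]
    exact (mul_le_of_le_one_left (norm_nonneg y) hs.2).trans hy.le
  have hK0 : 0 ≤ K := (norm_nonneg _).trans (hKs 0 (by simp))
  rw [norm_smul]
  gcongr
  exact (abs_clm_reflTranslate_sub_le hKs).trans (by gcongr)

end Gradient

/-! ### Dyadic mollifiers and their remainders -/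

section Mollifier

variable {E : Type*} [NormedAddCommGroup E] [NormedSpace ℝ E] [MeasureSpace E]

/-- `Ψ k` behaves like the dilate `ψ_{2^{-k}}` of a fixed test function `ψ` supported in the unit
ball with integral one; `B` bounds the `L¹` norms. -/
structure IsDyadicMollifier (Ψ : ℕ → 𝓢(E, ℝ)) (B : ℝ) : Prop where
  integral_eq_one : ∀ k, ∫ y, Ψ k y = 1
  eq_zero : ∀ k z, ((2 : ℝ) ^ k)⁻¹ ≤ ‖z‖ → Ψ k z = 0
  integral_norm_le : ∀ k, ∫ y, ‖Ψ k y‖ ≤ B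
  exists_hasDecay : ∀ a i, ∃ C, ∀ k, HasDecay a i (Ψ k) (C * 2 ^ (k * (Module.finrank ℝ E + i)))

namespace IsDyadicMollifier

variable {Ψ : ℕ → 𝓢(E, ℝ)} {B : ℝ}

lemma nonneg (h : IsDyadicMollifier Ψ B) : 0 ≤ B :=
  (integral_nonneg fun _ => norm_nonneg _).trans (h.integral_norm_le 0)

lemma exists_norm_clm_reflTranslate_le {G : Type*} [NormedAddCommGroup G] [NormedSpace ℝ G]
    (h : IsDyadicMollifier Ψ B) (g : 𝓢(E, ℝ) →L[ℝ] G) :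
    ∃ C, 0 ≤ C ∧ ∃ N : ℕ, ∀ k x, ‖g (reflTranslate x (Ψ k))‖ ≤
      C * (1 + ‖x‖) ^ N * 2 ^ (k * (Module.finrank ℝ E + N)) := by
  refine exists_norm_clm_reflTranslate_le_of_family g
    (w := fun m k => 2 ^ (k * (Module.finrank ℝ E + m))) (fun m m' hm k => ?_)
    (fun m k => by positivity) h.exists_hasDecay
  dsimp only
  gcongr
  exact one_le_two

end IsDyadicMollifier

variable [FiniteDimensional ℝ E] [BorelSpace E] [(volume : Measure E).IsAddHaarMeasure]

/-- The Schwartz function `Ψ_k * (δ - Ψ_k) * ⋯ * (δ - Ψ_{k+m-1})`. Each factor both localises to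
scale `2^{-(k+i)}` and cancels, so the remainders decay faster than any power of `2^{-m}`. -/
def mollifierRemainder (Ψ : ℕ → 𝓢(E, ℝ)) (k : ℕ) : ℕ → 𝓢(E, ℝ)
  | 0 => Ψ k
  | m + 1 => mollifierRemainder Ψ k m - schwartzConv (Ψ (k + m)) (mollifierRemainder Ψ k m)

lemma mollifierRemainder_succ (Ψ : ℕ → 𝓢(E, ℝ)) (k m : ℕ) :
    mollifierRemainder Ψ k (m + 1) =
      mollifierRemainder Ψ k m - schwartzConv (Ψ (k + m)) (mollifierRemainder Ψ k m) := rfl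

lemma eq_sum_schwartzConv_mollifierRemainder_add (Ψ : ℕ → 𝓢(E, ℝ)) (k M : ℕ) :
    Ψ k = ∑ m ∈ Finset.range M, schwartzConv (Ψ (k + m)) (mollifierRemainder Ψ k m) +
      mollifierRemainder Ψ k M := by
  induction M with
  | zero => simp [mollifierRemainder]
  | succ M ih => rwa [Finset.sum_range_succ, mollifierRemainder_succ, add_assoc, add_sub_cancel]

lemma inv_two_pow_le_one (j : ℕ) : ((2 : ℝ) ^ j)⁻¹ ≤ 1 :=
  inv_le_one_of_one_le₀ (one_le_pow₀ one_le_two)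

namespace IsDyadicMollifier

variable {Ψ : ℕ → 𝓢(E, ℝ)} {B : ℝ}

lemma integral_one_add_norm_pow_mul_le (h : IsDyadicMollifier Ψ B) (a j : ℕ) :
    ∫ y, (1 + ‖y‖) ^ a * ‖Ψ j y‖ ≤ 2 ^ a * B := by
  calc ∫ y, (1 + ‖y‖) ^ a * ‖Ψ j y‖ ≤ ∫ y, 2 ^ a * ‖Ψ j y‖ := by
        refine integral_mono (integrable_one_add_norm_pow_mul a _)
          ((Ψ j).integrable.norm.const_mul _) fun y => ?_
        rcases le_or_gt ((2 : ℝ) ^ j)⁻¹ ‖y‖ with hy | hy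
        · simp [h.eq_zero j y hy]
        · dsimp only
          gcongr
          linarith [inv_two_pow_le_one j]
    _ = 2 ^ a * ∫ y, ‖Ψ j y‖ := integral_const_mul _ _
    _ ≤ 2 ^ a * B := by gcongr; exact h.integral_norm_le j

lemma hasDecay_mollifierRemainder_of_bound (h : IsDyadicMollifier Ψ B) {a i : ℕ} {C : ℝ}
    (hC : ∀ k, HasDecay a i (Ψ k) (C * 2 ^ (k * (Module.finrank ℝ E + i)))) (k m : ℕ) :
    HasDecay a i (mollifierRemainder Ψ k m)
      (C * 2 ^ (k * (Module.finrank ℝ E + i)) * (1 + 2 ^ a * B) ^ m) := by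
  induction m with
  | zero => simpa [mollifierRemainder] using hC k
  | succ m ih =>
    refine (ih.sub (ih.schwartzConv (Ψ (k + m)))).mono ?_
    have hnonneg := ih.nonneg
    calc _ ≤ C * 2 ^ (k * (Module.finrank ℝ E + i)) * (1 + 2 ^ a * B) ^ m +
          2 ^ a * B * (C * 2 ^ (k * (Module.finrank ℝ E + i)) * (1 + 2 ^ a * B) ^ m) := by
          gcongr
          exact h.integral_one_add_norm_pow_mul_le a (k + m)
      _ = C * 2 ^ (k * (Module.finrank ℝ E + i)) * (1 + 2 ^ a * B) ^ (m + 1) := by ring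

-- One derivative of `mollifierRemainder Ψ k m` costs `2 ^ k`, and convolving with
-- `δ - Ψ (k + m)` gains `2 ^ -(k + m)` from it: the net gain is `2 ^ -m`.
lemma hasDecay_mollifierRemainder_succ (h : IsDyadicMollifier Ψ B) {L a i k m : ℕ} {C : ℝ}
    (hC0 : 0 ≤ C) (hC : HasDecay a (i + 1) (mollifierRemainder Ψ k m)
      (C * 2 ^ (k * (Module.finrank ℝ E + (i + 1))) * (1 + 2 ^ a * B) ^ m * (2 ^ (L * m))⁻¹)) :
    HasDecay a i (mollifierRemainder Ψ k (m + 1))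
      (C * 2 ^ (L + 1) * 2 ^ (k * (Module.finrank ℝ E + i)) * (1 + 2 ^ a * B) ^ (m + 1) *
        (2 ^ ((L + 1) * (m + 1)))⁻¹) := by
  have hB := h.nonneg
  refine (hC.sub_schwartzConv (h.integral_eq_one _) (inv_two_pow_le_one _)
    (h.eq_zero (k + m))).mono ?_
  calc _ ≤ 2 ^ a * ((2 : ℝ) ^ (k + m))⁻¹ * B *
        (C * 2 ^ (k * (Module.finrank ℝ E + (i + 1))) * (1 + 2 ^ a * B) ^ m *
          (2 ^ (L * m))⁻¹) := by
        gcongr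
        exact h.integral_norm_le _
    _ = 2 ^ a * B * (C * 2 ^ (L + 1) * 2 ^ (k * (Module.finrank ℝ E + i)) *
          (1 + 2 ^ a * B) ^ m * (2 ^ ((L + 1) * (m + 1)))⁻¹) := by
        rw [show (2 : ℝ) ^ (k * (Module.finrank ℝ E + (i + 1))) =
            2 ^ (k * (Module.finrank ℝ E + i)) * 2 ^ k by ring,
          show (2 : ℝ) ^ ((L + 1) * (m + 1)) = 2 ^ (L * m) * 2 ^ m * 2 ^ (L + 1) by ring, pow_add]
        field_simp
    _ ≤ (1 + 2 ^ a * B) * (C * 2 ^ (L + 1) * 2 ^ (k * (Module.finrank ℝ E + i)) *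
          (1 + 2 ^ a * B) ^ m * (2 ^ ((L + 1) * (m + 1)))⁻¹) := by
        gcongr
        linarith
    _ = _ := by ring

lemma exists_hasDecay_mollifierRemainder_aux (h : IsDyadicMollifier Ψ B) (L : ℕ) :
    ∀ a i, ∃ C, 0 ≤ C ∧ ∀ k m, HasDecay a i (mollifierRemainder Ψ k m)
      (C * 2 ^ (k * (Module.finrank ℝ E + i)) * (1 + 2 ^ a * B) ^ m * (2 ^ (L * m))⁻¹) := by
  have hB := h.nonneg
  induction L with
  | zero =>
    intro a i
    obtain ⟨C, hC⟩ := h.exists_hasDecay a i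
    exact ⟨C, by simpa using (hC 0).nonneg,
      fun k m => by simpa using h.hasDecay_mollifierRemainder_of_bound hC k m⟩
  | succ L ih =>
    intro a i
    obtain ⟨C, hC0, hC⟩ := ih a (i + 1)
    obtain ⟨C', hC'⟩ := h.exists_hasDecay a i
    refine ⟨max C' (C * 2 ^ (L + 1)), le_max_of_le_right (by positivity), fun k m => ?_⟩
    cases m with
    | zero =>
      refine (hC' k).mono ?_
      simp only [pow_zero, mul_one, mul_zero, inv_one]
      gcongr
      exact le_max_left _ _
    | succ m =>
      refine (h.hasDecay_mollifierRemainder_succ hC0 (hC k m)).mono ?_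
      gcongr
      exact le_max_right _ _

lemma exists_hasDecay_mollifierRemainder (h : IsDyadicMollifier Ψ B) (L a i : ℕ) :
    ∃ C, ∀ k m, HasDecay a i (mollifierRemainder Ψ k m)
      (C * 2 ^ (k * (Module.finrank ℝ E + i)) * (2 ^ (L * m))⁻¹) := by
  have hB := h.nonneg
  obtain ⟨K, hK⟩ := pow_unbounded_of_one_lt (1 + 2 ^ a * B) (one_lt_two (α := ℝ))
  obtain ⟨C, hC0, hC⟩ := h.exists_hasDecay_mollifierRemainder_aux (L + K) a i
  refine ⟨C, fun k m => (hC k m).mono ?_⟩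
  calc _ ≤ C * 2 ^ (k * (Module.finrank ℝ E + i)) * (2 ^ K) ^ m * (2 ^ ((L + K) * m))⁻¹ := by
        gcongr
    _ = C * 2 ^ (k * (Module.finrank ℝ E + i)) * (2 ^ (L * m))⁻¹ := by
        rw [show (2 : ℝ) ^ ((L + K) * m) = 2 ^ (L * m) * (2 ^ K) ^ m by ring]
        field_simp

lemma mollifierRemainder_eq_zero (h : IsDyadicMollifier Ψ B) (k m : ℕ) {z : E}
    (hz : (3 - 2 / 2 ^ m) / (2 : ℝ) ^ k ≤ ‖z‖) : mollifierRemainder Ψ k m z = 0 := by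
  induction m generalizing z with
  | zero =>
    refine h.eq_zero k z (le_trans (le_of_eq ?_) hz)
    norm_num
  | succ m ih =>
    have hradius : (3 - 2 / 2 ^ (m + 1)) / (2 : ℝ) ^ k =
        (3 - 2 / 2 ^ m) / (2 : ℝ) ^ k + ((2 : ℝ) ^ (k + m))⁻¹ := by
      rw [pow_succ, pow_add]
      field_simp
      ring
    rw [hradius] at hz
    have hpos : (0 : ℝ) < ((2 : ℝ) ^ (k + m))⁻¹ := by positivity
    rw [mollifierRemainder_succ, sub_apply, ih (by linarith),
      schwartzConv_eq_zero_of_le_norm (h.eq_zero (k + m)) (fun y => ih (z := y)) hz, sub_zero]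

variable {G : Type*} [NormedAddCommGroup G] [NormedSpace ℝ G]

lemma tendsto_clm_mollifierRemainder (h : IsDyadicMollifier Ψ B) (g : 𝓢(E, ℝ) →L[ℝ] G)
    (k : ℕ) (x : E) :
    Tendsto (fun m => g (reflTranslate x (mollifierRemainder Ψ k m))) atTop (𝓝 0) := by
  obtain ⟨C, -, N, hN⟩ := exists_norm_clm_reflTranslate_le_of_family g
    (φ := mollifierRemainder Ψ k)
    (w := fun i m => 2 ^ (k * (Module.finrank ℝ E + i)) * ((2 : ℝ) ^ m)⁻¹)
    (fun i i' hi m => by dsimp only; gcongr; exact one_le_two) (fun i m => by positivity)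
    fun a i => by
      obtain ⟨D, hD⟩ := h.exists_hasDecay_mollifierRemainder 1 a i
      exact ⟨D, fun m => by simpa [mul_assoc] using hD k m⟩
  refine squeeze_zero_norm (fun m => hN m x) ?_
  have hlim := (tendsto_pow_atTop_nhds_zero_of_lt_one (r := (2 : ℝ)⁻¹) (by norm_num)
    (by norm_num)).const_mul (C * (1 + ‖x‖) ^ N * 2 ^ (k * (Module.finrank ℝ E + N)))
  simpa [mul_assoc] using hlim

variable [CompleteSpace G]

lemma enorm_clm_schwartzConv_mollifierRemainder_le (h : IsDyadicMollifier Ψ B)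
    (g : 𝓢(E, ℝ) →L[ℝ] G) (φ : 𝓢(E, ℝ)) (k m : ℕ) (x : E) {c : ℝ}
    (hc : HasDecay 0 0 (mollifierRemainder Ψ k m) c) :
    ‖g (reflTranslate x (schwartzConv φ (mollifierRemainder Ψ k m)))‖ₑ ≤
      ENNReal.ofReal c * ∫⁻ z in ball x (3 / 2 ^ k), ‖g (reflTranslate z φ)‖ₑ := by
  rw [schwartzConv_comm, clm_reflTranslate_schwartzConv]
  refine (enorm_integral_le_lintegral_enorm _).trans ?_
  rw [← lintegral_const_mul' _ _ ENNReal.ofReal_ne_top, ← lintegral_indicator measurableSet_ball]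
  conv_rhs => rw [← lintegral_sub_left_eq_self _ x]
  refine lintegral_mono fun z => ?_
  rcases lt_or_ge ‖z‖ (3 / 2 ^ k) with hz | hz
  · have hmem : x - z ∈ ball x (3 / 2 ^ k) := by simpa using hz
    rw [indicator_of_mem hmem, enorm_smul, ← ofReal_norm]
    gcongr
    simpa using hc z
  · rw [h.mollifierRemainder_eq_zero k m (le_trans ?_ hz)]
    · simp
    · gcongr
      linarith [show (0 : ℝ) ≤ 2 / 2 ^ m by positivity]

lemma exists_enorm_clm_reflTranslate_le_tsum (h : IsDyadicMollifier Ψ B) (L : ℕ) :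
    ∃ C : ℝ, ∀ (g : 𝓢(E, ℝ) →L[ℝ] G) (k : ℕ) (x : E), ‖g (reflTranslate x (Ψ k))‖ₑ ≤
      ∑' m : ℕ, ENNReal.ofReal (C * 2 ^ (k * Module.finrank ℝ E) * (2 ^ (L * m))⁻¹) *
        ∫⁻ z in ball x (3 / 2 ^ k), ‖g (reflTranslate z (Ψ (k + m)))‖ₑ := by
  obtain ⟨C, hC⟩ := h.exists_hasDecay_mollifierRemainder L 0 0
  refine ⟨C, fun g k x => ?_⟩
  set S := ∑' m : ℕ, ENNReal.ofReal (C * 2 ^ (k * Module.finrank ℝ E) * (2 ^ (L * m))⁻¹) *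
    ∫⁻ z in ball x (3 / 2 ^ k), ‖g (reflTranslate z (Ψ (k + m)))‖ₑ
  have hpartial (M : ℕ) : ‖g (reflTranslate x (Ψ k))‖ₑ ≤
      S + ‖g (reflTranslate x (mollifierRemainder Ψ k M))‖ₑ := by
    conv_lhs => rw [eq_sum_schwartzConv_mollifierRemainder_add Ψ k M, map_add, map_add, map_sum,
      map_sum]
    refine (enorm_add_le _ _).trans ?_
    gcongr
    refine (enorm_sum_le _ _).trans (le_trans (Finset.sum_le_sum fun m _ => ?_)
      (ENNReal.sum_le_tsum _))
    exact h.enorm_clm_schwartzConv_mollifierRemainder_le g _ k m x (hC k m)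
  have hlim : Tendsto (fun M => S + ‖g (reflTranslate x (mollifierRemainder Ψ k M))‖ₑ) atTop
      (𝓝 S) := by
    simpa using ((h.tendsto_clm_mollifierRemainder g k x).enorm).const_add S
  exact ge_of_tendsto' hlim hpartial

end IsDyadicMollifier

end Mollifier

/-! ### Peetre's maximal function -/

lemma rpow_le_of_le_mul_rpow_one_sub {P X : ℝ≥0∞} {r : ℝ} (hr0 : 0 < r) (hr1 : r ≤ 1)
    (hP : P ≠ ⊤) (h : P ≤ X * P ^ (1 - r)) : P ^ r ≤ X := by
  rcases eq_or_ne P 0 with rfl | hP0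
  · simp [hr0]
  refine (ENNReal.mul_le_mul_iff_left (by simp [ENNReal.rpow_eq_zero_iff, hP0, hP])
    (ENNReal.rpow_ne_top_of_nonneg (by linarith : 0 ≤ 1 - r) hP)).1 ?_
  rwa [← ENNReal.rpow_add _ _ hP0 hP, add_sub_cancel, ENNReal.rpow_one]

section PeetreWeight

variable {E : Type*} [SeminormedAddCommGroup E]

/-- The weight by which values at scale `2^{-(j+l)}` and position `y` are discounted in Peetre's
maximal function with base point `x` and base scale `2^{-j}`. -/
def peetreWeight (j : ℕ) (x : E) (l : ℕ) (y : E) : ℝ := 2 ^ l * (1 + 2 ^ j * ‖x - y‖)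

variable (j : ℕ) (x : E) (l : ℕ) (y : E)

lemma one_le_peetreWeight : 1 ≤ peetreWeight j x l y :=
  one_le_mul_of_one_le_of_one_le (one_le_pow₀ one_le_two) (le_add_of_nonneg_right (by positivity))

lemma peetreWeight_pos : 0 < peetreWeight j x l y :=
  zero_lt_one.trans_le (one_le_peetreWeight j x l y)

lemma one_le_ofReal_peetreWeight : 1 ≤ ENNReal.ofReal (peetreWeight j x l y) :=
  ENNReal.one_le_ofReal.2 (one_le_peetreWeight j x l y)

lemma ofReal_peetreWeight_pow_ne_zero (A : ℕ) : ENNReal.ofReal (peetreWeight j x l y) ^ A ≠ 0 :=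
  (zero_lt_one.trans_le (one_le_pow₀ (one_le_ofReal_peetreWeight j x l y))).ne'

variable {j x l y}

lemma peetreWeight_add_le {z : E} (m : ℕ) (hz : ‖z - y‖ < 3 / 2 ^ (j + l)) :
    peetreWeight j x (l + m) z ≤ 4 * 2 ^ m * peetreWeight j x l y := by
  have hdist : ‖x - z‖ ≤ ‖x - y‖ + 3 / 2 ^ j := by
    have htri := norm_sub_le_norm_sub_add_norm_sub x y z
    have hscale : (3 : ℝ) / 2 ^ (j + l) ≤ 3 / 2 ^ j := by
      gcongr
      exacts [one_le_two, Nat.le_add_right j l]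
    rw [norm_sub_rev y z] at htri
    linarith
  calc peetreWeight j x (l + m) z ≤ 2 ^ (l + m) * (1 + 2 ^ j * (‖x - y‖ + 3 / 2 ^ j)) := by
        unfold peetreWeight
        gcongr
    _ = 2 ^ (l + m) * (4 + 2 ^ j * ‖x - y‖) := by field_simp; ring
    _ ≤ 2 ^ (l + m) * (4 + 4 * (2 ^ j * ‖x - y‖)) := by
        have hnonneg : 0 ≤ 2 ^ j * ‖x - y‖ := by positivity
        exact mul_le_mul_of_nonneg_left (by linarith) (by positivity)
    _ = 4 * 2 ^ m * peetreWeight j x l y := by unfold peetreWeight; ring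

lemma peetreWeight_le_six (hl : l ≤ 1) (hy : ‖x - y‖ ≤ 2 / 2 ^ j) : peetreWeight j x l y ≤ 6 :=
  calc peetreWeight j x l y ≤ 2 ^ 1 * (1 + 2 ^ j * (2 / 2 ^ j)) := by
        unfold peetreWeight
        gcongr
        exact one_le_two
    _ = 6 := by field_simp; norm_num

-- The exponent `A` is large enough to absorb the volume of a ball of radius `2^{-j} + ‖x - y‖`
-- measured in units of `2^{-(j+l)}`.
lemma ofReal_pow_mul_le_peetreWeight_rpow {n A : ℕ} {r : ℝ} (hA : n ≤ A * r) :
    ENNReal.ofReal (2 ^ ((j + l) * n)) * ENNReal.ofReal ((((2 : ℝ) ^ j)⁻¹ + ‖x - y‖) ^ n) ≤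
      (ENNReal.ofReal (peetreWeight j x l y) ^ A) ^ r := by
  have hpow : (2 : ℝ) ^ ((j + l) * n) * (((2 : ℝ) ^ j)⁻¹ + ‖x - y‖) ^ n =
      peetreWeight j x l y ^ n := by
    rw [pow_mul, ← mul_pow, peetreWeight, pow_add]
    congr 1
    field_simp
  rw [← ENNReal.ofReal_mul (by positivity), hpow,
    ENNReal.ofReal_pow (peetreWeight_pos j x l y).le, ← ENNReal.rpow_natCast,
    ← ENNReal.rpow_natCast, ← ENNReal.rpow_mul]
  exact ENNReal.rpow_le_rpow_of_exponent_le (one_le_ofReal_peetreWeight j x l y) hA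

end PeetreWeight

section Peetre

variable {E : Type*} [NormedAddCommGroup E] [NormedSpace ℝ E]
  {G : Type*} [NormedAddCommGroup G] [NormedSpace ℝ G]

/-- The maximal function `sup_k ‖(g * Ψ_k)(x)‖` of the distribution `g` along the sequence `Ψ`. -/
def verticalMax (g : 𝓢(E, ℝ) →L[ℝ] G) (Ψ : ℕ → 𝓢(E, ℝ)) (x : E) : ℝ≥0∞ :=
  ⨆ k, ‖g (reflTranslate x (Ψ k))‖ₑ

/-- Peetre's maximal function of the distribution `g` at `x`, over all scales finer than `2^{-j}`
and with decay exponent `A`. -/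
def peetreMax (g : 𝓢(E, ℝ) →L[ℝ] G) (Ψ : ℕ → 𝓢(E, ℝ)) (A j : ℕ) (x : E) : ℝ≥0∞ :=
  ⨆ l : ℕ, ⨆ y : E, ‖g (reflTranslate y (Ψ (j + l)))‖ₑ / ENNReal.ofReal (peetreWeight j x l y) ^ A

variable (g : 𝓢(E, ℝ) →L[ℝ] G) (Ψ : ℕ → 𝓢(E, ℝ))

lemma enorm_clm_reflTranslate_le_verticalMax (k : ℕ) (x : E) :
    ‖g (reflTranslate x (Ψ k))‖ₑ ≤ verticalMax g Ψ x :=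
  le_iSup (fun k => ‖g (reflTranslate x (Ψ k))‖ₑ) k

lemma measurable_verticalMax [MeasurableSpace E] [BorelSpace E] : Measurable (verticalMax g Ψ) :=
  .iSup fun k => (continuous_clm_reflTranslate g (Ψ k)).enorm.measurable

variable {g Ψ} {A j : ℕ} {x : E}

lemma peetreMax_le_iff {P : ℝ≥0∞} : peetreMax g Ψ A j x ≤ P ↔ ∀ l y,
    ‖g (reflTranslate y (Ψ (j + l)))‖ₑ ≤ P * ENNReal.ofReal (peetreWeight j x l y) ^ A := by
  simp only [peetreMax, iSup_le_iff]
  refine forall₂_congr fun l y => ENNReal.div_le_iff (ofReal_peetreWeight_pow_ne_zero j x l y A) ?_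
  exact ENNReal.pow_ne_top ENNReal.ofReal_ne_top

lemma enorm_clm_reflTranslate_le_peetreMax_mul (l : ℕ) (y : E) :
    ‖g (reflTranslate y (Ψ (j + l)))‖ₑ ≤
      peetreMax g Ψ A j x * ENNReal.ofReal (peetreWeight j x l y) ^ A :=
  peetreMax_le_iff.1 le_rfl l y

lemma IsDyadicMollifier.exists_peetreMax_ne_top [MeasureSpace E] {B : ℝ}
    (h : IsDyadicMollifier Ψ B) (g : 𝓢(E, ℝ) →L[ℝ] G) :
    ∃ N, ∀ A ≥ N, ∀ j x, peetreMax g Ψ A j x ≠ ⊤ := by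
  obtain ⟨C, hC, N, hN⟩ := h.exists_norm_clm_reflTranslate_le g
  set n := Module.finrank ℝ E
  refine ⟨n + N, fun A hA j x => ne_top_of_le_ne_top
    (b := ENNReal.ofReal (C * 2 ^ (j * (n + N)) * (1 + ‖x‖) ^ N)) ENNReal.ofReal_ne_top
    (peetreMax_le_iff.2 fun l y => ?_)⟩
  rw [← ENNReal.ofReal_pow (peetreWeight_pos j x l y).le, ← ENNReal.ofReal_mul (by positivity),
    ← ofReal_norm]
  refine ENNReal.ofReal_le_ofReal ((hN (j + l) y).trans ?_)
  have hone : 1 ≤ 1 + 2 ^ j * ‖x - y‖ := le_add_of_nonneg_right (by positivity)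
  have hbase : 1 + ‖x - y‖ ≤ 1 + 2 ^ j * ‖x - y‖ := by
    gcongr
    exact le_mul_of_one_le_left (norm_nonneg _) (one_le_pow₀ one_le_two)
  have hweight : (1 + ‖x - y‖) ^ N * (2 : ℝ) ^ (l * (n + N)) ≤ peetreWeight j x l y ^ A :=
    calc (1 + ‖x - y‖) ^ N * (2 : ℝ) ^ (l * (n + N))
        ≤ (1 + 2 ^ j * ‖x - y‖) ^ A * (2 : ℝ) ^ (l * A) := by
          gcongr
          · exact (pow_le_pow_left₀ (by positivity) hbase N).trans
              (pow_le_pow_right₀ hone (by omega))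
          · exact one_le_two
      _ = peetreWeight j x l y ^ A := by rw [peetreWeight, mul_pow, ← pow_mul, mul_comm]
  calc C * (1 + ‖y‖) ^ N * 2 ^ ((j + l) * (n + N))
      ≤ C * ((1 + ‖x‖) ^ N * (1 + ‖x - y‖) ^ N) * 2 ^ ((j + l) * (n + N)) := by
        gcongr
        rw [norm_sub_rev]
        exact one_add_norm_pow_le_mul N y x
    _ = C * 2 ^ (j * (n + N)) * (1 + ‖x‖) ^ N * ((1 + ‖x - y‖) ^ N * 2 ^ (l * (n + N))) := by ring
    _ ≤ _ := by gcongr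

variable [MeasureSpace E]

/-- `Q` bounds the averages of `F` over the balls around `x` of radius at least `3 * 2^{-j}`, up to
the volume of the unit ball. -/
def HasAverageBound (F : E → ℝ≥0∞) (j : ℕ) (x : E) (Q : ℝ≥0∞) : Prop :=
  ∀ ρ : ℝ, ((2 : ℝ) ^ j)⁻¹ ≤ ρ →
    ∫⁻ z in ball x (3 * ρ), F z ≤ Q * ENNReal.ofReal (ρ ^ Module.finrank ℝ E)

lemma HasAverageBound.lintegral_ball_le {F : E → ℝ≥0∞} {Q : ℝ≥0∞} (hQ : HasAverageBound F j x Q)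
    (l : ℕ) (y : E) :
    ∫⁻ z in ball y (3 / 2 ^ (j + l)), F z ≤
      Q * ENNReal.ofReal ((((2 : ℝ) ^ j)⁻¹ + ‖x - y‖) ^ Module.finrank ℝ E) := by
  refine (lintegral_mono_set (ball_subset_ball' ?_)).trans
    (hQ _ (le_add_of_nonneg_right (norm_nonneg (x - y))))
  have hscale : (3 : ℝ) / 2 ^ (j + l) ≤ 3 * ((2 : ℝ) ^ j)⁻¹ := by
    rw [div_eq_mul_inv]
    gcongr
    exacts [one_le_two, Nat.le_add_right j l]
  rw [dist_comm, dist_eq_norm]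
  linarith [norm_nonneg (x - y)]

variable [BorelSpace E]

-- Split `a = a ^ (1 - r) * a ^ r`, bounding the first factor by Peetre's maximal function and the
-- second by the vertical one.
lemma lintegral_enorm_clm_reflTranslate_le_peetreMax {r : ℝ} (hr0 : 0 < r) (hr1 : r ≤ 1)
    (l m : ℕ) (y : E) :
    ∫⁻ z in ball y (3 / 2 ^ (j + l)), ‖g (reflTranslate z (Ψ (j + l + m)))‖ₑ ≤
      ENNReal.ofReal (4 * 2 ^ m) ^ A * (ENNReal.ofReal (peetreWeight j x l y) ^ A) ^ (1 - r) *
        peetreMax g Ψ A j x ^ (1 - r) *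
          ∫⁻ z in ball y (3 / 2 ^ (j + l)), verticalMax g Ψ z ^ r := by
  have hr1' : 0 ≤ 1 - r := by linarith
  have hfactor : 1 ≤ ENNReal.ofReal (4 * 2 ^ m) ^ A := by
    refine one_le_pow₀ (ENNReal.one_le_ofReal.2 ?_)
    linarith [one_le_pow₀ (one_le_two (α := ℝ)) (n := m)]
  rw [← lintegral_const_mul _ ((measurable_verticalMax g Ψ).pow_const r)]
  refine setLIntegral_mono' measurableSet_ball fun z hz => ?_
  rw [mem_ball, dist_eq_norm] at hz
  set a := ‖g (reflTranslate z (Ψ (j + l + m)))‖ₑ with ha_def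
  set P := peetreMax g Ψ A j x
  set W := ENNReal.ofReal (peetreWeight j x l y)
  have ha : a ≤ P * (ENNReal.ofReal (4 * 2 ^ m) ^ A * W ^ A) := by
    rw [ha_def, add_assoc j l m, ← mul_pow, ← ENNReal.ofReal_mul (by positivity)]
    refine (enorm_clm_reflTranslate_le_peetreMax_mul (x := x) (A := A) _ z).trans ?_
    gcongr
    exact peetreWeight_add_le m hz
  calc a = a ^ (1 - r) * a ^ r := by
        rw [← ENNReal.rpow_add_of_nonneg _ _ hr1' hr0.le, sub_add_cancel, ENNReal.rpow_one]
    _ ≤ (P * (ENNReal.ofReal (4 * 2 ^ m) ^ A * W ^ A)) ^ (1 - r) * verticalMax g Ψ z ^ r := by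
        gcongr
        exact enorm_clm_reflTranslate_le_verticalMax g Ψ _ z
    _ = (ENNReal.ofReal (4 * 2 ^ m) ^ A) ^ (1 - r) * (W ^ A) ^ (1 - r) * P ^ (1 - r) *
          verticalMax g Ψ z ^ r := by
        rw [ENNReal.mul_rpow_of_nonneg _ _ hr1', ENNReal.mul_rpow_of_nonneg _ _ hr1']
        ring
    _ ≤ _ := by
        gcongr
        exact (ENNReal.rpow_le_rpow_of_exponent_le hfactor (by linarith)).trans_eq
          (ENNReal.rpow_one _)

lemma tsum_inv_two_pow : ∑' j : ℕ, (2⁻¹ : ℝ≥0∞) ^ j = 2 := by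
  rw [ENNReal.tsum_geometric, ENNReal.one_sub_inv_two, inv_inv]

lemma ofReal_two_pow (j : ℕ) : ENNReal.ofReal (2 ^ j) = 2 ^ j := by
  rw [ENNReal.ofReal_pow zero_le_two, ENNReal.ofReal_ofNat]

lemma ofReal_inv_two_pow (j : ℕ) : ENNReal.ofReal ((2 ^ j)⁻¹) = 2⁻¹ ^ j := by
  rw [ENNReal.ofReal_inv_of_pos (by positivity), ofReal_two_pow, ENNReal.inv_pow]

lemma ofReal_mul_inv_pow_mul_ofReal_pow (C : ℝ) (A k m : ℕ) :
    ENNReal.ofReal (C * 2 ^ k * (2 ^ ((A + 1) * m))⁻¹) * ENNReal.ofReal (4 * 2 ^ m) ^ A =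
      ENNReal.ofReal (C * 4 ^ A) * ENNReal.ofReal (2 ^ k) * 2⁻¹ ^ m := by
  rw [← ofReal_inv_two_pow, ← ENNReal.ofReal_pow (by positivity),
    ← ENNReal.ofReal_mul' (by positivity), ← ENNReal.ofReal_mul' (by positivity),
    ← ENNReal.ofReal_mul' (by positivity),
    show (2 : ℝ) ^ ((A + 1) * m) = (2 ^ m) ^ A * 2 ^ m by ring, mul_pow]
  congr 1
  field_simp

variable [FiniteDimensional ℝ E] [(volume : Measure E).IsAddHaarMeasure] [CompleteSpace G] {B : ℝ}

lemma IsDyadicMollifier.exists_peetreMax_le_mul_rpow_one_sub (h : IsDyadicMollifier Ψ B) {r : ℝ}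
    (hr0 : 0 < r) (hr1 : r ≤ 1) (hA : Module.finrank ℝ E ≤ A * r) :
    ∃ K : ℝ≥0∞, K ≠ ⊤ ∧ ∀ (g : 𝓢(E, ℝ) →L[ℝ] G) (j : ℕ) (x : E) (Q : ℝ≥0∞),
      HasAverageBound (fun z => verticalMax g Ψ z ^ r) j x Q →
        peetreMax g Ψ A j x ≤ K * Q * peetreMax g Ψ A j x ^ (1 - r) := by
  obtain ⟨C, hC⟩ := h.exists_enorm_clm_reflTranslate_le_tsum (G := G) (A + 1)
  refine ⟨ENNReal.ofReal (C * 4 ^ A) * 2, by finiteness, fun g j x Q hQ =>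
    peetreMax_le_iff.2 fun l y => ?_⟩
  set n := Module.finrank ℝ E
  set P := peetreMax g Ψ A j x
  set W := ENNReal.ofReal (peetreWeight j x l y) ^ A
  set I := ∫⁻ z in ball y (3 / 2 ^ (j + l)), verticalMax g Ψ z ^ r
  set V := ENNReal.ofReal ((((2 : ℝ) ^ j)⁻¹ + ‖x - y‖) ^ n)
  calc ‖g (reflTranslate y (Ψ (j + l)))‖ₑ
      ≤ ∑' m : ℕ, ENNReal.ofReal (C * 2 ^ ((j + l) * n) * (2 ^ ((A + 1) * m))⁻¹) *
          (ENNReal.ofReal (4 * 2 ^ m) ^ A * W ^ (1 - r) * P ^ (1 - r) * I) := by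
        refine (hC g (j + l) y).trans (ENNReal.tsum_le_tsum fun m => ?_)
        gcongr
        exact lintegral_enorm_clm_reflTranslate_le_peetreMax hr0 hr1 l m y
    _ = ∑' m : ℕ, (ENNReal.ofReal (C * 4 ^ A) * ENNReal.ofReal (2 ^ ((j + l) * n)) *
          (W ^ (1 - r) * P ^ (1 - r) * I)) * 2⁻¹ ^ m := by
        refine tsum_congr fun m => ?_
        rw [mul_assoc (ENNReal.ofReal (4 * 2 ^ m) ^ A), mul_assoc (ENNReal.ofReal (4 * 2 ^ m) ^ A),
          ← mul_assoc (ENNReal.ofReal _), ofReal_mul_inv_pow_mul_ofReal_pow, mul_right_comm]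
    _ = (ENNReal.ofReal (C * 4 ^ A) * ENNReal.ofReal (2 ^ ((j + l) * n)) *
          (W ^ (1 - r) * P ^ (1 - r) * I)) * 2 := by
        rw [ENNReal.tsum_mul_left, tsum_inv_two_pow]
    _ ≤ (ENNReal.ofReal (C * 4 ^ A) * ENNReal.ofReal (2 ^ ((j + l) * n)) *
          (W ^ (1 - r) * P ^ (1 - r) * (Q * V))) * 2 := by
        gcongr
        exact hQ.lintegral_ball_le l y
    _ = ENNReal.ofReal (C * 4 ^ A) * 2 * Q * P ^ (1 - r) * (W ^ (1 - r) *
          (ENNReal.ofReal (2 ^ ((j + l) * n)) * V)) := by ring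
    _ ≤ ENNReal.ofReal (C * 4 ^ A) * 2 * Q * P ^ (1 - r) * (W ^ (1 - r) * W ^ r) := by
        gcongr
        exact ofReal_pow_mul_le_peetreWeight_rpow hA
    _ = ENNReal.ofReal (C * 4 ^ A) * 2 * Q * P ^ (1 - r) * W := by
        rw [← ENNReal.rpow_add_of_nonneg _ _ (by linarith) hr0.le, sub_add_cancel,
          ENNReal.rpow_one]

lemma IsDyadicMollifier.exists_enorm_clm_reflTranslate_rpow_le (h : IsDyadicMollifier Ψ B)
    (g : 𝓢(E, ℝ) →L[ℝ] G) {r : ℝ} (hr0 : 0 < r) (hr1 : r ≤ 1) :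
    ∃ K : ℝ≥0∞, K ≠ ⊤ ∧ ∀ (j : ℕ) (x : E) (Q : ℝ≥0∞),
      HasAverageBound (fun z => verticalMax g Ψ z ^ r) j x Q →
        ∀ l y, l ≤ 1 → ‖x - y‖ ≤ 2 / 2 ^ j →
          ‖g (reflTranslate y (Ψ (j + l)))‖ₑ ^ r ≤ K * Q := by
  obtain ⟨N, hN⟩ := h.exists_peetreMax_ne_top g
  obtain ⟨A, hA⟩ := exists_nat_ge (max (N : ℝ) (Module.finrank ℝ E / r))
  have hNA : N ≤ A := by exact_mod_cast (le_max_left _ _).trans hA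
  have hAr : Module.finrank ℝ E ≤ A * r := (div_le_iff₀ hr0).1 ((le_max_right _ _).trans hA)
  obtain ⟨K, hK, hself⟩ := h.exists_peetreMax_le_mul_rpow_one_sub (G := G) hr0 hr1 hAr
  refine ⟨K * (ENNReal.ofReal 6 ^ A) ^ r, ?_, fun j x Q hQ l y hl hy => ?_⟩
  · exact ENNReal.mul_ne_top hK (ENNReal.rpow_ne_top_of_nonneg hr0.le (by finiteness))
  have hP := hN A hNA j x
  calc ‖g (reflTranslate y (Ψ (j + l)))‖ₑ ^ r
      ≤ (peetreMax g Ψ A j x * ENNReal.ofReal 6 ^ A) ^ r := by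
        gcongr
        refine (enorm_clm_reflTranslate_le_peetreMax_mul (x := x) (A := A) l y).trans ?_
        gcongr
        exact peetreWeight_le_six hl hy
    _ = peetreMax g Ψ A j x ^ r * (ENNReal.ofReal 6 ^ A) ^ r :=
        ENNReal.mul_rpow_of_nonneg _ _ hr0.le
    _ ≤ K * Q * (ENNReal.ofReal 6 ^ A) ^ r := by
        gcongr
        exact rpow_le_of_le_mul_rpow_one_sub hr0 hr1 hP (hself g j x Q hQ)
    _ = K * (ENNReal.ofReal 6 ^ A) ^ r * Q := by ring

end Peetre

/-! ### The Hardy–Littlewood maximal function -/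

section LayerCake

lemma lintegral_Ioo_ofReal_mul_rpow {q : ℝ} (hq : 0 < q) (b : ℝ≥0) :
    ∫⁻ t in Ioo (0 : ℝ) b, ENNReal.ofReal (q * t ^ (q - 1)) = (b : ℝ≥0∞) ^ q := by
  have hint : IntervalIntegrable (fun t : ℝ => q * t ^ (q - 1)) volume 0 b :=
    (intervalIntegral.intervalIntegrable_rpow' (by linarith)).const_mul q
  rw [← ofReal_integral_eq_lintegral_ofReal, ← integral_Ioc_eq_integral_Ioo,
    ← intervalIntegral.integral_of_le b.coe_nonneg, intervalIntegral.integral_const_mul,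
    integral_rpow (.inl (by linarith)), sub_add_cancel, Real.zero_rpow hq.ne', sub_zero,
    mul_div_cancel₀ _ hq.ne',
    ENNReal.ofReal_rpow_of_nonneg b.coe_nonneg hq.le |>.symm, ENNReal.ofReal_coe_nnreal]
  · exact ((intervalIntegrable_iff_integrableOn_Ioo_of_le b.coe_nonneg).1 hint)
  · filter_upwards [ae_restrict_mem measurableSet_Ioo] with t ht
    exact mul_nonneg hq.le (Real.rpow_nonneg ht.1.le _)

lemma lintegral_indicator_ofReal_lt {q : ℝ} (hq : 0 < q) (a : ℝ≥0∞) :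
    ∫⁻ t in Ioi (0 : ℝ), {t | ENNReal.ofReal t < a}.indicator
      (fun t => ENNReal.ofReal (q * t ^ (q - 1))) t = a ^ q := by
  have hcoe (b : ℝ≥0) : ∫⁻ t in Ioi (0 : ℝ), {t | ENNReal.ofReal t < b}.indicator
      (fun t => ENNReal.ofReal (q * t ^ (q - 1))) t = (b : ℝ≥0∞) ^ q := by
    have hset : {t | ENNReal.ofReal t < b} ∩ Ioi 0 = Ioo (0 : ℝ) b := by
      ext t
      rw [mem_inter_iff, mem_Ioi, mem_Ioo, and_comm, mem_ofPred_eq, ← ENNReal.ofReal_coe_nnreal]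
      exact and_congr_right fun ht => ENNReal.ofReal_lt_ofReal_iff_of_nonneg ht.le
    rw [setLIntegral_indicator (measurableSet_lt (by fun_prop) measurable_const), hset,
      lintegral_Ioo_ofReal_mul_rpow hq]
  induction a with
  | coe b => exact hcoe b
  | top =>
    rw [ENNReal.top_rpow_of_pos hq]
    refine ENNReal.eq_top_of_forall_nnreal_le fun c => ?_
    calc (c : ℝ≥0∞) = ((c ^ q⁻¹ : ℝ≥0) : ℝ≥0∞) ^ q := by
          rw [← ENNReal.coe_rpow_of_nonneg _ hq.le, NNReal.rpow_inv_rpow hq.ne']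
      _ ≤ _ := by
          rw [← hcoe]
          refine lintegral_mono fun t => indicator_le_indicator_of_subset ?_ (fun _ => zero_le) t
          exact fun t ht => (mem_ofPred_eq ▸ ht : ENNReal.ofReal t < _).trans_le le_top

variable {α : Type*} [MeasurableSpace α] {μ : Measure α}

lemma lintegral_rpow_eq_lintegral_measure_lt [SFinite μ] {q : ℝ} (hq : 0 < q) {F : α → ℝ≥0∞}
    (hF : Measurable F) : ∫⁻ x, F x ^ q ∂μ =
      ∫⁻ t in Ioi (0 : ℝ), ENNReal.ofReal (q * t ^ (q - 1)) * μ {x | ENNReal.ofReal t < F x} := by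
  have hlt : MeasurableSet {z : α × ℝ | ENNReal.ofReal z.2 < F z.1} :=
    measurableSet_lt (by fun_prop) (by fun_prop)
  have hmeas : Measurable fun z : α × ℝ => {t | ENNReal.ofReal t < F z.1}.indicator
      (fun t => ENNReal.ofReal (q * t ^ (q - 1))) z.2 :=
    Measurable.indicator (f := fun z : α × ℝ => ENNReal.ofReal (q * z.2 ^ (q - 1))) (by fun_prop)
      hlt
  calc ∫⁻ x, F x ^ q ∂μ = ∫⁻ x, (∫⁻ t in Ioi (0 : ℝ), {t | ENNReal.ofReal t < F x}.indicator
        (fun t => ENNReal.ofReal (q * t ^ (q - 1))) t) ∂μ :=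
        lintegral_congr fun x => (lintegral_indicator_ofReal_lt hq (F x)).symm
    _ = ∫⁻ t in Ioi (0 : ℝ), ∫⁻ x, {t | ENNReal.ofReal t < F x}.indicator
        (fun t => ENNReal.ofReal (q * t ^ (q - 1))) t ∂μ :=
        lintegral_lintegral_swap hmeas.aemeasurable
    _ = _ := lintegral_congr fun t =>
        lintegral_indicator_const (measurableSet_lt measurable_const hF) _

-- The part of `F` below `τ / 2` contributes at most half of `τ * μ s`.
lemma mul_measure_le_two_mul_setLIntegral {F : α → ℝ≥0∞} (hF : Measurable F) {s : Set α}
    (hs : μ s ≠ ⊤) {τ : ℝ≥0∞} (hτ : τ ≠ ⊤) (h : τ * μ s ≤ ∫⁻ x in s, F x ∂μ) :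
    τ * μ s ≤ 2 * ∫⁻ x in s, {x | τ < 2 * F x}.indicator F x ∂μ := by
  have : MeasurableSet {x | τ < 2 * F x} := measurableSet_lt measurable_const (hF.const_mul 2)
  have hsplit (x : α) : F x ≤ {x | τ < 2 * F x}.indicator F x + τ / 2 := by
    by_cases hx : τ < 2 * F x
    · rw [indicator_of_mem (show x ∈ {x | τ < 2 * F x} from hx)]
      exact le_self_add
    · refine le_add_of_le_right ((ENNReal.le_div_iff_mul_le (by simp) (by simp)).2 ?_)
      rw [mul_comm]
      exact not_lt.1 hx
  have hhalf : τ * μ s / 2 + τ * μ s / 2 ≤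
      ∫⁻ x in s, {x | τ < 2 * F x}.indicator F x ∂μ + τ * μ s / 2 := by
    rw [ENNReal.add_halves]
    refine h.trans ((lintegral_mono hsplit).trans_eq ?_)
    rw [lintegral_add_right _ measurable_const, setLIntegral_const, ENNReal.mul_div_right_comm]
  rw [mul_comm 2, ← ENNReal.div_le_iff (by simp) (by simp)]
  exact ENNReal.le_of_add_le_add_right (by finiteness) hhalf

end LayerCake

section MaximalFunction

variable {E : Type*} [NormedAddCommGroup E] [MeasureSpace E]

/-- The uncentred Hardy–Littlewood maximal function, over open balls. -/
def maximalFunction (F : E → ℝ≥0∞) (x : E) : ℝ≥0∞ :=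
  ⨆ (a : E × ℝ) (_ : x ∈ ball a.1 a.2), ⨍⁻ z in ball a.1 a.2, F z ∂volume

variable {F : E → ℝ≥0∞}

lemma setOf_lt_maximalFunction (τ : ℝ≥0∞) : {x | τ < maximalFunction F x} =
    ⋃ a ∈ {a : E × ℝ | τ < ⨍⁻ z in ball a.1 a.2, F z ∂volume}, ball a.1 a.2 := by
  ext x
  simp [maximalFunction, lt_iSup_iff, and_comm]

variable [BorelSpace E]

lemma measurable_maximalFunction : Measurable (maximalFunction F) := by
  refine measurable_of_Ioi fun τ => ?_
  change MeasurableSet {x | τ < maximalFunction F x}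
  rw [setOf_lt_maximalFunction]
  exact (isOpen_biUnion fun a _ => isOpen_ball).measurableSet

variable [NormedSpace ℝ E] [FiniteDimensional ℝ E] [(volume : Measure E).IsAddHaarMeasure]

lemma hasAverageBound_maximalFunction (j : ℕ) (x : E) : HasAverageBound F j x
    (maximalFunction F x * (ENNReal.ofReal (3 ^ Module.finrank ℝ E) *
      volume (ball (0 : E) 1))) := by
  intro ρ hρ
  have hρ0 : 0 < ρ := lt_of_lt_of_le (by positivity) hρ
  have hpos : 0 < volume (ball x (3 * ρ)) := measure_ball_pos _ _ (by positivity)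
  have haverage : ⨍⁻ z in ball x (3 * ρ), F z ∂volume ≤ maximalFunction F x :=
    le_iSup₂_of_le (x, 3 * ρ) (mem_ball_self (by positivity)) le_rfl
  rw [setLAverage_eq, ENNReal.div_le_iff hpos.ne' measure_ball_lt_top.ne,
    Measure.addHaar_ball_of_pos _ _ (by positivity), mul_pow,
    ENNReal.ofReal_mul (by positivity)] at haverage
  exact haverage.trans_eq (by ring)

lemma exists_radius_le_of_volume_ball_le [Nontrivial E] {M : ℝ≥0∞} (hM : M ≠ ⊤) :
    ∃ R : ℝ, ∀ (c : E) (r : ℝ), volume (ball c r) ≤ M → r ≤ R := by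
  have hpos : 0 < (volume (ball (0 : E) 1)).toReal :=
    ENNReal.toReal_pos (measure_ball_pos _ _ one_pos).ne' measure_ball_lt_top.ne
  refine ⟨max 1 (M.toReal / (volume (ball (0 : E) 1)).toReal), fun c r hr => le_max_iff.2 ?_⟩
  refine (le_total r 1).imp_right fun hr1 => ?_
  rw [Measure.addHaar_ball _ _ (zero_le_one.trans hr1)] at hr
  have hreal := ENNReal.toReal_mono hM hr
  rw [ENNReal.toReal_mul, ENNReal.toReal_ofReal (by positivity)] at hreal
  exact (le_self_pow₀ hr1 Module.finrank_pos.ne').trans ((le_div_iff₀ hpos).2 hreal)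

lemma volume_closedBall_five_mul {r : ℝ} (hr : 0 < r) (c : E) :
    volume (closedBall c (5 * r)) = 5 ^ Module.finrank ℝ E * volume (ball c r) := by
  rw [Measure.addHaar_closedBall _ _ (by positivity), Measure.addHaar_ball_of_pos _ _ hr, mul_pow,
    ENNReal.ofReal_mul (by positivity), ENNReal.ofReal_pow (by norm_num), ENNReal.ofReal_ofNat,
    mul_assoc]

lemma mul_volume_biUnion_ball_le {S : Set (E × ℝ)} {R : ℝ} (hR : ∀ a ∈ S, a.2 ≤ R) {τ : ℝ≥0∞}
    (hpos : ∀ a ∈ S, 0 < a.2)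
    (hτ : ∀ a ∈ S, τ * volume (ball a.1 a.2) ≤ 2 * ∫⁻ z in ball a.1 a.2, F z) :
    τ * volume (⋃ a ∈ S, ball a.1 a.2) ≤ 2 * 5 ^ Module.finrank ℝ E * ∫⁻ z, F z := by
  obtain ⟨u, huS, hdisj, hcover⟩ :=
    Vitali.exists_disjoint_subfamily_covering_enlargement_closedBall S Prod.fst Prod.snd R hR 5
      (by norm_num)
  have hball : u.PairwiseDisjoint fun a => ball a.1 a.2 :=
    hdisj.mono fun a => ball_subset_closedBall
  have hu : u.Countable := hball.countable_of_isOpen (fun _ _ => isOpen_ball)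
    fun a ha => nonempty_ball.2 (hpos a (huS ha))
  have hsub : ⋃ a ∈ S, ball a.1 a.2 ⊆ ⋃ a ∈ u, closedBall a.1 (5 * a.2) :=
    iUnion₂_subset fun a ha => by
      obtain ⟨b, hb, hab⟩ := hcover a ha
      exact (ball_subset_closedBall.trans hab).trans (subset_iUnion₂_of_subset b hb Subset.rfl)
  calc τ * volume (⋃ a ∈ S, ball a.1 a.2)
      ≤ τ * ∑' a : u, volume (closedBall a.1.1 (5 * a.1.2)) := by
        gcongr
        exact (measure_mono hsub).trans (measure_biUnion_le _ hu _)
    _ = ∑' a : u, 5 ^ Module.finrank ℝ E * (τ * volume (ball a.1.1 a.1.2)) := by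
        rw [← ENNReal.tsum_mul_left]
        refine tsum_congr fun a => ?_
        rw [volume_closedBall_five_mul (hpos a (huS a.2))]
        ring
    _ ≤ ∑' a : u, 5 ^ Module.finrank ℝ E * (2 * ∫⁻ z in ball a.1.1 a.1.2, F z) := by
        exact ENNReal.tsum_le_tsum fun a => mul_le_mul_right (hτ a (huS a.2)) _
    _ = 2 * 5 ^ Module.finrank ℝ E * ∫⁻ z in ⋃ a ∈ u, ball a.1 a.2, F z := by
        rw [lintegral_biUnion hu (fun _ _ => measurableSet_ball) hball, ENNReal.tsum_mul_left,
          ENNReal.tsum_mul_left]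
        ring
    _ ≤ _ := by
        gcongr
        exact Measure.restrict_le_self

variable [Nontrivial E]

lemma mul_volume_lt_maximalFunction_le (hF : Measurable F) {τ : ℝ≥0∞} (hτ0 : τ ≠ 0)
    (hτ : τ ≠ ⊤) : τ * volume {x | τ < maximalFunction F x} ≤
      2 * 5 ^ Module.finrank ℝ E * ∫⁻ z in {z | τ < 2 * F z}, F z := by
  have hT : MeasurableSet {z | τ < 2 * F z} := measurableSet_lt measurable_const (hF.const_mul 2)
  rw [← lintegral_indicator hT]
  set T := {z | τ < 2 * F z}.indicator F
  rcases eq_or_ne (∫⁻ z, T z) ⊤ with hfin | hfin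
  · simp [hfin]
  set S := {a : E × ℝ | τ < ⨍⁻ z in ball a.1 a.2, F z ∂volume}
  have hbound (a) (ha : a ∈ S) :
      τ * volume (ball a.1 a.2) ≤ 2 * ∫⁻ z in ball a.1 a.2, T z := by
    refine mul_measure_le_two_mul_setLIntegral hF measure_ball_lt_top.ne hτ ?_
    exact (ENNReal.mul_lt_of_lt_div (setLAverage_eq volume F _ ▸ ha)).le
  obtain ⟨R, hR⟩ := exists_radius_le_of_volume_ball_le (E := E)
    (M := 2 * (∫⁻ z, T z) / τ) (ENNReal.div_ne_top (by finiteness) hτ0)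
  have hradius (a) (ha : a ∈ S) : a.2 ≤ R := by
    refine hR a.1 a.2 ((ENNReal.le_div_iff_mul_le (.inl hτ0) (.inl hτ)).2 ?_)
    rw [mul_comm]
    refine (hbound a ha).trans ?_
    gcongr
    exact Measure.restrict_le_self
  rw [setOf_lt_maximalFunction]
  refine mul_volume_biUnion_ball_le hradius (fun a ha => ?_) hbound
  by_contra hneg
  simp [S, ball_eq_empty.2 (not_lt.1 hneg)] at ha

lemma lintegral_maximalFunction_rpow_le (hF : Measurable F) {q : ℝ} (hq : 1 < q) :
    ∫⁻ x, maximalFunction F x ^ q ≤ ENNReal.ofReal (q / (q - 1)) *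
      (2 * 5 ^ Module.finrank ℝ E * 2 ^ (q - 1)) * ∫⁻ x, F x ^ q := by
  have hq0 : 0 < q := by linarith
  have hq1 : 0 < q - 1 := by linarith
  set D : ℝ≥0∞ := 2 * 5 ^ Module.finrank ℝ E
  have hD : D ≠ ⊤ := by finiteness
  set ν : Measure E := volume.withDensity F
  have hweak (t : ℝ) (ht : 0 < t) : ENNReal.ofReal (q * t ^ (q - 1)) *
      volume {x | ENNReal.ofReal t < maximalFunction F x} ≤ ENNReal.ofReal (q / (q - 1)) * D *
        (ENNReal.ofReal ((q - 1) * t ^ (q - 1 - 1)) * ν {x | ENNReal.ofReal t < 2 * F x}) := by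
    have hfactor : q * t ^ (q - 1) = q / (q - 1) * ((q - 1) * t ^ (q - 1 - 1)) * t := by
      rw [Real.rpow_sub_one ht.ne' (q - 1)]
      field_simp
    have hlevel := mul_volume_lt_maximalFunction_le hF (ENNReal.ofReal_pos.2 ht).ne'
      ENNReal.ofReal_ne_top
    rw [← withDensity_apply F (measurableSet_lt measurable_const (hF.const_mul 2))] at hlevel
    rw [hfactor, ENNReal.ofReal_mul' ht.le, ENNReal.ofReal_mul (by positivity), mul_assoc]
    refine (mul_le_mul_right hlevel _).trans_eq ?_
    ring
  calc ∫⁻ x, maximalFunction F x ^ q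
      ≤ ∫⁻ t in Ioi (0 : ℝ), ENNReal.ofReal (q / (q - 1)) * D *
          (ENNReal.ofReal ((q - 1) * t ^ (q - 1 - 1)) * ν {x | ENNReal.ofReal t < 2 * F x}) := by
        rw [lintegral_rpow_eq_lintegral_measure_lt hq0 measurable_maximalFunction]
        exact setLIntegral_mono' measurableSet_Ioi hweak
    _ = ENNReal.ofReal (q / (q - 1)) * D * ∫⁻ x, (2 * F x) ^ (q - 1) ∂ν := by
        rw [lintegral_const_mul' _ _ (by finiteness),
          lintegral_rpow_eq_lintegral_measure_lt hq1 (hF.const_mul 2)]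
    _ = ENNReal.ofReal (q / (q - 1)) * D * ∫⁻ x, 2 ^ (q - 1) * F x ^ q := by
        rw [lintegral_withDensity_eq_lintegral_mul _ hF ((hF.const_mul 2).pow_const _)]
        congr 2 with x
        rw [Pi.mul_apply, ENNReal.mul_rpow_of_nonneg _ _ hq1.le, mul_left_comm]
        nth_rw 1 [← ENNReal.rpow_one (F x)]
        rw [← ENNReal.rpow_add_of_nonneg _ _ zero_le_one hq1.le, add_sub_cancel]
    _ = _ := by
        rw [lintegral_const_mul _ (hF.pow_const q)]
        ring

end MaximalFunction

/-! ### Non-tangential bounds -/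

section Nontangential

variable {E : Type*} [NormedAddCommGroup E] [NormedSpace ℝ E]
  {G : Type*} [NormedAddCommGroup G] [NormedSpace ℝ G]

/-- `N x` bounds the values of `g * Ψ_j` and `g * Ψ_{j+1}` at distance at most `2 * 2^{-j}` from
`x`, for every `j`. -/
def IsNontangentialBound (g : 𝓢(E, ℝ) →L[ℝ] G) (Ψ : ℕ → 𝓢(E, ℝ)) (N : E → ℝ≥0∞) : Prop :=
  ∀ j l x y, l ≤ 1 → ‖x - y‖ ≤ 2 / 2 ^ j → ‖g (reflTranslate y (Ψ (j + l)))‖ₑ ≤ N x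

variable [MeasureSpace E] [BorelSpace E] [FiniteDimensional ℝ E]
  [(volume : Measure E).IsAddHaarMeasure] {Ψ : ℕ → 𝓢(E, ℝ)} {B p : ℝ}

lemma IsDyadicMollifier.exists_isNontangentialBound [CompleteSpace G] [Nontrivial E]
    (h : IsDyadicMollifier Ψ B) (g : 𝓢(E, ℝ) →L[ℝ] G) (hp : 0 < p)
    (hg : ∫⁻ x, verticalMax g Ψ x ^ p ≠ ⊤) :
    ∃ N, Measurable N ∧ ∫⁻ x, N x ^ p ≠ ⊤ ∧ IsNontangentialBound g Ψ N := by
  obtain ⟨r, hr0, hr⟩ := exists_between (lt_min hp one_pos)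
  have hr1 : r ≤ 1 := hr.le.trans (min_le_right p 1)
  have hq : 1 < p / r := (one_lt_div hr0).2 (hr.trans_le (min_le_left p 1))
  obtain ⟨K, hK, hbound⟩ := h.exists_enorm_clm_reflTranslate_rpow_le g hr0 hr1
  set F : E → ℝ≥0∞ := fun z => verticalMax g Ψ z ^ r
  have hF : Measurable F := (measurable_verticalMax g Ψ).pow_const r
  set c := K * (ENNReal.ofReal (3 ^ Module.finrank ℝ E) * volume (ball (0 : E) 1))
  have hc : c ≠ ⊤ := ENNReal.mul_ne_top hK (ENNReal.mul_ne_top ENNReal.ofReal_ne_top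
    measure_ball_lt_top.ne)
  refine ⟨fun x => (c * maximalFunction F x) ^ r⁻¹,
    (measurable_maximalFunction.const_mul c).pow_const _, ?_, fun j l x y hl hy => ?_⟩
  · have hFp : ∫⁻ x, F x ^ (p / r) ≠ ⊤ := by
      simpa only [F, ← ENNReal.rpow_mul, mul_div_cancel₀ p hr0.ne'] using hg
    simp_rw [← ENNReal.rpow_mul, inv_mul_eq_div,
      ENNReal.mul_rpow_of_nonneg _ _ (zero_le_one.trans hq.le)]
    rw [lintegral_const_mul _ (measurable_maximalFunction.pow_const _)]
    refine ENNReal.mul_ne_top (ENNReal.rpow_ne_top_of_nonneg (by positivity) hc)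
      (ne_top_of_le_ne_top ?_ (lintegral_maximalFunction_rpow_le hF hq))
    have h2 : (2 : ℝ≥0∞) ^ (p / r - 1) ≠ ⊤ := by simp
    finiteness
  · rw [ENNReal.le_rpow_inv_iff hr0]
    exact (hbound j x _ (hasAverageBound_maximalFunction j x) l y hl hy).trans_eq (by ring)

-- Chebyshev on the ball of radius `2^{-j}` around `y`, where `N` exceeds the value at `y`.
lemma IsNontangentialBound.exists_enorm_clm_reflTranslate_le {g : 𝓢(E, ℝ) →L[ℝ] G}
    {N : E → ℝ≥0∞} (h : IsNontangentialBound g Ψ N) (hp : 0 < p) (hN : ∫⁻ x, N x ^ p ≠ ⊤) :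
    ∃ K : ℝ≥0∞, K ≠ ⊤ ∧ ∀ j l y, l ≤ 1 → ‖g (reflTranslate y (Ψ (j + l)))‖ₑ ≤
      K * (2 ^ j) ^ (Module.finrank ℝ E / p) := by
  set n := Module.finrank ℝ E
  set I := ∫⁻ x, N x ^ p
  set v := volume (ball (0 : E) 1)
  have hv0 : v ≠ 0 := (measure_ball_pos _ _ one_pos).ne'
  have hv : v ≠ ⊤ := measure_ball_lt_top.ne
  refine ⟨(I / v) ^ p⁻¹, ENNReal.rpow_ne_top_of_nonneg (by positivity)
    (ENNReal.div_ne_top hN hv0), fun j l y hl => ?_⟩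
  set a := ‖g (reflTranslate y (Ψ (j + l)))‖ₑ
  have hball : volume (ball y ((2 : ℝ) ^ j)⁻¹) = ((2 : ℝ≥0∞) ^ (j * n))⁻¹ * v := by
    rw [Measure.addHaar_ball_of_pos _ _ (by positivity), ← inv_pow, ← pow_mul, inv_pow,
      ofReal_inv_two_pow, ENNReal.inv_pow]
  have hmass : a ^ p * (((2 : ℝ≥0∞) ^ (j * n))⁻¹ * v) ≤ I :=
    calc a ^ p * (((2 : ℝ≥0∞) ^ (j * n))⁻¹ * v)
        = ∫⁻ _ in ball y ((2 : ℝ) ^ j)⁻¹, a ^ p := by rw [setLIntegral_const, hball]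
      _ ≤ ∫⁻ x in ball y ((2 : ℝ) ^ j)⁻¹, N x ^ p := by
          refine setLIntegral_mono' measurableSet_ball fun x hx => ?_
          rw [mem_ball, dist_eq_norm] at hx
          gcongr
          refine h j l x y hl (hx.le.trans ?_)
          rw [div_eq_mul_inv]
          exact le_mul_of_one_le_left (by positivity) one_le_two
      _ ≤ I := setLIntegral_le_lintegral _ _
  have hap : a ^ p ≤ I / v * 2 ^ (j * n) := by
    rw [mul_left_comm, mul_comm, ← div_eq_mul_inv,
      ENNReal.div_le_iff (by simp) (by finiteness)] at hmass
    rw [ENNReal.mul_comm_div, mul_div_assoc', mul_comm,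
      ENNReal.le_div_iff_mul_le (.inl hv0) (.inl hv)]
    exact hmass.trans_eq (mul_comm _ _)
  calc a = (a ^ p) ^ p⁻¹ := (ENNReal.rpow_rpow_inv hp.ne' a).symm
    _ ≤ (I / v * 2 ^ (j * n)) ^ p⁻¹ := by gcongr
    _ = (I / v) ^ p⁻¹ * (2 ^ j) ^ (n / p) := by
        rw [ENNReal.mul_rpow_of_nonneg _ _ (by positivity), pow_mul, ← ENNReal.rpow_natCast,
          ← ENNReal.rpow_mul, div_eq_mul_inv (n : ℝ)]

end Nontangential

/-! ### Dyadic sums -/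

section DyadicSum

lemma inv_two_pow_mul_two_pow (j : ℕ) : (2⁻¹ : ℝ≥0∞) ^ j * 2 ^ j = 1 := by
  rw [← mul_pow, ENNReal.inv_mul_cancel two_ne_zero ofNat_ne_top, one_pow]

lemma two_pow_rpow_eq_ofReal (j : ℕ) (q : ℝ) :
    ((2 : ℝ≥0∞) ^ j) ^ q = ENNReal.ofReal ((2 ^ q) ^ j) := by
  rw [ENNReal.ofReal_pow (by positivity), ← ENNReal.ofReal_rpow_of_pos two_pos,
    ENNReal.ofReal_ofNat, ← ENNReal.rpow_natCast, ← ENNReal.rpow_natCast, ← ENNReal.rpow_mul,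
    ← ENNReal.rpow_mul, mul_comm]

lemma inv_two_pow_mul_two_pow_rpow (j : ℕ) (q : ℝ) :
    (2⁻¹ : ℝ≥0∞) ^ j * (2 ^ j) ^ q = (2 ^ j) ^ (q - 1) := by
  have hsplit : ((2 : ℝ≥0∞) ^ j) ^ q = 2 ^ j * (2 ^ j) ^ (q - 1) := by
    nth_rw 2 [← ENNReal.rpow_one ((2 : ℝ≥0∞) ^ j)]
    rw [← ENNReal.rpow_add _ _ (by simp) (by finiteness), add_sub_cancel]
  rw [hsplit, ← mul_assoc, inv_two_pow_mul_two_pow, one_mul]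

lemma geom_sum_succ_le_mul_pow {b : ℝ} (hb : 1 < b) (J : ℕ) :
    ∑ j ∈ Finset.range (J + 1), b ^ j ≤ b / (b - 1) * b ^ J := by
  have : 0 < b - 1 := sub_pos.2 hb
  rw [geom_sum_eq hb.ne', div_mul_eq_mul_div, ← pow_succ']
  gcongr
  linarith

lemma exists_two_pow_le_lt {T : ℝ≥0∞} (h1 : 1 ≤ T) (hT : T ≠ ⊤) :
    ∃ J : ℕ, 2 ^ J ≤ T ∧ T < 2 ^ (J + 1) := by
  lift T to ℝ≥0 using hT
  exact_mod_cast exists_nat_pow_near (by exact_mod_cast h1 : 1 ≤ T) one_lt_two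

variable {N K : ℝ≥0∞} {M : ℕ → ℝ≥0∞} {q : ℝ}

lemma tsum_inv_two_pow_mul_min_le : ∑' j : ℕ, 2⁻¹ ^ j * min N (M j) ≤ 2 * N :=
  calc ∑' j : ℕ, 2⁻¹ ^ j * min N (M j) ≤ ∑' j : ℕ, 2⁻¹ ^ j * N :=
        ENNReal.tsum_le_tsum fun j => mul_le_mul_right (min_le_left _ _) _
    _ = 2 * N := by rw [ENNReal.tsum_mul_right, tsum_inv_two_pow]

lemma sum_inv_two_pow_mul_min_le (hq : 1 < q) (J : ℕ) :
    ∑ j ∈ Finset.range (J + 1), 2⁻¹ ^ j * min N (K * (2 ^ j) ^ q) ≤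
      K * ENNReal.ofReal (2 ^ (q - 1) / (2 ^ (q - 1) - 1)) * (2 ^ J) ^ (q - 1) := by
  set b : ℝ := 2 ^ (q - 1)
  have hb : 1 < b := Real.one_lt_rpow one_lt_two (by linarith)
  have : 0 < b - 1 := sub_pos.2 hb
  calc ∑ j ∈ Finset.range (J + 1), 2⁻¹ ^ j * min N (K * (2 ^ j) ^ q)
      ≤ ∑ j ∈ Finset.range (J + 1), K * ENNReal.ofReal (b ^ j) := by
        refine Finset.sum_le_sum fun j _ => ?_
        rw [← two_pow_rpow_eq_ofReal, ← inv_two_pow_mul_two_pow_rpow, mul_left_comm]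
        exact mul_le_mul_right (min_le_right _ _) _
    _ = K * ENNReal.ofReal (∑ j ∈ Finset.range (J + 1), b ^ j) := by
        rw [← Finset.mul_sum, ENNReal.ofReal_sum_of_nonneg fun j _ => by positivity]
    _ ≤ K * ENNReal.ofReal (b / (b - 1) * b ^ J) := by
        gcongr
        exact geom_sum_succ_le_mul_pow hb J
    _ = _ := by rw [two_pow_rpow_eq_ofReal, ENNReal.ofReal_mul (by positivity), mul_assoc]

lemma tsum_inv_two_pow_add_mul_min_le (J : ℕ) :
    ∑' j : ℕ, 2⁻¹ ^ (j + J) * min N (M j) ≤ 2 * (2⁻¹ ^ J * N) := by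
  simp_rw [pow_add, mul_assoc]
  calc ∑' j : ℕ, 2⁻¹ ^ j * (2⁻¹ ^ J * min N (M j))
      ≤ ∑' j : ℕ, 2⁻¹ ^ j * (2⁻¹ ^ J * N) :=
        ENNReal.tsum_le_tsum fun j => by gcongr; exact min_le_left _ _
    _ = 2 * (2⁻¹ ^ J * N) := by rw [ENNReal.tsum_mul_right, tsum_inv_two_pow]

-- The two terms of the minimum balance at `2 ^ j = N ^ (1 / q)`.
lemma exists_tsum_inv_two_pow_mul_min_le_rpow (hq : 1 < q) (hK : K ≠ ⊤) :
    ∃ C : ℝ≥0∞, C ≠ ⊤ ∧ ∀ N : ℝ≥0∞,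
      ∑' j : ℕ, 2⁻¹ ^ j * min N (K * (2 ^ j) ^ q) ≤ C * N ^ (1 - 1 / q) := by
  have hq0 : 0 < q := by linarith
  have hq1 : 0 < 1 - 1 / q := sub_pos.2 ((div_lt_one hq0).2 hq)
  set c := K * ENNReal.ofReal (2 ^ (q - 1) / (2 ^ (q - 1) - 1))
  refine ⟨c + 2, by finiteness, fun N => ?_⟩
  rcases le_or_gt N 1 with hN1 | hN1
  · calc ∑' j : ℕ, 2⁻¹ ^ j * min N (K * (2 ^ j) ^ q) ≤ 2 * N ^ (1 : ℝ) := by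
          rw [ENNReal.rpow_one]
          exact tsum_inv_two_pow_mul_min_le
      _ ≤ (c + 2) * N ^ (1 - 1 / q) :=
          mul_le_mul' le_add_self (ENNReal.rpow_le_rpow_of_exponent_ge hN1
            (sub_le_self _ (by positivity)))
  rcases eq_or_ne N ⊤ with rfl | hN
  · rw [ENNReal.top_rpow_of_pos hq1, ENNReal.mul_top (by simp)]
    exact le_top
  have hT : N ^ (1 / q) ≠ ⊤ := ENNReal.rpow_ne_top_of_nonneg (by positivity) hN
  obtain ⟨J, hJ, hJ'⟩ := exists_two_pow_le_lt (ENNReal.one_le_rpow hN1.le (by positivity)) hT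
  have hhead : ∑ j ∈ Finset.range (J + 1), 2⁻¹ ^ j * min N (K * (2 ^ j) ^ q) ≤
      c * N ^ (1 - 1 / q) :=
    calc _ ≤ c * (N ^ (1 / q)) ^ (q - 1) :=
          (sum_inv_two_pow_mul_min_le hq J).trans
            (mul_le_mul_right (ENNReal.rpow_le_rpow hJ (by linarith)) _)
      _ = c * N ^ (1 - 1 / q) := by rw [← ENNReal.rpow_mul]; congr 2; field_simp
  have htail : ∑' j : ℕ, 2⁻¹ ^ (j + (J + 1)) * min N (K * (2 ^ (j + (J + 1))) ^ q) ≤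
      2 * N ^ (1 - 1 / q) :=
    calc _ ≤ 2 * (2⁻¹ ^ (J + 1) * N) := tsum_inv_two_pow_add_mul_min_le (J + 1)
      _ = 2 * (2⁻¹ ^ (J + 1) * (N ^ (1 / q) * N ^ (1 - 1 / q))) := by
          rw [← ENNReal.rpow_add _ _ (zero_lt_one.trans hN1).ne' hN, add_sub_cancel,
            ENNReal.rpow_one]
      _ ≤ 2 * (2⁻¹ ^ (J + 1) * (2 ^ (J + 1) * N ^ (1 - 1 / q))) := by gcongr
      _ = 2 * N ^ (1 - 1 / q) := by rw [← mul_assoc (_ ^ _), inv_two_pow_mul_two_pow, one_mul]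
  rw [← Summable.sum_add_tsum_nat_add' (k := J + 1) ENNReal.summable, add_mul]
  exact add_le_add hhead htail

lemma exists_tsum_inv_two_pow_mul_min_le_rpow_div {n p s : ℝ} (hp : 0 < p) (hps : p ≤ s)
    (hs : s * (n - p) ≤ p * n) (hK : K ≠ ⊤) :
    ∃ C : ℝ≥0∞, C ≠ ⊤ ∧ ∀ N : ℝ≥0∞,
      ∑' j : ℕ, 2⁻¹ ^ j * min N (K * (2 ^ j) ^ (n / p)) ≤ C * N ^ (p / s) := by
  rcases hps.eq_or_lt with rfl | hlt
  · refine ⟨2, by finiteness, fun N => ?_⟩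
    rw [div_self hp.ne', ENNReal.rpow_one]
    exact tsum_inv_two_pow_mul_min_le
  have hs0 : 0 < s := hp.trans hlt
  have hsub : 0 < s - p := sub_pos.2 hlt
  obtain ⟨C, hC, hsum⟩ := exists_tsum_inv_two_pow_mul_min_le_rpow (q := s / (s - p))
    ((one_lt_div hsub).2 (by linarith)) hK
  refine ⟨C, hC, fun N => ?_⟩
  rw [show p / s = 1 - 1 / (s / (s - p)) by field_simp; ring]
  refine (ENNReal.tsum_le_tsum fun j => ?_).trans (hsum N)
  have hexp : n / p ≤ s / (s - p) := by
    rw [div_le_div_iff₀ hp hsub]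
    linarith
  gcongr (2⁻¹ ^ j * min N (K * ?_))
  exact ENNReal.rpow_le_rpow_of_exponent_le (one_le_pow₀ one_le_two) hexp

end DyadicSum

/-! ### Variation of the mollifications -/

section Variation

variable {E : Type*} [NormedAddCommGroup E] [NormedSpace ℝ E] [FiniteDimensional ℝ E]
  [MeasureSpace E] [BorelSpace E] [(volume : Measure E).IsAddHaarMeasure]

/-- The smooth function `f * Ψ_j * Ψ_j`. Mollifying twice lets consecutive scales be compared by
exchanging one factor at a time. -/
def doubleMollification (f : 𝓢(E, ℝ) →L[ℝ] ℝ) (Ψ : ℕ → 𝓢(E, ℝ)) (j : ℕ) (x : E) : ℝ :=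
  f (reflTranslate x (schwartzConv (Ψ j) (Ψ j)))

/-- The total variation over `j` of the sequence `(f * Ψ_j * Ψ_j)(x)`. -/
def mollificationVariation (f : 𝓢(E, ℝ) →L[ℝ] ℝ) (Ψ : ℕ → 𝓢(E, ℝ)) (x : E) : ℝ≥0∞ :=
  ∑' j, ‖doubleMollification f Ψ (j + 1) x - doubleMollification f Ψ j x‖ₑ

lemma continuous_doubleMollification (f : 𝓢(E, ℝ) →L[ℝ] ℝ) (Ψ : ℕ → 𝓢(E, ℝ)) (j : ℕ) :
    Continuous (doubleMollification f Ψ j) :=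
  continuous_clm_reflTranslate f _

lemma measurable_mollificationVariation (f : 𝓢(E, ℝ) →L[ℝ] ℝ) (Ψ : ℕ → 𝓢(E, ℝ)) :
    Measurable (mollificationVariation f Ψ) :=
  .tsum fun j => ((continuous_doubleMollification f Ψ (j + 1)).sub
    (continuous_doubleMollification f Ψ j)).enorm.measurable

namespace IsDyadicMollifier

variable {Ψ : ℕ → 𝓢(E, ℝ)} {B : ℝ}

lemma abs_doubleMollification_succ_sub_le (h : IsDyadicMollifier Ψ B) (f : 𝓢(E, ℝ) →L[ℝ] ℝ)
    {j : ℕ} {x : E} {A : ℝ}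
    (hA : ∀ l y, l ≤ 1 → ‖x - y‖ ≤ 2 / 2 ^ j →
      ‖distribGradient f (reflTranslate y (Ψ (j + l)))‖ ≤ A) :
    |doubleMollification f Ψ (j + 1) x - doubleMollification f Ψ j x| ≤
      4 * B * ((2 ^ j)⁻¹ * A) := by
  have hA0 : 0 ≤ A :=
    (norm_nonneg _).trans (hA 0 x zero_le_one (by rw [sub_self, norm_zero]; positivity))
  have hexchange (i l : ℕ) (hl : l ≤ 1) :
      |f (reflTranslate x (schwartzConv (Ψ (j + i)) (Ψ (j + l)))) -
        f (reflTranslate x (Ψ (j + l)))| ≤ B * (A * ((2 : ℝ) ^ j)⁻¹) := by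
    refine (abs_clm_reflTranslate_schwartzConv_sub_le (δ := (2 ^ j)⁻¹)
      (h.integral_eq_one (j + i)) (fun y hy => h.eq_zero _ y (le_trans ?_ hy))
      fun y hy => hA l y hl (hy.trans ?_)).trans ?_
    · gcongr
      exacts [one_le_two, Nat.le_add_right j i]
    · rw [div_eq_mul_inv]
      exact le_mul_of_one_le_left (by positivity) one_le_two
    · gcongr
      exact h.integral_norm_le _
  have h11 := abs_le.1 (hexchange 1 1 le_rfl)
  have h01 := abs_le.1 (hexchange 0 1 le_rfl)
  have h10 := abs_le.1 (hexchange 1 0 zero_le_one)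
  have h00 := abs_le.1 (hexchange 0 0 zero_le_one)
  rw [schwartzConv_comm] at h01
  rw [add_zero] at h01 h10 h00
  rw [doubleMollification, doubleMollification, abs_le]
  constructor <;> linarith

lemma enorm_doubleMollification_succ_sub_le (h : IsDyadicMollifier Ψ B) (f : 𝓢(E, ℝ) →L[ℝ] ℝ)
    {j : ℕ} {x : E} {A : ℝ≥0∞} (hAtop : A ≠ ⊤)
    (hA : ∀ l y, l ≤ 1 → ‖x - y‖ ≤ 2 / 2 ^ j →
      ‖distribGradient f (reflTranslate y (Ψ (j + l)))‖ₑ ≤ A) :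
    ‖doubleMollification f Ψ (j + 1) x - doubleMollification f Ψ j x‖ₑ ≤
      ENNReal.ofReal (4 * B) * (2⁻¹ ^ j * A) := by
  have hB := h.nonneg
  rw [← ofReal_norm, Real.norm_eq_abs, ← ofReal_inv_two_pow, ← ENNReal.ofReal_toReal hAtop,
    ← ENNReal.ofReal_mul (by positivity), ← ENNReal.ofReal_mul (by positivity)]
  refine ENNReal.ofReal_le_ofReal (h.abs_doubleMollification_succ_sub_le f fun l y hl hy => ?_)
  rw [← toReal_enorm]
  exact ENNReal.toReal_mono hAtop (hA l y hl hy)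

lemma lintegral_mollificationVariation_rpow_ne_top [Nontrivial E] (h : IsDyadicMollifier Ψ B)
    (f : 𝓢(E, ℝ) →L[ℝ] ℝ) {p s : ℝ} (hp : 0 < p) (hps : p ≤ s)
    (hs : s * (Module.finrank ℝ E - p) ≤ p * Module.finrank ℝ E)
    (hf : ∫⁻ x, verticalMax (distribGradient f) Ψ x ^ p ≠ ⊤) :
    ∫⁻ x, mollificationVariation f Ψ x ^ s ≠ ⊤ := by
  have hs0 : 0 < s := hp.trans_le hps
  obtain ⟨N, hN, hNp, hbound⟩ := h.exists_isNontangentialBound (distribGradient f) hp hf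
  obtain ⟨K, hK, hunif⟩ := hbound.exists_enorm_clm_reflTranslate_le hp hNp
  obtain ⟨C, hC, hsum⟩ := exists_tsum_inv_two_pow_mul_min_le_rpow_div hp hps hs hK
  set c := ENNReal.ofReal (4 * B)
  have hpointwise (x : E) : mollificationVariation f Ψ x ≤ c * C * N x ^ (p / s) :=
    calc mollificationVariation f Ψ x
        ≤ ∑' j : ℕ, c * (2⁻¹ ^ j * min (N x) (K * (2 ^ j) ^ (Module.finrank ℝ E / p))) := by
          refine ENNReal.tsum_le_tsum fun j => h.enorm_doubleMollification_succ_sub_le f ?_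
            fun l y hl hy => le_min (hbound j l x y hl hy) (hunif j l y hl)
          exact ne_top_of_le_ne_top (ENNReal.mul_ne_top hK (ENNReal.rpow_ne_top_of_nonneg
            (by positivity) (by finiteness))) (min_le_right _ _)
      _ ≤ c * C * N x ^ (p / s) := by
          rw [ENNReal.tsum_mul_left, mul_assoc]
          exact mul_le_mul_right (hsum _) _
  have hpow (x : E) : mollificationVariation f Ψ x ^ s ≤ (c * C) ^ s * N x ^ p := by
    refine (ENNReal.rpow_le_rpow (hpointwise x) hs0.le).trans_eq ?_
    rw [ENNReal.mul_rpow_of_nonneg _ _ hs0.le, ← ENNReal.rpow_mul, div_mul_cancel₀ _ hs0.ne']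
  refine ne_top_of_le_ne_top ?_ (lintegral_mono hpow)
  rw [lintegral_const_mul _ (hN.pow_const p)]
  exact ENNReal.mul_ne_top (ENNReal.rpow_ne_top_of_nonneg hs0.le (by finiteness)) hNp

end IsDyadicMollifier

end Variation

/-! ### Convergence of the mollifications -/

section Convergence

variable {E : Type*} [NormedAddCommGroup E] [NormedSpace ℝ E] [FiniteDimensional ℝ E]
  [MeasureSpace E] [BorelSpace E] [(volume : Measure E).IsAddHaarMeasure]

lemma integral_schwartzConv (χ φ : 𝓢(E, ℝ)) :
    ∫ z, schwartzConv χ φ z = (∫ y, χ y) * ∫ y, φ y := by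
  simpa [convolution_def, schwartzConv_apply] using integral_convolution
    (μ := (volume : Measure E)) (ν := volume) (.mul ℝ ℝ) χ.integrable φ.integrable

lemma integral_norm_schwartzConv_le (χ φ : 𝓢(E, ℝ)) :
    ∫ z, ‖schwartzConv χ φ z‖ ≤ (∫ y, ‖χ y‖) * ∫ y, ‖φ y‖ := by
  have hint := χ.integrable.norm.integrable_convolution (μ := (volume : Measure E)) (.mul ℝ ℝ)
    φ.integrable.norm
  have hconv := integral_convolution (μ := (volume : Measure E)) (ν := volume) (.mul ℝ ℝ)
    χ.integrable.norm φ.integrable.norm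
  rw [ContinuousLinearMap.mul_apply'] at hconv
  rw [← hconv]
  refine integral_mono (schwartzConv χ φ).integrable.norm hint fun z => ?_
  simp only [convolution_def, ContinuousLinearMap.mul_apply', schwartzConv_apply, ← norm_mul]
  exact norm_integral_le_integral_norm _

lemma tendsto_schwartzConv_of_tendsto_zero {χ : ℕ → 𝓢(E, ℝ)} {δ : ℕ → ℝ} {B : ℝ}
    (hδ : Tendsto δ atTop (𝓝 0)) (hχ : ∀ j, ∫ y, χ j y = 1)
    (hsupp : ∀ j y, δ j ≤ ‖y‖ → χ j y = 0) (hB : ∀ j, ∫ y, ‖χ j y‖ ≤ B) (φ : 𝓢(E, ℝ)) :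
    Tendsto (fun j => schwartzConv (χ j) φ) atTop (𝓝 φ) := by
  refine ((schwartz_withSeminorms ℝ E ℝ).tendsto_nhds _ φ).2 fun ⟨k, m⟩ ε hε => ?_
  obtain ⟨c, hc⟩ := exists_hasDecay k (m + 1) φ
  have hc0 := hc.nonneg
  have hlim : Tendsto (fun j => 2 ^ k * (|δ j| * B) * c) atTop (𝓝 0) := by
    simpa using (((hδ.abs).mul_const B).const_mul (2 ^ k)).mul_const c
  filter_upwards [hlim.eventually_lt_const hε, hδ.eventually_le_const one_pos] with j hjε hj1
  calc SchwartzMap.seminorm ℝ k m (schwartzConv (χ j) φ - φ)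
      = SchwartzMap.seminorm ℝ k m (φ - schwartzConv (χ j) φ) := map_sub_rev _ _ _
    _ ≤ 2 ^ k * δ j * (∫ y, ‖χ j y‖) * c :=
        (hc.sub_schwartzConv (hχ j) hj1 (hsupp j)).seminorm_le
    _ ≤ 2 ^ k * (|δ j| * B) * c := by
        rw [mul_assoc (2 ^ k)]
        gcongr
        exacts [le_abs_self _, hB j]
    _ < ε := hjε

lemma edist_doubleMollification_le_mollificationVariation (f : 𝓢(E, ℝ) →L[ℝ] ℝ)
    (Ψ : ℕ → 𝓢(E, ℝ)) (j : ℕ) (x : E) :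
    edist (doubleMollification f Ψ 0 x) (doubleMollification f Ψ j x) ≤
      mollificationVariation f Ψ x := by
  refine (edist_le_range_sum_edist (fun j => doubleMollification f Ψ j x) j).trans
    ((Finset.sum_le_sum fun i _ => ?_).trans (ENNReal.sum_le_tsum (Finset.range j)))
  rw [edist_comm, edist_eq_enorm_sub]

lemma enorm_doubleMollification_le (f : 𝓢(E, ℝ) →L[ℝ] ℝ) (Ψ : ℕ → 𝓢(E, ℝ)) (j : ℕ) (x : E) :
    ‖doubleMollification f Ψ j x‖ₑ ≤
      ‖doubleMollification f Ψ 0 x‖ₑ + mollificationVariation f Ψ x :=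
  calc ‖doubleMollification f Ψ j x‖ₑ
      = ‖doubleMollification f Ψ 0 x + (doubleMollification f Ψ j x -
          doubleMollification f Ψ 0 x)‖ₑ := by rw [add_sub_cancel]
    _ ≤ _ := (enorm_add_le _ _).trans (add_le_add_right ((edist_eq_enorm_sub _ _).symm.trans_le
        ((edist_comm _ _).trans_le
          (edist_doubleMollification_le_mollificationVariation f Ψ j x))) _)

lemma exists_measurable_tendsto_doubleMollification {f : 𝓢(E, ℝ) →L[ℝ] ℝ} {Ψ : ℕ → 𝓢(E, ℝ)}
    (hV : ∀ᵐ x, mollificationVariation f Ψ x < ⊤) :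
    ∃ h : E → ℝ, Measurable h ∧
      ∀ᵐ x, Tendsto (fun j => doubleMollification f Ψ j x) atTop (𝓝 (h x)) := by
  refine measurable_limit_of_tendsto_metrizable_ae
    (fun j => (continuous_doubleMollification f Ψ j).measurable.aemeasurable) ?_
  filter_upwards [hV] with x hx
  refine cauchySeq_tendsto_of_complete (cauchySeq_of_edist_le_of_tsum_ne_top
    (fun j => ‖doubleMollification f Ψ (j + 1) x - doubleMollification f Ψ j x‖ₑ) (fun j => ?_)
    hx.ne)
  rw [edist_comm, edist_eq_enorm_sub]

lemma integrable_mul_clm_reflTranslate (f : 𝓢(E, ℝ) →L[ℝ] ℝ) (χ φ : 𝓢(E, ℝ)) :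
    Integrable fun x => χ x * f (reflTranslate x φ) := by
  simpa [reflTranslate_apply] using
    (integrable_smul_clm_reflTranslate f (reflTranslate 0 χ) φ 0).comp_neg

lemma IsDyadicMollifier.tendsto_integral_mul_doubleMollification {Ψ : ℕ → 𝓢(E, ℝ)} {B : ℝ}
    (h : IsDyadicMollifier Ψ B) (f : 𝓢(E, ℝ) →L[ℝ] ℝ) (φ : 𝓢(E, ℝ)) :
    Tendsto (fun j => ∫ x, φ x * doubleMollification f Ψ j x) atTop (𝓝 (f φ)) := by
  have hpairing (j : ℕ) : ∫ x, φ x * doubleMollification f Ψ j x =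
      f (schwartzConv (reflTranslate 0 (schwartzConv (Ψ j) (Ψ j))) φ) := by
    rw [schwartzConv_comm, clm_schwartzConv_reflTranslate_zero]
    rfl
  simp_rw [hpairing]
  refine (f.continuous.tendsto φ).comp (tendsto_schwartzConv_of_tendsto_zero
    (δ := fun j => ((2 : ℝ) ^ j)⁻¹ + (2 ^ j)⁻¹) (B := B * B) ?_ (fun j => ?_) (fun j y hy => ?_)
    (fun j => ?_) φ)
  · have hinv : Tendsto (fun j : ℕ => ((2 : ℝ) ^ j)⁻¹) atTop (𝓝 0) :=
      (tendsto_pow_atTop_atTop_of_one_lt (one_lt_two (α := ℝ))).inv_tendsto_atTop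
    simpa using hinv.add hinv
  · simp_rw [reflTranslate_apply, zero_sub]
    rw [integral_neg_eq_self (fun y => schwartzConv (Ψ j) (Ψ j) y), integral_schwartzConv,
      h.integral_eq_one, one_mul]
  · rw [reflTranslate_apply, zero_sub]
    exact schwartzConv_eq_zero_of_le_norm (h.eq_zero j) (h.eq_zero j) (by rwa [norm_neg])
  · simp_rw [reflTranslate_apply, zero_sub]
    rw [integral_neg_eq_self (fun y => ‖schwartzConv (Ψ j) (Ψ j) y‖)]
    exact (integral_norm_schwartzConv_le _ _).trans (mul_le_mul (h.integral_norm_le j)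
      (h.integral_norm_le j) (integral_nonneg fun _ => norm_nonneg _) h.nonneg)

end Convergence

/-! ### The limit represents the distribution -/

section Representation

lemma locallyIntegrable_of_setLIntegral_ball_ne_top {X G : Type*} [PseudoMetricSpace X]
    [MeasurableSpace X] {μ : Measure X} [NormedAddCommGroup G] {h : X → G}
    (hm : AEStronglyMeasurable h μ) (hball : ∀ x₀ r, ∫⁻ y in ball x₀ r, ‖h y‖ₑ ∂μ ≠ ⊤) :
    LocallyIntegrable h μ := fun x =>
  ⟨ball x 1, ball_mem_nhds x one_pos, hm.restrict, (hball x 1).lt_top⟩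

lemma rpow_le_one_add_rpow (a : ℝ≥0∞) {t s : ℝ} (ht : 0 ≤ t) (hts : t ≤ s) :
    a ^ t ≤ 1 + a ^ s := by
  rcases le_total a 1 with ha | ha
  · exact (ENNReal.rpow_le_one ha ht).trans le_self_add
  · exact (ENNReal.rpow_le_rpow_of_exponent_le ha hts).trans le_add_self

variable {E : Type*} [NormedAddCommGroup E] [NormedSpace ℝ E] [FiniteDimensional ℝ E]
  [MeasureSpace E] [BorelSpace E] [(volume : Measure E).IsAddHaarMeasure]

lemma setLIntegral_ball_rpow_ne_top_of_le_add {u h : E → ℝ} {V : E → ℝ≥0∞} {t s : ℝ}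
    (ht : 0 ≤ t) (hts : t ≤ s) (hs : 1 ≤ s) (hu : Continuous u) (hV : ∫⁻ x, V x ^ s ≠ ⊤)
    (hh : ∀ᵐ x, ‖h x‖ₑ ≤ ‖u x‖ₑ + V x) (x₀ : E) (r : ℝ) :
    ∫⁻ y in ball x₀ r, ‖h y‖ₑ ^ t ≠ ⊤ := by
  obtain ⟨M, hM⟩ := (isCompact_closedBall x₀ r).exists_bound_of_continuousOn hu.continuousOn
  have hbound : ∀ᵐ y, y ∈ ball x₀ r →
      ‖h y‖ₑ ^ t ≤ (1 + 2 ^ (s - 1) * ENNReal.ofReal M ^ s) + 2 ^ (s - 1) * V y ^ s := by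
    filter_upwards [hh] with y hy hyr
    have huM : ‖u y‖ₑ ≤ ENNReal.ofReal M := by
      rw [← ofReal_norm]
      exact ENNReal.ofReal_le_ofReal (hM y (ball_subset_closedBall hyr))
    calc ‖h y‖ₑ ^ t ≤ 1 + ‖h y‖ₑ ^ s := rpow_le_one_add_rpow _ ht hts
      _ ≤ 1 + (ENNReal.ofReal M + V y) ^ s := by gcongr; exact hy.trans (by gcongr)
      _ ≤ 1 + 2 ^ (s - 1) * (ENNReal.ofReal M ^ s + V y ^ s) := by
          gcongr
          exact ENNReal.rpow_add_le_mul_rpow_add_rpow _ _ hs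
      _ = _ := by ring
  have hconst : (2 : ℝ≥0∞) ^ (s - 1) ≠ ⊤ :=
    ENNReal.rpow_ne_top_of_nonneg (by linarith) ENNReal.ofNat_ne_top
  refine ne_top_of_le_ne_top ?_ (setLIntegral_mono_ae' measurableSet_ball hbound)
  rw [lintegral_add_left measurable_const, setLIntegral_const, lintegral_const_mul' _ _ hconst]
  refine ENNReal.add_ne_top.2 ⟨ENNReal.mul_ne_top ?_ measure_ball_lt_top.ne,
    ENNReal.mul_ne_top hconst (ne_top_of_le_ne_top hV (setLIntegral_le_lintegral _ _))⟩
  exact ENNReal.add_ne_top.2 ⟨ENNReal.one_ne_top, ENNReal.mul_ne_top hconst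
    (ENNReal.rpow_ne_top_of_nonneg (by linarith) ENNReal.ofReal_ne_top)⟩

lemma integrable_mul_enorm_add_toReal_rpow {u : E → ℝ} {V : E → ℝ≥0∞} {s : ℝ} {φ : 𝓢(E, ℝ)}
    (hu : Integrable fun x => φ x * u x) (hVm : Measurable V) (hV : ∫⁻ x, V x ^ s ≠ ⊤) :
    Integrable fun x => ‖φ x‖ * (‖u x‖ + (1 + (V x ^ s).toReal)) := by
  obtain ⟨c, hc⟩ := exists_hasDecay 0 0 φ
  have hVint : Integrable fun x => (V x ^ s).toReal :=
    integrable_toReal_of_lintegral_ne_top (hVm.pow_const s).aemeasurable hV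
  have hφV : Integrable fun x => ‖φ x‖ * (V x ^ s).toReal :=
    hVint.bdd_mul φ.continuous.norm.aestronglyMeasurable (c := c)
      (.of_forall fun x => by simpa using hc x)
  refine (hu.norm.add (φ.integrable.norm.add hφV)).congr (.of_forall fun x => ?_)
  simp only [Pi.add_apply, norm_mul]
  ring

lemma norm_doubleMollification_le {f : 𝓢(E, ℝ) →L[ℝ] ℝ} {Ψ : ℕ → 𝓢(E, ℝ)} {x : E} {s : ℝ}
    (hs : 1 ≤ s) (hV : mollificationVariation f Ψ x < ⊤) (j : ℕ) :
    ‖doubleMollification f Ψ j x‖ ≤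
      ‖doubleMollification f Ψ 0 x‖ + (1 + (mollificationVariation f Ψ x ^ s).toReal) := by
  have hVs : mollificationVariation f Ψ x ^ s ≠ ⊤ :=
    ENNReal.rpow_ne_top_of_nonneg (by linarith) hV.ne
  have hV1 : mollificationVariation f Ψ x ≤ 1 + mollificationVariation f Ψ x ^ s := by
    simpa using rpow_le_one_add_rpow (mollificationVariation f Ψ x) zero_le_one hs
  have hle := ENNReal.toReal_mono (by finiteness)
    ((enorm_doubleMollification_le f Ψ j x).trans (add_le_add_right hV1 _))
  rwa [ENNReal.toReal_add (by finiteness) (by finiteness), ENNReal.toReal_add (by finiteness) hVs,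
    toReal_enorm, toReal_enorm, ENNReal.toReal_one] at hle

lemma ae_mollificationVariation_lt_top {f : 𝓢(E, ℝ) →L[ℝ] ℝ} {Ψ : ℕ → 𝓢(E, ℝ)} {s : ℝ}
    (hs : 0 < s) (hV : ∫⁻ x, mollificationVariation f Ψ x ^ s ≠ ⊤) :
    ∀ᵐ x, mollificationVariation f Ψ x < ⊤ := by
  filter_upwards [ae_lt_top ((measurable_mollificationVariation f Ψ).pow_const s) hV] with x hx
  exact (ENNReal.rpow_lt_top_iff_of_pos hs).1 hx

lemma IsDyadicMollifier.eq_integral_of_tendsto {Ψ : ℕ → 𝓢(E, ℝ)} {B s : ℝ}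
    (hΨ : IsDyadicMollifier Ψ B) {f : 𝓢(E, ℝ) →L[ℝ] ℝ} (hs : 1 ≤ s)
    (hV : ∫⁻ x, mollificationVariation f Ψ x ^ s ≠ ⊤) {h : E → ℝ}
    (hlim : ∀ᵐ x, Tendsto (fun j => doubleMollification f Ψ j x) atTop (𝓝 (h x)))
    (φ : 𝓢(E, ℝ)) : f φ = ∫ x, h x * φ x := by
  simp_rw [mul_comm (h _)]
  refine tendsto_nhds_unique (hΨ.tendsto_integral_mul_doubleMollification f φ)
    (tendsto_integral_of_dominated_convergence _ (fun j => ?_)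
      (integrable_mul_enorm_add_toReal_rpow (integrable_mul_clm_reflTranslate f φ
        (schwartzConv (Ψ 0) (Ψ 0))) (measurable_mollificationVariation f Ψ) hV) (fun j => ?_) ?_)
  · exact (φ.continuous.mul (continuous_doubleMollification f Ψ j)).aestronglyMeasurable
  · filter_upwards [ae_mollificationVariation_lt_top (by linarith) hV] with x hx
    rw [norm_mul]
    exact mul_le_mul_of_nonneg_left (norm_doubleMollification_le hs hx j) (norm_nonneg _)
  · filter_upwards [hlim] with x hx
    exact hx.const_mul _

lemma enorm_le_of_tendsto_doubleMollification {f : 𝓢(E, ℝ) →L[ℝ] ℝ} {Ψ : ℕ → 𝓢(E, ℝ)} {x : E}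
    {a : ℝ} (ha : Tendsto (fun j => doubleMollification f Ψ j x) atTop (𝓝 a)) :
    ‖a‖ₑ ≤ ‖doubleMollification f Ψ 0 x‖ₑ + mollificationVariation f Ψ x :=
  le_of_tendsto' ha.enorm fun j => enorm_doubleMollification_le f Ψ j x

theorem IsDyadicMollifier.exists_locallyIntegrable_representation [Nontrivial E]
    {Ψ : ℕ → 𝓢(E, ℝ)} {B p : ℝ} (hΨ : IsDyadicMollifier Ψ B) (f : 𝓢(E, ℝ) →L[ℝ] ℝ)
    (hp : Module.finrank ℝ E / (Module.finrank ℝ E + 1) ≤ p)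
    (hf : ∫⁻ x, verticalMax (distribGradient f) Ψ x ^ p ≠ ⊤) :
    ∃ h : E → ℝ, Measurable h ∧
      (∀ s : ℝ, 0 ≤ s → s * (Module.finrank ℝ E - p) ≤ p * Module.finrank ℝ E →
        ∀ x₀ r, ∫⁻ y in ball x₀ r, ‖h y‖ₑ ^ s ≠ ⊤) ∧
      LocallyIntegrable h ∧ ∀ φ : 𝓢(E, ℝ), f φ = ∫ y, h y * φ y := by
  have hd : (0 : ℝ) < Module.finrank ℝ E := by exact_mod_cast Module.finrank_pos
  have hp0 : 0 < p := lt_of_lt_of_le (by positivity) hp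
  have h1 : 1 * (Module.finrank ℝ E - p) ≤ p * Module.finrank ℝ E := by
    rw [div_le_iff₀ (by positivity)] at hp
    linarith
  have hpp : p * (Module.finrank ℝ E - p) ≤ p * Module.finrank ℝ E := by nlinarith
  have hV {s : ℝ} (hs : s * (Module.finrank ℝ E - p) ≤ p * Module.finrank ℝ E) :
      ∫⁻ x, mollificationVariation f Ψ x ^ max s (max 1 p) ≠ ⊤ := by
    refine hΨ.lintegral_mollificationVariation_rpow_ne_top f hp0 (by simp) ?_ hf
    rcases max_choice s (max 1 p) with h | h <;> rw [h]
    · exact hs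
    · rcases max_choice 1 p with h | h <;> rw [h] <;> assumption
  have hs1 (s : ℝ) : 1 ≤ max s (max 1 p) := by simp
  obtain ⟨h, hm, hlim⟩ := exists_measurable_tendsto_doubleMollification
    (ae_mollificationVariation_lt_top (zero_lt_one.trans_le (hs1 1)) (hV h1))
  have hball (s : ℝ) (hs0 : 0 ≤ s)
      (hs : s * (Module.finrank ℝ E - p) ≤ p * Module.finrank ℝ E) (x₀ : E) (r : ℝ) :
      ∫⁻ y in ball x₀ r, ‖h y‖ₑ ^ s ≠ ⊤ :=
    setLIntegral_ball_rpow_ne_top_of_le_add hs0 (le_max_left _ _) (hs1 s)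
      (continuous_doubleMollification f Ψ 0) (hV hs)
      (hlim.mono fun x hx => enorm_le_of_tendsto_doubleMollification hx) x₀ r
  exact ⟨h, hm, hball,
    locallyIntegrable_of_setLIntegral_ball_ne_top hm.aestronglyMeasurable
      (by simpa using hball 1 zero_le_one h1),
    hΨ.eq_integral_of_tendsto (hs1 1) (hV h1) hlim⟩

end Representation

/-! ### Dilates of a test function -/

section Dilate

variable {E : Type*} [NormedAddCommGroup E] [NormedSpace ℝ E]

/-- The dilate `ψ_{2^{-k}}(z) = 2^{kn} ψ(2^k z)`, where `n = dim E`. -/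
def dyadicDilate (ψ : 𝓢(E, ℝ)) (k : ℕ) : 𝓢(E, ℝ) :=
  ((2 : ℝ) ^ k) ^ Module.finrank ℝ E • SchwartzMap.compCLMOfContinuousLinearEquiv ℝ
    (ContinuousLinearEquiv.smulLeft (Units.mk0 ((2 : ℝ) ^ k) (by positivity))) ψ

lemma coe_dyadicDilate (ψ : 𝓢(E, ℝ)) (k : ℕ) :
    ⇑(dyadicDilate ψ k) = fun z => ((2 : ℝ) ^ k) ^ Module.finrank ℝ E • ψ ((2 : ℝ) ^ k • z) := rfl

lemma norm_two_pow_smul (k : ℕ) (z : E) : ‖(2 : ℝ) ^ k • z‖ = 2 ^ k * ‖z‖ := by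
  rw [norm_smul, norm_pow, Real.norm_ofNat]

lemma dyadicDilate_eq_zero {ψ : 𝓢(E, ℝ)} (hψ : ∀ z, 1 ≤ ‖z‖ → ψ z = 0) {k : ℕ} {z : E}
    (hz : ((2 : ℝ) ^ k)⁻¹ ≤ ‖z‖) : dyadicDilate ψ k z = 0 := by
  rw [inv_le_iff_one_le_mul₀' (by positivity), ← norm_two_pow_smul] at hz
  simp only [coe_dyadicDilate, hψ _ hz, smul_zero]

lemma iteratedFDeriv_dyadicDilate (ψ : 𝓢(E, ℝ)) (k i : ℕ) (z : E) :
    iteratedFDeriv ℝ i (dyadicDilate ψ k) z = ((2 : ℝ) ^ k) ^ Module.finrank ℝ E •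
      ((2 : ℝ) ^ k) ^ i • iteratedFDeriv ℝ i ψ ((2 : ℝ) ^ k • z) := by
  have hψ : ContDiff ℝ i ψ := ψ.smooth i
  have hcomp : ContDiff ℝ i fun z => ψ ((2 : ℝ) ^ k • z) := hψ.comp (contDiff_const_smul _)
  rw [coe_dyadicDilate, iteratedFDeriv_const_smul_apply' hcomp.contDiffAt,
    iteratedFDeriv_comp_const_smul _ hψ]

lemma HasDecay.dyadicDilate {a i : ℕ} {ψ : 𝓢(E, ℝ)} {C : ℝ} (h : HasDecay a i ψ C) (k : ℕ) :
    HasDecay a i (dyadicDilate ψ k) (C * 2 ^ (k * (Module.finrank ℝ E + i))) := fun z => by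
  have hz : ‖z‖ ≤ ‖(2 : ℝ) ^ k • z‖ := by
    rw [norm_two_pow_smul]
    exact le_mul_of_one_le_left (norm_nonneg _) (one_le_pow₀ one_le_two)
  rw [iteratedFDeriv_dyadicDilate, norm_smul, norm_smul, norm_pow, norm_pow ((2 : ℝ) ^ k),
    norm_pow, Real.norm_ofNat]
  calc (1 + ‖z‖) ^ a * (((2 : ℝ) ^ k) ^ Module.finrank ℝ E *
        (((2 : ℝ) ^ k) ^ i * ‖iteratedFDeriv ℝ i ψ ((2 : ℝ) ^ k • z)‖))
      = (1 + ‖z‖) ^ a * ‖iteratedFDeriv ℝ i ψ ((2 : ℝ) ^ k • z)‖ *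
          2 ^ (k * (Module.finrank ℝ E + i)) := by rw [pow_mul, pow_add]; ring
    _ ≤ (1 + ‖(2 : ℝ) ^ k • z‖) ^ a * ‖iteratedFDeriv ℝ i ψ ((2 : ℝ) ^ k • z)‖ *
          2 ^ (k * (Module.finrank ℝ E + i)) := by gcongr
    _ ≤ C * 2 ^ (k * (Module.finrank ℝ E + i)) := by gcongr; exact h _

variable [FiniteDimensional ℝ E] [MeasureSpace E] [BorelSpace E]
  [(volume : Measure E).IsAddHaarMeasure]

lemma integral_two_pow_mul_comp_smul (F : E → ℝ) (k : ℕ) :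
    ∫ z, ((2 : ℝ) ^ k) ^ Module.finrank ℝ E * F ((2 : ℝ) ^ k • z) = ∫ z, F z := by
  rw [integral_const_mul, Measure.integral_comp_smul_of_nonneg volume F (hR := by positivity),
    smul_eq_mul, mul_inv_cancel_left₀ (by positivity)]

lemma isDyadicMollifier_dyadicDilate {ψ : 𝓢(E, ℝ)} (hψ : ∀ z, 1 ≤ ‖z‖ → ψ z = 0)
    (hint : ∫ z, ψ z = 1) : IsDyadicMollifier (dyadicDilate ψ) (∫ z, ‖ψ z‖) where
  integral_eq_one k := (integral_two_pow_mul_comp_smul ψ k).trans hint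
  eq_zero k z hz := dyadicDilate_eq_zero hψ hz
  integral_norm_le k := by
    simp only [coe_dyadicDilate, norm_smul, norm_pow, Real.norm_ofNat]
    exact (integral_two_pow_mul_comp_smul (fun z => ‖ψ z‖) k).le
  exists_hasDecay a i := (exists_hasDecay a i ψ).imp fun _ hC k => hC.dyadicDilate k

end Dilate

/-! ### The vertical maximal function of the gradient -/

section Coordinates

lemma lintegral_rpow_ne_top_of_le_sum {α ι : Type*} [MeasurableSpace α] {μ : Measure α} [Fintype ι]
    {a : α → ℝ≥0∞} {b : ι → α → ℝ≥0∞} {p : ℝ} (hp : 0 < p) (hb : ∀ i, Measurable (b i))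
    (hab : ∀ x, a x ≤ ∑ i, b i x) (hbp : ∀ i, ∫⁻ x, b i x ^ p ∂μ ≠ ⊤) :
    ∫⁻ x, a x ^ p ∂μ ≠ ⊤ := by
  have hbound (x : α) : a x ^ p ≤ (Fintype.card ι : ℝ≥0∞) ^ p * ∑ i, b i x ^ p := by
    rcases isEmpty_or_nonempty ι with hι | hι
    · have hax : a x = 0 := by simpa using hab x
      simp [hax, hp]
    · obtain ⟨i, hi⟩ := Finite.exists_max fun i => b i x
      calc a x ^ p ≤ (Fintype.card ι * b i x) ^ p := by
            gcongr
            exact (hab x).trans ((Finset.sum_le_card_nsmul _ _ _ fun k _ => hi k).trans_eq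
              (nsmul_eq_mul _ _))
        _ = (Fintype.card ι : ℝ≥0∞) ^ p * b i x ^ p := ENNReal.mul_rpow_of_nonneg _ _ hp.le
        _ ≤ _ := mul_le_mul_right (Finset.single_le_sum (f := fun i => b i x ^ p)
            (fun _ _ => zero_le) (Finset.mem_univ i)) _
  have hcard : (Fintype.card ι : ℝ≥0∞) ^ p ≠ ⊤ :=
    ENNReal.rpow_ne_top_of_nonneg hp.le (ENNReal.natCast_ne_top _)
  refine ne_top_of_le_ne_top ?_ (lintegral_mono hbound)
  rw [lintegral_const_mul' _ _ hcard, lintegral_finsetSum _ fun i _ => (hb i).pow_const p]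
  exact ENNReal.mul_ne_top hcard (ENNReal.sum_ne_top.2 fun i _ => hbp i)

variable {E ι : Type*} [NormedAddCommGroup E] [InnerProductSpace ℝ E] [Fintype ι]

lemma enorm_le_sum_enorm_apply_orthonormalBasis (b : OrthonormalBasis ι ℝ E)
    (L : StrongDual ℝ E) : ‖L‖ₑ ≤ ∑ i, ‖L (b i)‖ₑ := by
  have hnorm : ‖L‖ ≤ ∑ i, ‖L (b i)‖ := by
    refine L.opNorm_le_bound (by positivity) fun x => ?_
    calc ‖L x‖ = ‖∑ i, b.repr x i * L (b i)‖ := by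
          conv_lhs => rw [← b.sum_repr x]
          simp only [map_sum, map_smul, smul_eq_mul]
      _ ≤ ∑ i, ‖x‖ * ‖L (b i)‖ := norm_sum_le_of_le _ fun i _ => by
          rw [norm_mul, ← b.repr.norm_map x]
          gcongr
          exact PiLp.norm_apply_le _ i
      _ = (∑ i, ‖L (b i)‖) * ‖x‖ := by rw [← Finset.mul_sum, mul_comm]
  rw [← ofReal_norm]
  refine (ENNReal.ofReal_le_ofReal hnorm).trans_eq ?_
  rw [ENNReal.ofReal_sum_of_nonneg fun _ _ => norm_nonneg _]
  simp_rw [ofReal_norm]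

lemma verticalMax_le_sum_orthonormalBasis (b : OrthonormalBasis ι ℝ E)
    (g : 𝓢(E, ℝ) →L[ℝ] StrongDual ℝ E) (Ψ : ℕ → 𝓢(E, ℝ)) (x : E) :
    verticalMax g Ψ x ≤ ∑ i, verticalMax (ContinuousLinearMap.apply ℝ ℝ (b i) ∘L g) Ψ x :=
  iSup_le fun k => (enorm_le_sum_enorm_apply_orthonormalBasis b _).trans <|
    Finset.sum_le_sum fun i _ => enorm_clm_reflTranslate_le_verticalMax
      (ContinuousLinearMap.apply ℝ ℝ (b i) ∘L g) Ψ k x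

end Coordinates

section Euclidean

variable {n : ℕ} {f : 𝓢(EuclideanSpace ℝ (Fin n), ℝ) →L[ℝ] ℝ}
  {ψ : 𝓢(EuclideanSpace ℝ (Fin n), ℝ)}

lemma reflTranslate_lineDeriv_dyadicDilate_apply (k : ℕ) (x y v : EuclideanSpace ℝ (Fin n)) :
    reflTranslate x (∂_{v} (dyadicDilate ψ k)) y =
      ((2 : ℝ) ^ k) ^ (n + 1) * fderiv ℝ ψ ((2 : ℝ) ^ k • (x - y)) v := by
  rw [reflTranslate_apply, SchwartzMap.lineDerivOp_apply_eq_fderiv, coe_dyadicDilate,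
    fderiv_fun_const_smul (by fun_prop), fderiv_comp_smul, finrank_euclideanSpace_fin]
  simp only [smul_apply, smul_eq_mul]
  ring

lemma verticalMax_apply_comp_distribGradient_le_distrSmoothMax (i : Fin n)
    (x : EuclideanSpace ℝ (Fin n)) :
    verticalMax (ContinuousLinearMap.apply ℝ ℝ (EuclideanSpace.single i 1) ∘L distribGradient f)
      (dyadicDilate ψ) x ≤ distrSmoothMax n ψ f i x := by
  refine iSup_le fun k => ?_
  have hpairing : ‖f (reflTranslate x (∂_{EuclideanSpace.single i (1 : ℝ)} (dyadicDilate ψ k)))‖ₑ ≤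
      distrSmoothMax n ψ f i x := by
    rw [← ofReal_norm, Real.norm_eq_abs]
    refine le_iSup_of_le ⟨((2 : ℝ) ^ k)⁻¹, by positivity⟩ (le_iSup_of_le ⟨_, fun y => ?_⟩ le_rfl)
    rw [inv_inv, reflTranslate_lineDeriv_dyadicDilate_apply]
  rwa [← distribGradient_reflTranslate] at hpairing

lemma lintegral_verticalMax_distribGradient_rpow_ne_top {p : ℝ} (hp : 0 < p)
    (hf : ∀ j, (∫⁻ x, distrSmoothMax n ψ f j x ^ p) ^ (1 / p) ≠ ⊤) :
    ∫⁻ x, verticalMax (distribGradient f) (dyadicDilate ψ) x ^ p ≠ ⊤ := by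
  refine lintegral_rpow_ne_top_of_le_sum hp (fun i => measurable_verticalMax _ _)
    (verticalMax_le_sum_orthonormalBasis (EuclideanSpace.basisFun (Fin n) ℝ) _ _) fun i => ?_
  have hfi : ∫⁻ x, distrSmoothMax n ψ f i x ^ p ≠ ⊤ := fun htop =>
    hf i (by rw [htop, ENNReal.top_rpow_of_pos (by positivity)])
  refine ne_top_of_le_ne_top hfi (lintegral_mono fun x => ?_)
  rw [EuclideanSpace.basisFun_apply]
  gcongr
  exact verticalMax_apply_comp_distribGradient_le_distrSmoothMax i x

end Euclidean

theorem hardy_sobolev_loc_integrable_representation_general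
    (n : ℕ) (hn : 1 ≤ n) (p : ℝ) (hp : (n : ℝ) / (n + 1) ≤ p)
    (ψ : EuclideanSpace ℝ (Fin n) → ℝ) (hψ : ContDiff ℝ (⊤ : ℕ∞) ψ)
    (hψsupp : tsupport ψ ⊆ ball 0 1) (hψint : ∫ x, ψ x = 1)
    (f : 𝓢(EuclideanSpace ℝ (Fin n), ℝ) →L[ℝ] ℝ)
    (hf : ∀ j : Fin n, (∫⁻ x, distrSmoothMax n ψ f j x ^ p) ^ (1 / p) ≠ ⊤) :
    ∃ h : EuclideanSpace ℝ (Fin n) → ℝ, Measurable h ∧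
      (∀ s : ℝ, 0 ≤ s → s * (n - p) ≤ p * n → ∀ (x₀ : EuclideanSpace ℝ (Fin n)) (r : ℝ),
        ∫⁻ y in ball x₀ r, ENNReal.ofReal |h y| ^ s ≠ ⊤) ∧
      LocallyIntegrable h ∧
      ∀ φ : 𝓢(EuclideanSpace ℝ (Fin n), ℝ), f φ = ∫ y, h y * φ y := by
  have : Nonempty (Fin n) := ⟨⟨0, hn⟩⟩
  have hp0 : 0 < p := lt_of_lt_of_le (by positivity) hp
  have hψzero (z : EuclideanSpace ℝ (Fin n)) (hz : 1 ≤ ‖z‖) : ψ z = 0 :=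
    image_eq_zero_of_notMem_tsupport fun hzmem => hz.not_gt (by simpa using hψsupp hzmem)
  have hψcompact : HasCompactSupport ψ :=
    .of_support_subset_isCompact (isCompact_closedBall 0 1)
      ((subset_tsupport ψ).trans (hψsupp.trans ball_subset_closedBall))
  have hmoll := isDyadicMollifier_dyadicDilate (ψ := hψcompact.toSchwartzMap hψ) hψzero hψint
  simpa only [finrank_euclideanSpace_fin, ← ofReal_norm, Real.norm_eq_abs] using
    hmoll.exists_locallyIntegrable_representation f (by rwa [finrank_euclideanSpace_fin])
      (lintegral_verticalMax_distribGradient_rpow_ne_top (ψ := hψcompact.toSchwartzMap hψ) hp0 hf)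

-- Equality holds unless `p = d`, where the left-hand side is the junk value `0`.
lemma sobolevConjugate_mul_sub_le {p d : ℝ} (hp : 0 ≤ p) (hpd : p ≤ d) :
    p * d / (d - p) * (d - p) ≤ p * d := by
  rw [div_mul_eq_mul_div]
  exact div_le_of_le_mul₀ (sub_nonneg.2 hpd) (mul_nonneg hp (hp.trans hpd)) le_rfl

/-- **Proposition 2.1.** For `n/(n+1) ≤ p ≤ 1` and `p* = pn/(n-p)`, a tempered
distribution whose derivatives lie in `H^p(ℝⁿ)` (expressed via finiteness of the `L^p`
quasinorm of the smooth maximal functions of the `D_j f`) is represented by a function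
in `L^{p*}_loc(ℝⁿ)`; in particular by a locally integrable function. -/
theorem hardy_sobolev_loc_integrable_representation
    (n : ℕ) (hn : 1 ≤ n) (p : ℝ) (hp1 : (n : ℝ) / (n + 1) ≤ p) (hp2 : p ≤ 1)
    (pstar : ℝ) (hpstar : pstar = p * n / (n - p))
    (ψ : EuclideanSpace ℝ (Fin n) → ℝ) (hψ : ContDiff ℝ (⊤ : ℕ∞) ψ)
    (hψsupp : tsupport ψ ⊆ ball 0 1) (hψint : ∫ x, ψ x = 1)
    (f : SchwartzMap (EuclideanSpace ℝ (Fin n)) ℝ →L[ℝ] ℝ)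
    (hf : ∀ j : Fin n, (∫⁻ x, distrSmoothMax n ψ f j x ^ p) ^ (1 / p) ≠ ⊤) :
    ∃ h : EuclideanSpace ℝ (Fin n) → ℝ, Measurable h ∧
      (∀ (x₀ : EuclideanSpace ℝ (Fin n)) (r : ℝ),
        ∫⁻ y in ball x₀ r, ENNReal.ofReal |h y| ^ pstar ≠ ⊤) ∧
      LocallyIntegrable h ∧
      ∀ φ : SchwartzMap (EuclideanSpace ℝ (Fin n)) ℝ, f φ = ∫ y, h y * φ y := by
  obtain ⟨h, hm, hball, hloc, hrep⟩ :=
    hardy_sobolev_loc_integrable_representation_general n hn p hp1 ψ hψ hψsupp hψint f hf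
  have hp0 : 0 ≤ p := le_trans (by positivity) hp1
  have hpn : p ≤ n := hp2.trans (by exact_mod_cast hn)
  subst hpstar
  exact ⟨h, hm, hball _ (div_nonneg (by positivity) (sub_nonneg.2 hpn))
    (sobolevConjugate_mul_sub_le hp0 hpn), hloc, hrep⟩
end
end

section
/- Let n ≥ 1 and 0 < p < n, and set p* = np/(n−p). There is a constant C = C(p,n) such that for every ball B ⊆ ℝⁿ of radius r, every measurable function u : 2B → ℝ, and every Hajlasz gradient g of u on 2B, one has inf_{c ∈ ℝ} ( ⨍_B |u − c|^{p*} dm )^{1/p*} ≤ C · r · ( ⨍_{2B} g^p dm )^{1/p}, where ⨍ denotes the average (the integral divided by the Lebesgue measure of the domain of integration) and 2B is the ball concentric with B of twice the radius. -/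
open MeasureTheory Metric Set ENNReal NNReal

noncomputable section

/-- `g` is a Hajlasz gradient of `u` on `U ⊆ ℝⁿ`: `g` is measurable, nonnegative, and
off a set of measure zero `|u x - u y| ≤ ‖x - y‖ (g x + g y)` for `x, y ∈ U`. -/
def IsHajlaszGradientOn (n : ℕ) (u g : EuclideanSpace ℝ (Fin n) → ℝ)
    (U : Set (EuclideanSpace ℝ (Fin n))) : Prop :=
  Measurable g ∧ (∀ x, 0 ≤ g x) ∧
    ∃ E : Set (EuclideanSpace ℝ (Fin n)), MeasureTheory.volume E = 0 ∧
      ∀ x ∈ U \ E, ∀ y ∈ U \ E, |u x - u y| ≤ ‖x - y‖ * (g x + g y)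

/-!
The argument is a chaining argument in a space where a ball of radius `ρ` inside `B(x₀, R)` carries
at least a fraction `b (ρ / R) ^ s` of its mass. Put `q = 2 ^ (-p / s)` and let `T` be a large
multiple of `(⨍_{2B} g ^ p) ^ (1 / p)`. The average of `g ^ p` over a ball of radius
`r (1 - q) q ^ k` is at most `(2 ^ k T) ^ p`, so such a ball contains a point where `g ≤ 2 ^ k T`.
Starting from a point of `B` with `g ≤ 2 ^ k T` and moving through such points for
`k - 1, k - 2, …, 0`, the increments of `u` form a geometric series with ratio `2 q > 1`, dominated
by its largest term: `|u - c| ≲ r T (2 q) ^ k` wherever `g ≤ 2 ^ k T`. As `(2 q) ^ p* = 2 ^ p`, this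
reads `|u - c| ^ p* ≲ (r T) ^ p* (1 + (g / T) ^ p)`, which is integrated over `B`.
-/

section LAverage

variable {X : Type*} [MeasurableSpace X] {μ : Measure X} {A B N : Set X} {f : X → ℝ≥0∞}

lemma mul_setLAverage_le_setLAverage_of_subset {a : ℝ≥0∞} (hAB : A ⊆ B) (hB₀ : μ B ≠ 0)
    (hB : μ B ≠ ∞) (ha : a * μ B ≤ μ A) :
    a * ⨍⁻ x in A, f x ∂μ ≤ ⨍⁻ x in B, f x ∂μ := by
  have inv_le : a / μ A ≤ (μ B)⁻¹ := by
    refine ENNReal.div_le_of_le_mul ?_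
    rw [← ENNReal.div_eq_inv_mul]
    exact (ENNReal.le_div_iff_mul_le (.inl hB₀) (.inl hB)).2 ha
  calc a * ⨍⁻ x in A, f x ∂μ
      = a / μ A * ∫⁻ x in A, f x ∂μ := by
        rw [setLAverage_eq, div_eq_mul_inv, div_eq_mul_inv]; ring
    _ ≤ (μ B)⁻¹ * ∫⁻ x in B, f x ∂μ := mul_le_mul' inv_le (lintegral_mono_set hAB)
    _ = ⨍⁻ x in B, f x ∂μ := by rw [setLAverage_eq, ENNReal.div_eq_inv_mul]

lemma exists_mem_notMem_null_le_setLAverage (hA₀ : μ A ≠ 0) (hA : μ A ≠ ∞)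
    (hf : AEMeasurable f (μ.restrict A)) (hN : μ N = 0) :
    ∃ x ∈ A, x ∉ N ∧ f x ≤ ⨍⁻ a in A, f a ∂μ := by
  have pos := measure_le_setLAverage_pos hA₀ hA hf
  rw [← measure_sdiff_null hN] at pos
  obtain ⟨x, ⟨hxA, hx⟩, hxN⟩ := nonempty_of_measure_ne_zero pos.ne'
  exact ⟨x, hxA, hxN, hx⟩

lemma setLAverage_one_add_rpow_le {g : X → ℝ≥0∞} {a T : ℝ≥0∞} {p : ℝ} (hp : 0 < p)
    (hA₀ : μ A ≠ 0) (hA : μ A ≠ ∞) (ha : a ≠ ∞) (hT₀ : T ≠ 0) (hT : T ≠ ∞)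
    (hgT : ⨍⁻ y in A, g y ^ p ∂μ ≤ T ^ p) :
    ⨍⁻ y in A, (1 + (a * (g y / T)) ^ p) ∂μ ≤ 1 + a ^ p := by
  have hscale (y : X) : (a * (g y / T)) ^ p = (a / T) ^ p * g y ^ p := by
    rw [← ENNReal.mul_rpow_of_nonneg _ _ hp.le]
    congr 1
    simp only [div_eq_mul_inv]
    ring
  have hfin : (a / T) ^ p ≠ ∞ := by finiteness
  calc ⨍⁻ y in A, (1 + (a * (g y / T)) ^ p) ∂μ
      = ⨍⁻ _ in A, 1 ∂μ + (a / T) ^ p * ⨍⁻ y in A, g y ^ p ∂μ := by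
        simp only [hscale, laverage]
        rw [lintegral_add_left measurable_const, lintegral_const_mul' _ _ hfin]
    _ ≤ 1 + (a / T) ^ p * T ^ p := by
        rw [setLAverage_one hA₀ hA]
        gcongr
    _ = 1 + a ^ p := by
        rw [← ENNReal.mul_rpow_of_nonneg _ _ hp.le, ENNReal.div_mul_cancel hT₀ hT]

end LAverage

section DyadicLevels

lemma ennreal_pow_rpow_comm (x : ℝ≥0∞) (k : ℕ) (z : ℝ) : (x ^ k) ^ z = (x ^ z) ^ k := by
  rw [← ENNReal.rpow_natCast_mul, mul_comm, ENNReal.rpow_mul_natCast]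

lemma exists_le_two_pow_le_max {W : ℝ≥0∞} (hW : W ≠ ∞) :
    ∃ k : ℕ, W ≤ 2 ^ k ∧ 2 ^ k ≤ max 1 (2 * W) := by
  lift W to ℝ≥0 using hW
  rcases le_total W 1 with hW | hW
  · exact ⟨0, by simpa using hW, by simp⟩
  · obtain ⟨k, hk, hk'⟩ := exists_nat_pow_near hW one_lt_two
    refine ⟨k + 1, mod_cast hk'.le, le_max_of_le_right ?_⟩
    rw [pow_succ']
    exact_mod_cast mul_le_mul_right hk 2

lemma rpow_le_of_forall_le_two_pow {V W K t : ℝ≥0∞} {p m : ℝ} (hp : 0 < p) (hm : 0 < m)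
    (hK : K ≠ 0) (ht : t ^ m = 2 ^ p) (h : ∀ k : ℕ, W ≤ 2 ^ k → V ≤ K * t ^ k) :
    V ^ m ≤ K ^ m * (1 + (2 * W) ^ p) := by
  rcases eq_or_ne W ∞ with rfl | hW
  · have : K ^ m ≠ 0 := by simp [ENNReal.rpow_eq_zero_iff, hK, hm.le]
    simp [ENNReal.top_rpow_of_pos hp, ENNReal.mul_top this]
  obtain ⟨k, hWk, hk⟩ := exists_le_two_pow_le_max hW
  calc V ^ m ≤ (K * t ^ k) ^ m := by gcongr; exact h k hWk
    _ = K ^ m * (2 ^ k) ^ p := by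
        rw [ENNReal.mul_rpow_of_nonneg _ _ hm.le, ennreal_pow_rpow_comm, ht,
          ennreal_pow_rpow_comm]
    _ ≤ K ^ m * max 1 (2 * W) ^ p := by gcongr
    _ ≤ K ^ m * (1 + (2 * W) ^ p) := by
        gcongr
        rw [(ENNReal.monotone_rpow_of_nonneg hp.le).map_max, ENNReal.one_rpow]
        exact max_le_add_of_nonneg zero_le_one zero_le

end DyadicLevels

section Chaining

variable {X Y : Type*} [PseudoMetricSpace X] [PseudoEMetricSpace Y]
  {A : Set X} {u : X → Y} {g : X → ℝ≥0∞} {T : ℝ≥0∞} {x₀ : X} {r q : ℝ}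

lemma edist_le_ofReal_mul_of_dist_le {x y : X} {d : ℝ} {a b : ℝ≥0∞}
    (hug : edist (u x) (u y) ≤ edist x y * (g x + g y)) (hd : dist x y ≤ d)
    (hx : g x ≤ a) (hy : g y ≤ b) : edist (u x) (u y) ≤ ENNReal.ofReal d * (a + b) := by
  have hd' : edist x y ≤ ENNReal.ofReal d := by
    rw [edist_dist]; exact ENNReal.ofReal_le_ofReal hd
  exact hug.trans (by gcongr)

lemma chain_base_le (hr : 0 < r) (hq : q < 1) (hq₂ : 1 < 2 * q) :
    ENNReal.ofReal (3 * r) * (2 ^ 0 * T + 2 ^ 0 * T) ≤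
      ENNReal.ofReal (6 / (2 * q - 1) * r * (2 * q) ^ 0) * T := by
  have hK : 6 ≤ 6 / (2 * q - 1) := by
    rw [le_div_iff₀ (by linarith)]; linarith
  have level_sum : 2 ^ 0 * T + 2 ^ 0 * T = ENNReal.ofReal 2 * T := by
    rw [pow_zero, one_mul, ← two_mul, ENNReal.ofReal_ofNat]
  rw [level_sum, ← mul_assoc, ← ENNReal.ofReal_mul (by positivity), pow_zero, mul_one]
  refine mul_le_mul_left (ENNReal.ofReal_le_ofReal ?_) T
  nlinarith

lemma chain_step_le (hr : 0 < r) (hq : q < 1) (hq₂ : 1 < 2 * q) (k : ℕ) :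
    ENNReal.ofReal (r * (1 - q) * q ^ k) * (2 ^ (k + 1) * T + 2 ^ k * T) +
        ENNReal.ofReal (6 / (2 * q - 1) * r * (2 * q) ^ k) * T ≤
      ENNReal.ofReal (6 / (2 * q - 1) * r * (2 * q) ^ (k + 1)) * T := by
  have hq₀ : 0 < q := by linarith
  have : 0 < 1 - q := by linarith
  have ht : 0 < 2 * q - 1 := by linarith
  have level_sum : 2 ^ (k + 1) * T + 2 ^ k * T = ENNReal.ofReal (3 * 2 ^ k) * T := by
    rw [ENNReal.ofReal_mul (by norm_num), ENNReal.ofReal_pow two_pos.le,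
      ENNReal.ofReal_ofNat, ENNReal.ofReal_ofNat]
    ring
  rw [level_sum, ← mul_assoc, ← ENNReal.ofReal_mul (by positivity), ← add_mul,
    ← ENNReal.ofReal_add (by positivity) (by positivity)]
  gcongr
  have geometric : 3 * (1 - q) ≤ 6 / (2 * q - 1) * (2 * q - 1) := by
    rw [div_mul_cancel₀ _ ht.ne']; linarith
  calc r * (1 - q) * q ^ k * (3 * 2 ^ k) + 6 / (2 * q - 1) * r * (2 * q) ^ k
      = 3 * (1 - q) * (r * (2 * q) ^ k) + 6 / (2 * q - 1) * r * (2 * q) ^ k := by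
        rw [mul_pow]; ring
    _ ≤ 6 / (2 * q - 1) * (2 * q - 1) * (r * (2 * q) ^ k) +
          6 / (2 * q - 1) * r * (2 * q) ^ k := by gcongr
    _ = 6 / (2 * q - 1) * r * (2 * q) ^ (k + 1) := by ring

lemma exists_forall_edist_le_of_chain (hr : 0 < r) (hq : q < 1) (hq₂ : 1 < 2 * q)
    (hug : ∀ x ∈ A, ∀ y ∈ A, edist (u x) (u y) ≤ edist x y * (g x + g y))
    (hgood : ∀ (k : ℕ) (x : X), dist x x₀ + r * (1 - q) * q ^ k ≤ 2 * r →
      ∃ y ∈ ball x (r * (1 - q) * q ^ k), y ∈ A ∧ g y ≤ 2 ^ k * T) :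
    ∃ c : Y, ∀ (k : ℕ), ∀ x ∈ A, dist x x₀ < r * (1 + q ^ k) → g x ≤ 2 ^ k * T →
      edist (u x) c ≤ ENNReal.ofReal (6 / (2 * q - 1) * r * (2 * q) ^ k) * T := by
  have hq₀ : 0 < q := by linarith
  obtain ⟨z, hz, hzA, hgz⟩ := hgood 0 x₀ (by rw [dist_self]; nlinarith)
  refine ⟨u z, fun k => ?_⟩
  induction k with
  | zero =>
    intro x hxA hx hgx
    have hxz : dist x z ≤ 3 * r := by
      have := dist_triangle_right x z x₀
      rw [mem_ball] at hz
      nlinarith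
    exact (edist_le_ofReal_mul_of_dist_le (hug x hxA z hzA) hxz hgx hgz).trans
      (chain_base_le hr hq hq₂)
  | succ k ih =>
    intro x hxA hx hgx
    have hqk : q ^ k ≤ 1 := pow_le_one₀ hq₀.le hq.le
    have hxk : dist x x₀ + r * (1 - q) * q ^ k < r * (1 + q ^ k) := by
      rw [pow_succ] at hx; linarith
    obtain ⟨y, hy, hyA, hgy⟩ := hgood k x (hxk.le.trans (by nlinarith))
    have hxy : dist x y ≤ r * (1 - q) * q ^ k := (mem_ball'.1 hy).le
    have hyk : dist y x₀ < r * (1 + q ^ k) := by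
      have := dist_triangle_left y x₀ x
      linarith
    calc edist (u x) (u z) ≤ edist (u x) (u y) + edist (u y) (u z) := edist_triangle ..
      _ ≤ _ := add_le_add
          (edist_le_ofReal_mul_of_dist_le (hug x hxA y hyA) hxy hgx hgy) (ih y hyA hyk hgy)
      _ ≤ _ := chain_step_le hr hq hq₂ k

end Chaining

section Exponents

/-- The Sobolev conjugate `p* = s p / (s - p)` of `p` in dimension `s`; meaningful for `p < s`. -/
def sobolevExponent (s p : ℝ) : ℝ := s * p / (s - p)

/-- The ratio `q` of consecutive radii in the chain of balls, chosen so that `q ^ s = 2 ^ (-p)`: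
shrinking the radius by `q` is what doubling the level of `g` costs. -/
def chainRatio (s p : ℝ) : ℝ := 2 ^ (-p / s)

/-- The least fraction of the mass of `2B` carried by the first ball of the chain, which has radius
`(1 - q) r`, when the mass of balls is bounded below with exponent `s` and constant `b`. -/
def chainMass (s p b : ℝ) : ℝ := b * ((1 - chainRatio s p) / 2) ^ s

/-- The constant of the Sobolev–Poincaré inequality for exponents `p < s` and mass bound `b`. -/
def sobolevPoincareConst (s p b : ℝ) : ℝ :=
  6 / (2 * chainRatio s p - 1) * (1 + 2 ^ p) ^ (1 / sobolevExponent s p) *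
    chainMass s p b ^ (-(1 / p))

variable {s p b : ℝ}

lemma sobolevExponent_pos (hp : 0 < p) (hps : p < s) : 0 < sobolevExponent s p :=
  div_pos (mul_pos (hp.trans hps) hp) (sub_pos.2 hps)

lemma chainRatio_lt_one (hp : 0 < p) (hps : p < s) : chainRatio s p < 1 :=
  Real.rpow_lt_one_of_one_lt_of_neg one_lt_two (div_neg_of_neg_of_pos (by linarith) (by linarith))

lemma two_mul_chainRatio (s p : ℝ) : 2 * chainRatio s p = 2 ^ (1 - p / s) := by
  rw [chainRatio, sub_eq_add_neg, ← neg_div, Real.rpow_add two_pos, Real.rpow_one]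

lemma one_lt_two_mul_chainRatio (hp : 0 < p) (hps : p < s) : 1 < 2 * chainRatio s p := by
  rw [two_mul_chainRatio]
  exact Real.one_lt_rpow one_lt_two (sub_pos.2 ((div_lt_one (hp.trans hps)).2 hps))

lemma chainRatio_rpow (hs : s ≠ 0) : chainRatio s p ^ s = 2 ^ (-p) := by
  rw [chainRatio, ← Real.rpow_mul two_pos.le, div_mul_cancel₀ _ hs]

lemma ofReal_two_mul_chainRatio_rpow (hp : 0 < p) (hps : p < s) :
    ENNReal.ofReal (2 * chainRatio s p) ^ sobolevExponent s p = 2 ^ p := by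
  have hs : s ≠ 0 := (hp.trans hps).ne'
  have hsp : s - p ≠ 0 := (sub_pos.2 hps).ne'
  rw [two_mul_chainRatio, ← ENNReal.ofReal_rpow_of_pos two_pos, ← ENNReal.rpow_mul,
    ENNReal.ofReal_ofNat, sobolevExponent]
  congr 1
  field_simp

lemma chainMass_pos (hp : 0 < p) (hps : p < s) (hb : 0 < b) : 0 < chainMass s p b := by
  have := sub_pos.2 (chainRatio_lt_one hp hps)
  unfold chainMass
  positivity

lemma sobolevPoincareConst_pos (hp : 0 < p) (hps : p < s) (hb : 0 < b) :
    0 < sobolevPoincareConst s p b := by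
  have := sub_pos.2 (one_lt_two_mul_chainRatio hp hps)
  have := chainMass_pos hp hps hb
  unfold sobolevPoincareConst
  positivity

lemma ofReal_sobolevPoincareConst_mul (hp : 0 < p) (hps : p < s) (hb : 0 < b) (r : ℝ) (J : ℝ≥0∞) :
    ENNReal.ofReal (6 / (2 * chainRatio s p - 1) * r) *
        (ENNReal.ofReal (chainMass s p b ^ (-(1 / p))) * J) *
          (1 + 2 ^ p) ^ (1 / sobolevExponent s p) =
      ENNReal.ofReal (sobolevPoincareConst s p b * r) * J := by
  have hmass := chainMass_pos hp hps hb
  have hsum : ENNReal.ofReal ((1 + 2 ^ p) ^ (1 / sobolevExponent s p)) =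
      (1 + 2 ^ p) ^ (1 / sobolevExponent s p) := by
    rw [← ENNReal.ofReal_rpow_of_pos (by positivity),
      ENNReal.ofReal_add zero_le_one (by positivity), ENNReal.ofReal_one,
      ← ENNReal.ofReal_rpow_of_pos two_pos, ENNReal.ofReal_ofNat]
  have hconst : ENNReal.ofReal (sobolevPoincareConst s p b * r) =
      ENNReal.ofReal (6 / (2 * chainRatio s p - 1) * r) * (1 + 2 ^ p) ^ (1 / sobolevExponent s p) *
        ENNReal.ofReal (chainMass s p b ^ (-(1 / p))) := by
    rw [← hsum, ← ENNReal.ofReal_mul' (by positivity), ← ENNReal.ofReal_mul' (by positivity),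
      sobolevPoincareConst]
    congr 1
    ring
  rw [hconst]
  ring

lemma ofReal_chainMass_mul_rpow (hp : 0 < p) (hps : p < s) (hb : 0 < b) (J : ℝ≥0∞) :
    ENNReal.ofReal (chainMass s p b) *
      (ENNReal.ofReal (chainMass s p b ^ (-(1 / p))) * J) ^ p = J ^ p := by
  have hmass := chainMass_pos hp hps hb
  rw [ENNReal.mul_rpow_of_nonneg _ _ hp.le, ← mul_assoc,
    ENNReal.ofReal_rpow_of_pos (by positivity), ← Real.rpow_mul hmass.le, neg_mul,
    one_div_mul_cancel hp.ne', Real.rpow_neg_one, ← ENNReal.ofReal_mul hmass.le,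
    mul_inv_cancel₀ hmass.ne', ENNReal.ofReal_one, one_mul]

end Exponents

section MassBound

/-- The lower mass bound of dimension `s` relative to the ball `B(x₀, R)`: a ball of radius `ρ`
fitting inside it carries at least the fraction `b (ρ / R) ^ s` of its mass, which is positive and
finite. The ball fits in the sense of `dist x x₀ + ρ ≤ R`, since a mere inclusion of balls does not
bound `ρ`. -/
structure LowerMassBoundOn {X : Type*} [PseudoMetricSpace X] [MeasurableSpace X] (μ : Measure X)
    (s b : ℝ) (x₀ : X) (R : ℝ) : Prop where
  const_pos : 0 < b
  measure_ne_zero : μ (ball x₀ R) ≠ 0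
  measure_ne_top : μ (ball x₀ R) ≠ ∞
  le_measure_ball : ∀ (x : X) (ρ : ℝ), 0 < ρ → dist x x₀ + ρ ≤ R →
    ENNReal.ofReal (b * (ρ / R) ^ s) * μ (ball x₀ R) ≤ μ (ball x ρ)

variable {X : Type*} [PseudoMetricSpace X] [MeasurableSpace X] {μ : Measure X}
  {s p b : ℝ} {x₀ x : X} {R r ρ : ℝ} {f : X → ℝ≥0∞}

namespace LowerMassBoundOn

lemma measure_ball_ne_zero (h : LowerMassBoundOn μ s b x₀ R) (hρ : 0 < ρ)
    (hx : dist x x₀ + ρ ≤ R) : μ (ball x ρ) ≠ 0 := by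
  have hb := h.const_pos
  have hR : 0 < R := by linarith [dist_nonneg (x := x) (y := x₀)]
  have hfrac : ENNReal.ofReal (b * (ρ / R) ^ s) ≠ 0 := (ENNReal.ofReal_pos.2 (by positivity)).ne'
  exact ((pos_iff_ne_zero.2 (mul_ne_zero hfrac h.measure_ne_zero)).trans_le
    (h.le_measure_ball x ρ hρ hx)).ne'

lemma measure_ball_ne_top (h : LowerMassBoundOn μ s b x₀ R) (hx : dist x x₀ + ρ ≤ R) :
    μ (ball x ρ) ≠ ∞ :=
  ne_top_of_le_ne_top h.measure_ne_top (measure_mono (ball_subset_ball' (by linarith)))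

lemma mul_setLAverage_le (h : LowerMassBoundOn μ s b x₀ R) (hρ : 0 < ρ)
    (hx : dist x x₀ + ρ ≤ R) :
    ENNReal.ofReal (b * (ρ / R) ^ s) * ⨍⁻ y in ball x ρ, f y ∂μ ≤ ⨍⁻ y in ball x₀ R, f y ∂μ :=
  mul_setLAverage_le_setLAverage_of_subset (ball_subset_ball' (by linarith))
    h.measure_ne_zero h.measure_ne_top (h.le_measure_ball x ρ hρ hx)

lemma setLAverage_chain_ball_le (h : LowerMassBoundOn μ s b x₀ (2 * r)) (hp : 0 < p) (hps : p < s)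
    (hr : 0 < r) {S : ℝ≥0∞}
    (hS : ⨍⁻ y in ball x₀ (2 * r), f y ∂μ ≤ ENNReal.ofReal (chainMass s p b) * S)
    (k : ℕ) (hx : dist x x₀ + r * (1 - chainRatio s p) * chainRatio s p ^ k ≤ 2 * r) :
    ⨍⁻ y in ball x (r * (1 - chainRatio s p) * chainRatio s p ^ k), f y ∂μ ≤ (2 ^ k) ^ p * S := by
  have hq₁ : 0 < 1 - chainRatio s p := sub_pos.2 (chainRatio_lt_one hp hps)
  have hq₀ : 0 < chainRatio s p := by linarith [one_lt_two_mul_chainRatio hp hps]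
  have hmass := chainMass_pos hp hps h.const_pos
  have hfrac : b * (r * (1 - chainRatio s p) * chainRatio s p ^ k / (2 * r)) ^ s =
      chainMass s p b * ((2 ^ k) ^ p)⁻¹ := by
    have : r * (1 - chainRatio s p) * chainRatio s p ^ k / (2 * r) =
      (1 - chainRatio s p) / 2 * chainRatio s p ^ k := by field_simp
    rw [this, Real.mul_rpow (by positivity) (by positivity), ← Real.rpow_pow_comm hq₀.le,
      chainRatio_rpow (hp.trans hps).ne', Real.rpow_neg two_pos.le, inv_pow,
      Real.rpow_pow_comm two_pos.le, chainMass]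
    ring
  have hlevel : ENNReal.ofReal (((2 ^ k) ^ p)⁻¹) = ((2 ^ k) ^ p)⁻¹ := by
    rw [ENNReal.ofReal_inv_of_pos (by positivity), ← ENNReal.ofReal_rpow_of_pos (by positivity),
      ENNReal.ofReal_pow two_pos.le, ENNReal.ofReal_ofNat]
  have hle := (h.mul_setLAverage_le (by positivity) hx).trans hS
  rw [hfrac, ENNReal.ofReal_mul hmass.le, mul_assoc, hlevel,
    ENNReal.mul_le_mul_iff_right (by simpa using hmass) ENNReal.ofReal_ne_top,
    ← ENNReal.div_eq_inv_mul] at hle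
  exact (ENNReal.div_le_iff' (by positivity) (by finiteness)).1 hle

lemma setLAverage_half_ball_le (h : LowerMassBoundOn μ s b x₀ (2 * r)) (hp : 0 < p) (hps : p < s)
    (hr : 0 < r) {S : ℝ≥0∞}
    (hS : ⨍⁻ y in ball x₀ (2 * r), f y ∂μ ≤ ENNReal.ofReal (chainMass s p b) * S) :
    ⨍⁻ y in ball x₀ r, f y ∂μ ≤ S := by
  have hq₁ : 0 < 1 - chainRatio s p := sub_pos.2 (chainRatio_lt_one hp hps)
  have hq₀ : 0 < chainRatio s p := by linarith [one_lt_two_mul_chainRatio hp hps]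
  have hmass := chainMass_pos hp hps h.const_pos
  have hfrac : chainMass s p b ≤ b * (r / (2 * r)) ^ s := by
    have : r / (2 * r) = 1 / 2 := by field_simp
    rw [chainMass, this]
    have hs := hp.trans hps
    have hb := h.const_pos
    gcongr
    linarith
  rw [← ENNReal.mul_le_mul_iff_right (ENNReal.ofReal_pos.2 hmass).ne' ENNReal.ofReal_ne_top]
  calc ENNReal.ofReal (chainMass s p b) * ⨍⁻ y in ball x₀ r, f y ∂μ
      ≤ ENNReal.ofReal (b * (r / (2 * r)) ^ s) * ⨍⁻ y in ball x₀ r, f y ∂μ := by gcongr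
    _ ≤ ⨍⁻ y in ball x₀ (2 * r), f y ∂μ :=
        h.mul_setLAverage_le hr (by rw [dist_self]; linarith)
    _ ≤ _ := hS

end LowerMassBoundOn

lemma lowerMassBoundOn_addHaar {E : Type*} [NormedAddCommGroup E] [NormedSpace ℝ E]
    [MeasurableSpace E] [BorelSpace E] [FiniteDimensional ℝ E] (ν : Measure E) [ν.IsAddHaarMeasure]
    (z : E) {R : ℝ} (hR : 0 < R) : LowerMassBoundOn ν (Module.finrank ℝ E) 1 z R where
  const_pos := one_pos
  measure_ne_zero := (measure_ball_pos ν z hR).ne'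
  measure_ne_top := measure_ball_lt_top.ne
  le_measure_ball x ρ hρ _ := by
    rw [Measure.addHaar_ball_of_pos ν z hR, Measure.addHaar_ball_of_pos ν x hρ, ← mul_assoc,
      ← ENNReal.ofReal_mul (by positivity), one_mul, Real.rpow_natCast, ← mul_pow,
      div_mul_cancel₀ _ hR.ne']

end MassBound

section SobolevPoincare

/-- The Hajlasz inequality for `u` on `U`, for maps into an arbitrary (extended) metric space and
gradients with values in `[0, ∞]`. -/
def HajlaszInequalityOn {X Y : Type*} [PseudoMetricSpace X] [MeasurableSpace X]
    [PseudoEMetricSpace Y] (μ : Measure X) (u : X → Y) (g : X → ℝ≥0∞) (U : Set X) : Prop :=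
  ∃ N : Set X, μ N = 0 ∧ ∀ x ∈ U \ N, ∀ y ∈ U \ N, edist (u x) (u y) ≤ edist x y * (g x + g y)

lemma IsHajlaszGradientOn.hajlaszInequalityOn {n : ℕ} {u g : EuclideanSpace ℝ (Fin n) → ℝ}
    {U : Set (EuclideanSpace ℝ (Fin n))} (h : IsHajlaszGradientOn n u g U) :
    HajlaszInequalityOn volume u (fun x => ENNReal.ofReal (g x)) U := by
  obtain ⟨-, hg₀, N, hN, hug⟩ := h
  refine ⟨N, hN, fun x hx y hy => ?_⟩
  rw [edist_dist, edist_dist, ← ENNReal.ofReal_add (hg₀ x) (hg₀ y),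
    ← ENNReal.ofReal_mul dist_nonneg, Real.dist_eq, dist_eq_norm]
  exact ENNReal.ofReal_le_ofReal (hug x hx y hy)

variable {X Y : Type*} [PseudoMetricSpace X] [MeasurableSpace X]
  [PseudoEMetricSpace Y] {μ : Measure X} {s p b : ℝ} {x₀ : X} {r : ℝ} {u : X → Y} {g : X → ℝ≥0∞}
  {T : ℝ≥0∞}

lemma LowerMassBoundOn.exists_mem_chain_ball_le {N : Set X}
    (h : LowerMassBoundOn μ s b x₀ (2 * r)) (hp : 0 < p) (hps : p < s) (hr : 0 < r)
    (hg : AEMeasurable g (μ.restrict (ball x₀ (2 * r)))) (hN : μ N = 0)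
    (hT : ⨍⁻ y in ball x₀ (2 * r), g y ^ p ∂μ ≤ ENNReal.ofReal (chainMass s p b) * T ^ p)
    (k : ℕ) (x : X) (hx : dist x x₀ + r * (1 - chainRatio s p) * chainRatio s p ^ k ≤ 2 * r) :
    ∃ y ∈ ball x (r * (1 - chainRatio s p) * chainRatio s p ^ k),
      y ∈ ball x₀ (2 * r) \ N ∧ g y ≤ 2 ^ k * T := by
  have hq₁ : 0 < 1 - chainRatio s p := sub_pos.2 (chainRatio_lt_one hp hps)
  have hq₀ : 0 < chainRatio s p := by linarith [one_lt_two_mul_chainRatio hp hps]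
  have hsub : ball x (r * (1 - chainRatio s p) * chainRatio s p ^ k) ⊆ ball x₀ (2 * r) :=
    ball_subset_ball' (by linarith)
  obtain ⟨y, hy, hyN, hgy⟩ := exists_mem_notMem_null_le_setLAverage
    (h.measure_ball_ne_zero (by positivity) hx) (h.measure_ball_ne_top hx)
    ((hg.mono_set hsub).pow_const p) hN
  refine ⟨y, hy, ⟨hsub hy, hyN⟩, (ENNReal.rpow_le_rpow_iff hp).1 ?_⟩
  rw [ENNReal.mul_rpow_of_nonneg _ _ hp.le]
  exact hgy.trans (h.setLAverage_chain_ball_le hp hps hr hT k hx)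

variable [OpensMeasurableSpace X]

lemma HajlaszInequalityOn.exists_ae_edist_rpow_le
    (hug : HajlaszInequalityOn μ u g (ball x₀ (2 * r))) (h : LowerMassBoundOn μ s b x₀ (2 * r))
    (hp : 0 < p) (hps : p < s) (hr : 0 < r) (hg : AEMeasurable g (μ.restrict (ball x₀ (2 * r))))
    (hT₀ : T ≠ 0) (hT_top : T ≠ ∞)
    (hT : ⨍⁻ y in ball x₀ (2 * r), g y ^ p ∂μ ≤ ENNReal.ofReal (chainMass s p b) * T ^ p) :
    ∃ c : Y, ∀ᵐ y ∂μ.restrict (ball x₀ r), edist (u y) c ^ sobolevExponent s p ≤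
      (ENNReal.ofReal (6 / (2 * chainRatio s p - 1) * r) * T) ^ sobolevExponent s p *
        (1 + (2 * (g y / T)) ^ p) := by
  obtain ⟨N, hN, hug⟩ := hug
  have hq := chainRatio_lt_one hp hps
  have hq₂ := one_lt_two_mul_chainRatio hp hps
  have hq₀ : 0 < chainRatio s p := by linarith
  have hK : 0 < 6 / (2 * chainRatio s p - 1) * r := mul_pos (div_pos (by simp) (by linarith)) hr
  obtain ⟨c, hc⟩ := exists_forall_edist_le_of_chain hr hq hq₂ hug
    (h.exists_mem_chain_ball_le hp hps hr hg hN hT)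
  refine ⟨c, ?_⟩
  filter_upwards [ae_restrict_of_ae (measure_eq_zero_iff_ae_notMem.1 hN),
    ae_restrict_mem measurableSet_ball] with y hyN hy
  refine rpow_le_of_forall_le_two_pow hp (sobolevExponent_pos hp hps)
    (mul_ne_zero (ENNReal.ofReal_pos.2 hK).ne' hT₀) (ofReal_two_mul_chainRatio_rpow hp hps)
    fun k hk => ?_
  have hy₂ : y ∈ ball x₀ (2 * r) := ball_subset_ball (by linarith) hy
  have hyk : dist y x₀ < r * (1 + chainRatio s p ^ k) :=
    (mem_ball.1 hy).trans (lt_mul_of_one_lt_right hr (lt_add_of_pos_right 1 (by positivity)))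
  calc edist (u y) c
      ≤ ENNReal.ofReal (6 / (2 * chainRatio s p - 1) * r * (2 * chainRatio s p) ^ k) * T :=
        hc k y ⟨hy₂, hyN⟩ hyk ((ENNReal.div_le_iff hT₀ hT_top).1 hk)
    _ = _ := by
        rw [ENNReal.ofReal_mul hK.le, ENNReal.ofReal_pow (by positivity)]
        ring

lemma HajlaszInequalityOn.iInf_setLAverage_edist_le
    (hug : HajlaszInequalityOn μ u g (ball x₀ (2 * r))) (h : LowerMassBoundOn μ s b x₀ (2 * r))
    (hp : 0 < p) (hps : p < s) (hr : 0 < r) (hg : AEMeasurable g (μ.restrict (ball x₀ (2 * r))))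
    (hT₀ : T ≠ 0) (hT_top : T ≠ ∞)
    (hT : ⨍⁻ y in ball x₀ (2 * r), g y ^ p ∂μ ≤ ENNReal.ofReal (chainMass s p b) * T ^ p) :
    ⨅ c : Y, (⨍⁻ y in ball x₀ r, edist (u y) c ^ sobolevExponent s p ∂μ) ^
        (1 / sobolevExponent s p) ≤
      ENNReal.ofReal (6 / (2 * chainRatio s p - 1) * r) * T *
        (1 + 2 ^ p) ^ (1 / sobolevExponent s p) := by
  obtain ⟨c, hc⟩ := hug.exists_ae_edist_rpow_le h hp hps hr hg hT₀ hT_top hT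
  refine (iInf_le _ c).trans ?_
  set K := ENNReal.ofReal (6 / (2 * chainRatio s p - 1) * r) * T
  set m := sobolevExponent s p
  have hm : 0 < m := sobolevExponent_pos hp hps
  have hKm : K ^ m ≠ ∞ := by finiteness
  have hr₂ : dist x₀ x₀ + r ≤ 2 * r := by rw [dist_self]; linarith
  calc (⨍⁻ y in ball x₀ r, edist (u y) c ^ m ∂μ) ^ (1 / m)
      ≤ (⨍⁻ y in ball x₀ r, K ^ m * (1 + (2 * (g y / T)) ^ p) ∂μ) ^ (1 / m) :=
        ENNReal.rpow_le_rpow (laverage_mono_ae hc) (by positivity)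
    _ = (K ^ m * ⨍⁻ y in ball x₀ r, (1 + (2 * (g y / T)) ^ p) ∂μ) ^ (1 / m) := by
        simp only [laverage]
        rw [lintegral_const_mul' _ _ hKm]
    _ ≤ (K ^ m * (1 + 2 ^ p)) ^ (1 / m) := by
        gcongr
        exact setLAverage_one_add_rpow_le hp (h.measure_ball_ne_zero hr hr₂)
          (h.measure_ball_ne_top hr₂) ENNReal.ofNat_ne_top hT₀ hT_top
          (h.setLAverage_half_ball_le hp hps hr hT)
    _ = K * (1 + 2 ^ p) ^ (1 / m) := by
        rw [ENNReal.mul_rpow_of_nonneg _ _ (by positivity), ← ENNReal.rpow_mul,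
          mul_one_div_cancel hm.ne', ENNReal.rpow_one]

theorem sobolev_poincare_hajlasz_general (hp : 0 < p) (hps : p < s) (hr : 0 < r)
    (h : LowerMassBoundOn μ s b x₀ (2 * r)) (hg : AEMeasurable g (μ.restrict (ball x₀ (2 * r))))
    (hug : HajlaszInequalityOn μ u g (ball x₀ (2 * r))) :
    ⨅ c : Y, (⨍⁻ y in ball x₀ r, edist (u y) c ^ sobolevExponent s p ∂μ) ^
        (1 / sobolevExponent s p) ≤
      ENNReal.ofReal (sobolevPoincareConst s p b * r) *
        (⨍⁻ y in ball x₀ (2 * r), g y ^ p ∂μ) ^ (1 / p) := by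
  have hC : ENNReal.ofReal (sobolevPoincareConst s p b * r) ≠ 0 :=
    (ENNReal.ofReal_pos.2 (mul_pos (sobolevPoincareConst_pos hp hps h.const_pos) hr)).ne'
  rw [← ENNReal.div_le_iff' hC ENNReal.ofReal_ne_top]
  -- The chain needs a positive level `T`, so the average of `g` is approached from above.
  refine le_of_forall_gt_imp_ge_of_dense fun J hJ => ?_
  rcases eq_or_ne J ∞ with rfl | hJ_top
  · exact le_top
  have hmass : 0 < chainMass s p b ^ (-(1 / p)) :=
    Real.rpow_pos_of_pos (chainMass_pos hp hps h.const_pos) _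
  rw [ENNReal.div_le_iff' hC ENNReal.ofReal_ne_top,
    ← ofReal_sobolevPoincareConst_mul hp hps h.const_pos]
  refine hug.iInf_setLAverage_edist_le h hp hps hr hg
    (mul_ne_zero (ENNReal.ofReal_pos.2 hmass).ne' (ne_zero_of_lt hJ))
    (ENNReal.mul_ne_top ENNReal.ofReal_ne_top hJ_top) ?_
  rw [ofReal_chainMass_mul_rpow hp hps h.const_pos]
  have := ENNReal.rpow_le_rpow hJ.le hp.le
  rwa [← ENNReal.rpow_mul, one_div_mul_cancel hp.ne', ENNReal.rpow_one] at this

end SobolevPoincare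

/-- **Proposition 2.4.** Sobolev–Poincaré inequality for Hajlasz gradients on balls:
for `0 < p < n` and `p* = np/(n-p)`,
`inf_c (⨍_B |u - c|^{p*})^{1/p*} ≤ C r (⨍_{2B} g^p)^{1/p}`. -/
theorem sobolev_poincare_hajlasz
    (n : ℕ) (hn : 1 ≤ n) (p : ℝ) (hp0 : 0 < p) (hpn : p < n)
    (pstar : ℝ) (hpstar : pstar = n * p / (n - p)) :
    ∃ C : ℝ, 0 < C ∧
      ∀ (x₀ : EuclideanSpace ℝ (Fin n)) (r : ℝ), 0 < r →
        ∀ u : EuclideanSpace ℝ (Fin n) → ℝ, Measurable u →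
          ∀ g : EuclideanSpace ℝ (Fin n) → ℝ,
            IsHajlaszGradientOn n u g (ball x₀ (2 * r)) →
            (⨅ c : ℝ, ((volume (ball x₀ r))⁻¹ *
                ∫⁻ y in ball x₀ r, ENNReal.ofReal |u y - c| ^ pstar) ^ (1 / pstar)) ≤
              ENNReal.ofReal (C * r) *
                ((volume (ball x₀ (2 * r)))⁻¹ *
                  ∫⁻ y in ball x₀ (2 * r), ENNReal.ofReal (g y) ^ p) ^ (1 / p) := by
  refine ⟨sobolevPoincareConst n p 1, sobolevPoincareConst_pos hp0 hpn one_pos,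
    fun x₀ r hr u _ g hug => ?_⟩
  have hmass : LowerMassBoundOn volume n 1 x₀ (2 * r) := by
    simpa using lowerMassBoundOn_addHaar volume x₀ (mul_pos two_pos hr)
  simpa only [hpstar, sobolevExponent, setLAverage_eq, ENNReal.div_eq_inv_mul, edist_dist,
    Real.dist_eq] using sobolev_poincare_hajlasz_general hp0 hpn hr hmass
      hug.1.ennreal_ofReal.aemeasurable hug.hajlaszInequalityOn
end
end
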